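/- arXiv:1702.04915 — 2 statements merged into one kernel-verified Lean document; each statement's English description precedes it below -/
import Mathlib

section
/- There exists a constant c > 0 such that for every ε > 0, lim_{L→∞} P^+_{unif,L}( sup_{t∈[0,1]} |π̃^L_t − c t e⃗_1| ≤ ε ) = 1, where |·| denotes the Euclidean norm on ℝ². In words: the uniform 2-sided prudent walk, rescaled by its length, concentrates on the straight line segment of direction (1,1). -/
open Filter Set

/-- One admissible step of a nearest-neighbour walk on `ℤ²`. -/
def IsStep (s : ℤ × ℤ) : Prop :=
  s = (1, 0) ∨ s = (-1, 0) ∨ s = (0, 1) ∨ s = (0, -1)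

/-- The set `Ω_L` of prudent paths of length `L`. -/
def prudentSet (L : ℕ) : Set (Fin (L + 1) → ℤ × ℤ) :=
  {π | π 0 = (0, 0) ∧ ∀ i : Fin L,
    IsStep (π i.succ - π i.castSucc) ∧
    ∀ k : ℕ, 1 ≤ k → ∀ j : Fin (L + 1), j ≤ i.castSucc →
      π i.castSucc + (k : ℤ) • (π i.succ - π i.castSucc) ≠ π j}

/-- The uniform probability of a set `A` of paths under `P_{unif,L}`. -/
noncomputable def probUnif (L : ℕ) (A : Set (Fin (L + 1) → ℤ × ℤ)) : ℝ :=
  (Nat.card ↥(A ∩ prudentSet L) : ℝ) / (Nat.card ↥(prudentSet L) : ℝ)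

/-- Coercion `ℤ² → ℝ²`. -/
def toR (p : ℤ × ℤ) : ℝ × ℝ := ((p.1 : ℝ), (p.2 : ℝ))

/-- The rescaled interpolated path `π̃^L : [0,1] → ℝ²`. -/
noncomputable def rescaled (L : ℕ) (π : Fin (L + 1) → ℤ × ℤ) (t : ℝ) : ℝ × ℝ :=
  let n : ℕ := ⌊t * L⌋₊
  let p : ℝ × ℝ := toR (π ⟨min n L, by omega⟩)
  let q : ℝ × ℝ := toR (π ⟨min (n + 1) L, by omega⟩)
  (L : ℝ)⁻¹ • (p + (t * L - (n : ℝ)) • (q - p))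

/-- Euclidean norm on `ℝ²`. -/
noncomputable def enorm2 (v : ℝ × ℝ) : ℝ := Real.sqrt (v.1 ^ 2 + v.2 ^ 2)

/-- The four diagonal directions. -/
def evec : ℕ → ℝ × ℝ
  | 1 => (1, 1)
  | 2 => (-1, 1)
  | 3 => (-1, -1)
  | 4 => (1, -1)
  | _ => (0, 0)

/-- The set `Ω_L^+` of 2-sided prudent paths of length `L` (north-east direction):
prudent paths that never take a step in the direction of the quadrant
`{(x,y) : x ≤ 0 ∧ y ≤ 0}`, whose endpoint is the top-right corner of the smallest
rectangle containing the path, and which start with an east step. -/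
def twoSidedSet (L : ℕ) : Set (Fin (L + 1) → ℤ × ℤ) :=
  {π | π ∈ prudentSet L ∧
    (∀ i : Fin L, ∀ k : ℕ, 1 ≤ k →
      ¬((π i.castSucc + (k : ℤ) • (π i.succ - π i.castSucc)).1 ≤ 0 ∧
        (π i.castSucc + (k : ℤ) • (π i.succ - π i.castSucc)).2 ≤ 0)) ∧
    (∀ i : Fin (L + 1),
      (π i).1 ≤ (π (Fin.last L)).1 ∧ (π i).2 ≤ (π (Fin.last L)).2) ∧
    (∀ h : 0 < L, π ⟨1, by omega⟩ = (1, 0))}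

/-- The uniform probability of a set `A` of paths under `P^+_{unif,L}`. -/
noncomputable def probUnifPlus (L : ℕ) (A : Set (Fin (L + 1) → ℤ × ℤ)) : ℝ :=
  (Nat.card ↥(A ∩ twoSidedSet L) : ℝ) / (Nat.card ↥(twoSidedSet L) : ℝ)

/-! ### The automaton describing two-sided prudent paths -/

/-- Phase of the current visit to a side of the box: `fr` (fresh row/column),
`bk` (moving back to the corner), `aw` (moving away from the corner). -/
inductive Ph where
  | fr | bk | aw

/-- State: `side = true` for the right side, `false` for the top side; `(X, Y)` is the top-right
corner of the box and `d` the distance of the walker to the corner. -/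
structure St where
  side : Bool
  X : ℤ
  Y : ℤ
  d : ℕ
  ph : Ph

namespace St

/-- Position of the walker. -/
def pos (s : St) : ℤ × ℤ :=
  if s.side then (s.X, s.Y - s.d) else (s.X - s.d, s.Y)

/-- Reflection through the diagonal. -/
def flip (s : St) : St := ⟨!s.side, s.Y, s.X, s.d, s.ph⟩

/-- Outward step. -/
def fwd : St → St
  | ⟨true, X, Y, d, _⟩ => ⟨true, X + 1, Y, d, Ph.fr⟩
  | ⟨false, X, Y, d, _⟩ => ⟨false, X, Y + 1, d, Ph.fr⟩

/-- Step in the direction of the corner (or beyond it). -/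
def back : St → St
  | ⟨true, X, Y, 0, _⟩ => ⟨false, X, Y + 1, 0, Ph.fr⟩
  | ⟨false, X, Y, 0, _⟩ => ⟨true, X + 1, Y, 0, Ph.fr⟩
  | ⟨b, X, Y, k + 1, _⟩ => ⟨b, X, Y, k, Ph.bk⟩

/-- Step away from the corner. -/
def away : St → St
  | ⟨b, X, Y, d, _⟩ => ⟨b, X, Y, d + 1, Ph.aw⟩

/-- Successor relation. -/
def Succ (s s' : St) : Prop :=
  match s.ph with
  | Ph.fr => s' = s.fwd ∨ s' = s.back ∨ s' = s.away
  | Ph.bk => s' = s.fwd ∨ s' = s.back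
  | Ph.aw => s' = s.fwd ∨ s' = s.away

end St

/-- Invariant for states on the right side. -/
def InvR (S : Set (ℤ × ℤ)) (X Y : ℤ) (d : ℕ) (ph : Ph) : Prop :=
  (∀ x y, (x, y) ∈ S → x ≤ X ∧ y ≤ Y) ∧
  (∀ y, y ≤ Y → ∃ x, x < X ∧ (x, y) ∈ S) ∧
  (∀ x, x ≤ X → ∃ y, (x, y) ∈ S) ∧
  (X, Y - d) ∈ S ∧
  (match ph with
    | Ph.fr => ∀ y, (X, y) ∈ S → y = Y - d
    | Ph.bk => (∀ y, (X, y) ∈ S → y ≤ Y - d) ∧ (X, Y - d - 1) ∈ S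
    | Ph.aw => 1 ≤ d ∧ (∀ y, (X, y) ∈ S → Y - d ≤ y) ∧ (X, Y - d + 1) ∈ S)

/-- Invariant. -/
def PInv (S : Set (ℤ × ℤ)) (s : St) : Prop :=
  if s.side then InvR S s.X s.Y s.d s.ph
  else InvR (Prod.swap ⁻¹' S) s.Y s.X s.d s.ph

/-- A step between two points whose ray avoids the given set. -/
def OkStep (S : Set (ℤ × ℤ)) (p p' : ℤ × ℤ) : Prop :=
  IsStep (p' - p) ∧ ∀ k : ℕ, 1 ≤ k → p + (k : ℤ) • (p' - p) ∉ S

lemma okStep_swap (S : Set (ℤ × ℤ)) (p p' : ℤ × ℤ) :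
    OkStep (Prod.swap ⁻¹' S) p.swap p'.swap ↔ OkStep S p p' := by
  obtain ⟨a, b⟩ := p
  obtain ⟨a', b'⟩ := p'
  simp only [OkStep, IsStep, Prod.swap_prod_mk, Prod.mk_sub_mk, Prod.smul_mk, Prod.mk_add_mk,
    Set.mem_preimage, Prod.mk.injEq]
  constructor
  · rintro ⟨h1, h2⟩
    exact ⟨by tauto, h2⟩
  · rintro ⟨h1, h2⟩
    exact ⟨by tauto, h2⟩

lemma pos_flip (s : St) : s.flip.pos = s.pos.swap := by
  obtain ⟨b, X, Y, d, ph⟩ := s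
  cases b <;> simp [St.flip, St.pos]

lemma st_flip_flip (s : St) : s.flip.flip = s := by
  obtain ⟨b, X, Y, d, ph⟩ := s
  simp [St.flip]

lemma fwd_flip (s : St) : s.flip.fwd = s.fwd.flip := by
  obtain ⟨b, X, Y, d, ph⟩ := s
  cases b <;> simp [St.flip, St.fwd]

lemma back_flip (s : St) : s.flip.back = s.back.flip := by
  obtain ⟨b, X, Y, d, ph⟩ := s
  cases b <;> cases d <;> simp [St.flip, St.back]

lemma away_flip (s : St) : s.flip.away = s.away.flip := by
  obtain ⟨b, X, Y, d, ph⟩ := s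
  cases b <;> simp [St.flip, St.away]

lemma flip_inj {s t : St} (h : s.flip = t.flip) : s = t := by
  rw [← st_flip_flip s, h, st_flip_flip]

lemma succ_flip (s s' : St) : St.Succ s.flip s'.flip ↔ St.Succ s s' := by
  have e : ∀ {a b : St}, a.flip = b.flip ↔ a = b := fun {a b} => ⟨flip_inj, fun h => by rw [h]⟩
  have hp : s.flip.ph = s.ph := rfl
  unfold St.Succ
  rw [hp]
  cases s.ph <;> simp only [fwd_flip, back_flip, away_flip, e]

lemma inv_flip (S : Set (ℤ × ℤ)) (s : St) : PInv (Prod.swap ⁻¹' S) s.flip ↔ PInv S s := by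
  obtain ⟨b, X, Y, d, ph⟩ := s
  cases b <;> simp [St.flip, PInv, ← Set.preimage_comp]

/-- Right side version of the characterisation of the allowed steps. -/
lemma okStep_iff_R (S : Set (ℤ × ℤ)) (X Y : ℤ) (d : ℕ) (ph : Ph) (p' : ℤ × ℤ)
    (h : PInv S ⟨true, X, Y, d, ph⟩) :
    OkStep S (St.pos ⟨true, X, Y, d, ph⟩) p' ↔
      ∃ s', St.Succ ⟨true, X, Y, d, ph⟩ s' ∧ s'.pos = p' := by
  obtain ⟨x', y'⟩ := p'
  simp only [PInv, if_true] at h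
  obtain ⟨h1, h2, h3, h4, h5⟩ := h
  have posE : (St.fwd ⟨true, X, Y, d, ph⟩).pos = (X + 1, Y - d) := by simp [St.fwd, St.pos]
  have posN : (St.back ⟨true, X, Y, d, ph⟩).pos = (X, Y - d + 1) := by
    cases d with
    | zero => simp [St.back, St.pos]
    | succ k => simp only [St.back, St.pos, if_true]; push_cast; congr 1; ring
  have posS : (St.away ⟨true, X, Y, d, ph⟩).pos = (X, Y - d - 1) := by
    simp only [St.away, St.pos, if_true]; push_cast; congr 1; ring
  have okE : OkStep S (X, Y - d) (X + 1, Y - d) := by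
    refine ⟨by simp [IsStep], fun k hk hm => ?_⟩
    simp only [Prod.mk_sub_mk, Prod.smul_mk, Prod.mk_add_mk, smul_eq_mul] at hm
    have := (h1 _ _ hm).1
    have : (1 : ℤ) ≤ k := by exact_mod_cast hk
    linarith
  have okN : (∀ y, (X, y) ∈ S → y ≤ Y - d) → OkStep S (X, Y - d) (X, Y - d + 1) := by
    intro hc
    refine ⟨by simp [IsStep], fun k hk hm => ?_⟩
    simp only [Prod.mk_sub_mk, Prod.smul_mk, Prod.mk_add_mk, smul_eq_mul, sub_self, mul_zero,
      add_zero] at hm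
    have := hc _ hm
    have : (1 : ℤ) ≤ k := by exact_mod_cast hk
    linarith
  have okS : (∀ y, (X, y) ∈ S → Y - d ≤ y) → OkStep S (X, Y - d) (X, Y - d - 1) := by
    intro hc
    refine ⟨by simp [IsStep], fun k hk hm => ?_⟩
    simp only [Prod.mk_sub_mk, Prod.smul_mk, Prod.mk_add_mk, smul_eq_mul, sub_self, mul_zero,
      add_zero] at hm
    have := hc _ hm
    have : (1 : ℤ) ≤ k := by exact_mod_cast hk
    linarith
  have hpos : St.pos ⟨true, X, Y, d, ph⟩ = (X, Y - d) := by simp [St.pos]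
  rw [hpos]
  constructor
  · rintro ⟨hs, hk⟩
    have key : (x' = X + 1 ∧ y' = Y - d) ∨ (x' = X ∧ y' = Y - d + 1) ∨
        (x' = X ∧ y' = Y - d - 1) := by
      simp only [IsStep, Prod.mk_sub_mk, Prod.mk.injEq] at hs
      rcases hs with hs | hs | hs | hs
      · left; constructor <;> linarith [hs.1, hs.2]
      · exfalso
        obtain ⟨x, hx, hxS⟩ := h2 (Y - d) (by linarith [Int.natCast_nonneg d])
        have := hk (X - x).toNat (by omega)
        apply this
        simp only [Prod.mk_sub_mk, Prod.smul_mk, Prod.mk_add_mk, smul_eq_mul, hs.1, hs.2]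
        have e : ((X - x).toNat : ℤ) = X - x := by omega
        rw [e]
        convert hxS using 2 <;> ring
      · right; left; constructor <;> linarith [hs.1, hs.2]
      · right; right; constructor <;> linarith [hs.1, hs.2]
    rcases key with ⟨rfl, rfl⟩ | ⟨rfl, rfl⟩ | ⟨rfl, rfl⟩
    · refine ⟨_, ?_, posE⟩
      cases ph <;> simp [St.Succ]
    · refine ⟨_, ?_, posN⟩
      cases ph
      · simp [St.Succ]
      · simp [St.Succ]
      · exfalso
        apply hk 1 le_rfl
        simpa using h5.2.2
    · refine ⟨_, ?_, posS⟩
      cases ph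
      · simp [St.Succ]
      · exfalso
        apply hk 1 le_rfl
        have := h5.2
        convert this using 1
        simp [Int.sub_eq_add_neg]
      · simp [St.Succ]
  · rintro ⟨s', hs', hp⟩
    rw [← hp]
    cases ph
    · rcases hs' with rfl | rfl | rfl
      · rw [posE]; exact okE
      · rw [posN]; exact okN fun y hy => (h5 y hy).le
      · rw [posS]; exact okS fun y hy => (h5 y hy).ge
    · rcases hs' with rfl | rfl
      · rw [posE]; exact okE
      · rw [posN]; exact okN h5.1
    · rcases hs' with rfl | rfl
      · rw [posE]; exact okE
      · rw [posS]; exact okS h5.2.1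

lemma okStep_iff (S : Set (ℤ × ℤ)) (s : St) (p' : ℤ × ℤ) (h : PInv S s) :
    OkStep S s.pos p' ↔ ∃ s', St.Succ s s' ∧ s'.pos = p' := by
  obtain ⟨b, X, Y, d, ph⟩ := s
  cases b
  · rw [← okStep_swap, ← pos_flip]
    have h' := (inv_flip S _).2 h
    have := okStep_iff_R (Prod.swap ⁻¹' S) Y X d ph p'.swap h'
    refine this.trans ?_
    constructor
    · rintro ⟨s', h1, h2⟩
      refine ⟨s'.flip, ?_, ?_⟩
      · rw [← succ_flip, st_flip_flip]; exact h1
      · rw [pos_flip, h2]; simp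
    · rintro ⟨s', h1, h2⟩
      refine ⟨s'.flip, ?_, ?_⟩
      · exact (succ_flip _ _).2 h1
      · rw [pos_flip, h2]
  · exact okStep_iff_R S X Y d ph p' h

lemma inv_succ_R (S : Set (ℤ × ℤ)) (X Y : ℤ) (d : ℕ) (ph : Ph) (s' : St)
    (h : PInv S ⟨true, X, Y, d, ph⟩) (hs : St.Succ ⟨true, X, Y, d, ph⟩ s') :
    PInv (insert s'.pos S) s' := by
  simp only [PInv, if_true] at h
  obtain ⟨h1, h2, h3, h4, h5⟩ := h
  have hd : (0 : ℤ) ≤ d := Int.natCast_nonneg d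
  have hE : PInv (insert (St.fwd ⟨true, X, Y, d, ph⟩).pos S) (St.fwd ⟨true, X, Y, d, ph⟩) := by
    simp only [St.fwd, St.pos, PInv, if_true, InvR, Set.mem_insert_iff, Prod.mk.injEq]
    refine ⟨?_, ?_, ?_, ?_, ?_⟩
    · rintro x y (⟨rfl, rfl⟩ | hxy)
      · constructor <;> linarith
      · have := h1 _ _ hxy
        constructor <;> linarith [this.1, this.2]
    · intro y hy
      obtain ⟨x, hx, hxS⟩ := h2 y hy
      exact ⟨x, by linarith, Or.inr hxS⟩
    · intro x hx
      by_cases hx' : x ≤ X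
      · obtain ⟨y, hy⟩ := h3 x hx'
        exact ⟨y, Or.inr hy⟩
      · exact ⟨Y - d, Or.inl ⟨by omega, rfl⟩⟩
    · simp
    · rintro y (h | h)
      · exact h.2
      · have := (h1 _ _ h).1
        linarith
  have hN : (∀ y, (X, y) ∈ S → y ≤ Y - d) →
      PInv (insert (St.back ⟨true, X, Y, d, ph⟩).pos S) (St.back ⟨true, X, Y, d, ph⟩) := by
    intro hc
    cases d with
    | zero =>
      simp only [St.back, St.pos, PInv, InvR, Set.mem_insert_iff, Set.mem_preimage,
        Prod.swap_prod_mk, Prod.mk.injEq, Nat.cast_zero, sub_zero, Bool.false_eq_true, if_false]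
      refine ⟨?_, ?_, ?_, ?_, ?_⟩
      · rintro x y (⟨rfl, rfl⟩ | hxy)
        · simp
        · have := h1 _ _ hxy
          constructor <;> linarith [this.1, this.2]
      · intro x hx
        obtain ⟨y, hy⟩ := h3 x hx
        exact ⟨y, by linarith [(h1 _ _ hy).2], Or.inr hy⟩
      · intro y hy
        by_cases hy' : y ≤ Y
        · obtain ⟨x, _, hx⟩ := h2 y hy'
          exact ⟨x, Or.inr hx⟩
        · exact ⟨X, Or.inl ⟨rfl, by omega⟩⟩
      · simp
      · rintro x (h | h)
        · exact h.1
        · have := (h1 _ _ h).2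
          linarith
    | succ k =>
      push_cast at hc h4 hd
      simp only [St.back, St.pos, PInv, if_true, InvR, Set.mem_insert_iff, Prod.mk.injEq]
      refine ⟨?_, ?_, ?_, ?_, ?_, ?_⟩
      · rintro x y (⟨rfl, rfl⟩ | hxy)
        · constructor <;> linarith
        · exact h1 _ _ hxy
      · intro y hy
        obtain ⟨x, hx, hxS⟩ := h2 y hy
        exact ⟨x, hx, Or.inr hxS⟩
      · intro x hx
        obtain ⟨y, hy⟩ := h3 x hx
        exact ⟨y, Or.inr hy⟩
      · simp
      · rintro y (h | h)
        · exact h.2.le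
        · have := hc _ h
          linarith
      · right
        convert h4 using 2
        ring
  have hS : (∀ y, (X, y) ∈ S → Y - d ≤ y) →
      PInv (insert (St.away ⟨true, X, Y, d, ph⟩).pos S) (St.away ⟨true, X, Y, d, ph⟩) := by
    intro hc
    simp only [St.away, St.pos, PInv, if_true, InvR, Set.mem_insert_iff, Prod.mk.injEq]
    push_cast
    refine ⟨?_, ?_, ?_, ?_, ?_, ?_, ?_⟩
    · rintro x y (⟨rfl, rfl⟩ | hxy)
      · constructor <;> linarith
      · exact h1 _ _ hxy
    · intro y hy
      obtain ⟨x, hx, hxS⟩ := h2 y hy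
      exact ⟨x, hx, Or.inr hxS⟩
    · intro x hx
      obtain ⟨y, hy⟩ := h3 x hx
      exact ⟨y, Or.inr hy⟩
    · simp
    · trivial
    · rintro y (h | h)
      · exact h.2.ge
      · have := hc _ h
        linarith
    · right
      convert h4 using 2
      ring
  cases ph
  · rcases hs with rfl | rfl | rfl
    · exact hE
    · exact hN fun y hy => (h5 y hy).le
    · exact hS fun y hy => (h5 y hy).ge
  · rcases hs with rfl | rfl
    · exact hE
    · exact hN h5.1
  · rcases hs with rfl | rfl
    · exact hE
    · exact hS h5.2.1

lemma inv_succ (S : Set (ℤ × ℤ)) (s s' : St) (h : PInv S s) (hs : St.Succ s s') :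
    PInv (insert s'.pos S) s' := by
  obtain ⟨b, X, Y, d, ph⟩ := s
  cases b
  · have h' := (inv_flip S _).2 h
    have := inv_succ_R (Prod.swap ⁻¹' S) Y X d ph s'.flip h' ((succ_flip _ _).2 hs)
    rw [← inv_flip]
    convert this using 1
    ext ⟨x, y⟩
    rw [pos_flip]
    simp only [Set.mem_preimage, Set.mem_insert_iff, Prod.swap_prod_mk]
    constructor
    · rintro (h | h)
      · left; rw [← h]; rfl
      · exact Or.inr h
    · rintro (h | h)
      · left; rw [← Prod.swap_swap s'.pos, ← h]; rfl
      · exact Or.inr h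
  · exact inv_succ_R S X Y d ph s' h hs

lemma inv_pos_mem (S : Set (ℤ × ℤ)) (s : St) (h : PInv S s) : s.pos ∈ S := by
  obtain ⟨b, X, Y, d, ph⟩ := s
  cases b
  · simp only [PInv, Bool.false_eq_true, if_false] at h
    simpa [St.pos] using h.2.2.2.1
  · simp only [PInv, if_true] at h
    simpa [St.pos] using h.2.2.2.1

lemma inv_corner_R (S : Set (ℤ × ℤ)) (X Y : ℤ) (d : ℕ) (ph : Ph)
    (h : PInv S ⟨true, X, Y, d, ph⟩) :
    (∀ p ∈ S, p.1 ≤ X ∧ p.2 ≤ Y - d) ↔ d = 0 := by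
  simp only [PInv, if_true] at h
  obtain ⟨h1, h2, h3, h4, h5⟩ := h
  constructor
  · intro hp
    obtain ⟨x, _, hx⟩ := h2 Y le_rfl
    have := (hp _ hx).2
    simp only at this
    omega
  · rintro rfl ⟨x, y⟩ hp
    simpa using h1 x y hp

lemma inv_corner (S : Set (ℤ × ℤ)) (s : St) (h : PInv S s) :
    (∀ p ∈ S, p.1 ≤ s.pos.1 ∧ p.2 ≤ s.pos.2) ↔ s.d = 0 := by
  obtain ⟨b, X, Y, d, ph⟩ := s
  cases b
  · have h' := (inv_flip S _).2 h
    rw [← inv_corner_R _ Y X d ph h']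
    simp only [St.pos, Bool.false_eq_true, if_false]
    constructor
    · rintro hp ⟨x, y⟩ hxy
      exact (hp _ hxy).symm
    · rintro hp ⟨x, y⟩ hxy
      exact (hp (y, x) hxy).symm
  · have := inv_corner_R S X Y d ph h
    simpa [St.pos] using this

/-! ### Paths generated by the automaton -/

/-- Prepend the position of `s` to paths. -/
noncomputable def extPaths (n : ℕ) (s : St) (A : Finset (Fin (n + 1) → ℤ × ℤ)) :
    Finset (Fin (n + 2) → ℤ × ℤ) :=
  A.image (fun π => (Fin.cons s.pos π : Fin (n + 2) → ℤ × ℤ))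

/-- Paths of length `n` generated from the state `s` and ending at a corner. -/
noncomputable def PathsC : (n : ℕ) → St → Finset (Fin (n + 1) → ℤ × ℤ)
  | 0, s => if s.d = 0 then {fun _ => s.pos} else ∅
  | n + 1, s =>
    match s.ph with
    | Ph.fr => extPaths n s (PathsC n s.fwd) ∪
        (extPaths n s (PathsC n s.back) ∪ extPaths n s (PathsC n s.away))
    | Ph.bk => extPaths n s (PathsC n s.fwd) ∪ extPaths n s (PathsC n s.back)
    | Ph.aw => extPaths n s (PathsC n s.fwd) ∪ extPaths n s (PathsC n s.away)

lemma mem_PathsC_succ (n : ℕ) (s : St) (π : Fin (n + 2) → ℤ × ℤ) :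
    π ∈ PathsC (n + 1) s ↔
      ∃ s', St.Succ s s' ∧ ∃ π' ∈ PathsC n s', (Fin.cons s.pos π' : Fin (n + 2) → ℤ × ℤ) = π := by
  obtain ⟨b, X, Y, d, ph⟩ := s
  cases ph <;> simp [PathsC, extPaths, St.Succ, or_and_right, exists_or]

lemma PathsC_fr {n : ℕ} {s : St} (h : s.ph = Ph.fr) : PathsC (n + 1) s =
    extPaths n s (PathsC n s.fwd) ∪
      (extPaths n s (PathsC n s.back) ∪ extPaths n s (PathsC n s.away)) := by
  obtain ⟨b, X, Y, d, ph⟩ := s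
  subst h
  rfl

lemma PathsC_bk {n : ℕ} {s : St} (h : s.ph = Ph.bk) : PathsC (n + 1) s =
    extPaths n s (PathsC n s.fwd) ∪ extPaths n s (PathsC n s.back) := by
  obtain ⟨b, X, Y, d, ph⟩ := s
  subst h
  rfl

lemma PathsC_aw {n : ℕ} {s : St} (h : s.ph = Ph.aw) : PathsC (n + 1) s =
    extPaths n s (PathsC n s.fwd) ∪ extPaths n s (PathsC n s.away) := by
  obtain ⟨b, X, Y, d, ph⟩ := s
  subst h
  rfl

/-- All steps of `π` avoid `S` and the past of `π`. -/
def Valid (n : ℕ) (S : Set (ℤ × ℤ)) (π : Fin (n + 1) → ℤ × ℤ) : Prop :=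
  ∀ i : Fin n, IsStep (π i.succ - π i.castSucc) ∧ ∀ k : ℕ, 1 ≤ k →
    (π i.castSucc + (k : ℤ) • (π i.succ - π i.castSucc) ∉ S ∧
      ∀ j : Fin (n + 1), j ≤ i.castSucc →
        π i.castSucc + (k : ℤ) • (π i.succ - π i.castSucc) ≠ π j)

lemma valid_cons (n : ℕ) (S : Set (ℤ × ℤ)) (p : ℤ × ℤ) (π : Fin (n + 1) → ℤ × ℤ) (hp : p ∈ S) :
    Valid (n + 1) S (Fin.cons p π) ↔ OkStep S p (π 0) ∧ Valid n (insert (π 0) S) π := by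
  unfold Valid OkStep
  rw [Fin.forall_fin_succ]
  have e0 : (Fin.cons p π : Fin (n + 2) → ℤ × ℤ) (Fin.castSucc 0) = p := rfl
  have e1 : (Fin.cons p π : Fin (n + 2) → ℤ × ℤ) (Fin.succ 0) = π 0 := rfl
  have e2 : ∀ i : Fin n, (Fin.cons p π : Fin (n + 2) → ℤ × ℤ) (Fin.castSucc i.succ)
      = π i.castSucc := fun i => rfl
  have e3 : ∀ i : Fin n, (Fin.cons p π : Fin (n + 2) → ℤ × ℤ) (Fin.succ i.succ)
      = π i.succ := fun i => rfl
  simp only [e0, e1, e2, e3]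
  constructor
  · rintro ⟨⟨h1, h2⟩, h3⟩
    refine ⟨⟨h1, fun k hk => (h2 k hk).1⟩, fun i => ⟨(h3 i).1, fun k hk => ⟨?_, ?_⟩⟩⟩
    · rw [Set.mem_insert_iff, not_or]
      refine ⟨?_, ((h3 i).2 k hk).1⟩
      have := ((h3 i).2 k hk).2 (Fin.succ 0) (by
        rw [← Fin.succ_castSucc]; exact Fin.succ_le_succ_iff.2 (Fin.zero_le _))
      simpa using this
    · intro j hj
      have := ((h3 i).2 k hk).2 j.succ (by
        rw [← Fin.succ_castSucc]; exact Fin.succ_le_succ_iff.2 hj)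
      simpa using this
  · rintro ⟨⟨h1, h2⟩, h3⟩
    refine ⟨⟨h1, fun k hk => ⟨h2 k hk, ?_⟩⟩, fun i => ⟨(h3 i).1, fun k hk => ⟨?_, ?_⟩⟩⟩
    · intro j hj
      have : j = 0 := by simpa using hj
      subst this
      intro h
      apply h2 k hk
      rw [h]
      exact hp
    · intro h
      exact ((h3 i).2 k hk).1 (Set.mem_insert_of_mem _ h)
    · intro j
      refine Fin.cases ?_ (fun j' => ?_) j
      · intro _ h
        apply ((h3 i).2 k hk).1
        rw [h]
        exact Set.mem_insert_of_mem _ hp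
      · intro hj
        rw [← Fin.succ_castSucc] at hj
        exact ((h3 i).2 k hk).2 j' (Fin.succ_le_succ_iff.1 hj)

lemma mem_PathsC_iff (n : ℕ) : ∀ (S : Set (ℤ × ℤ)) (s : St) (π : Fin (n + 1) → ℤ × ℤ),
    PInv S s → (π ∈ PathsC n s ↔ π 0 = s.pos ∧ Valid n S π ∧
      (∀ p ∈ S, p.1 ≤ (π (Fin.last n)).1 ∧ p.2 ≤ (π (Fin.last n)).2) ∧
      ∀ i, (π i).1 ≤ (π (Fin.last n)).1 ∧ (π i).2 ≤ (π (Fin.last n)).2) := by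
  induction n with
  | zero =>
    intro S s π h
    have hc := inv_corner S s h
    have hlast : Fin.last 0 = 0 := rfl
    simp only [PathsC, hlast]
    constructor
    · intro hm
      split_ifs at hm with hd
      · rw [Finset.mem_singleton] at hm
        subst hm
        exact ⟨rfl, fun i => i.elim0, hc.2 hd, fun i => ⟨le_rfl, le_rfl⟩⟩
      · simp at hm
    · rintro ⟨h0, _, h2, _⟩
      rw [h0] at h2
      rw [if_pos (hc.1 h2), Finset.mem_singleton]
      funext i
      rw [Fin.fin_one_eq_zero i, h0]
  | succ n ih =>
    intro S s π h
    have hpS := inv_pos_mem S s h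
    have hlast : ∀ (p : ℤ × ℤ) (π' : Fin (n + 1) → ℤ × ℤ),
      (Fin.cons p π' : Fin (n + 2) → ℤ × ℤ) (Fin.last (n + 1)) = π' (Fin.last n) :=
      fun p π' => rfl
    rw [mem_PathsC_succ]
    constructor
    · rintro ⟨s', hs, π', hπ', rfl⟩
      rw [ih _ s' π' (inv_succ S s s' h hs)] at hπ'
      obtain ⟨h0, hv, hd, hd'⟩ := hπ'
      refine ⟨rfl, ?_, ?_, ?_⟩
      · rw [valid_cons n S _ _ hpS, h0]
        exact ⟨(okStep_iff S s _ h).2 ⟨s', hs, rfl⟩, hv⟩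
      · intro p hp
        rw [hlast]
        exact hd p (Set.mem_insert_of_mem _ hp)
      · intro i
        rw [hlast]
        refine Fin.cases ?_ (fun i' => ?_) i
        · exact hd _ (Set.mem_insert_of_mem _ hpS)
        · exact hd' i'
    · rintro ⟨h0, hv, hd, hd'⟩
      obtain ⟨p, π', rfl⟩ : ∃ p π', π = (Fin.cons p π' : Fin (n + 2) → ℤ × ℤ) :=
        ⟨π 0, Fin.tail π, (Fin.cons_self_tail π).symm⟩
      have hps : p = s.pos := h0
      subst hps
      rw [valid_cons n S _ _ hpS] at hv
      obtain ⟨s', hs, hpos⟩ := (okStep_iff S s _ h).1 hv.1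
      refine ⟨s', hs, π', ?_, rfl⟩
      rw [ih _ s' π' (inv_succ S s s' h hs)]
      refine ⟨hpos.symm, by rw [hpos]; exact hv.2, ?_, ?_⟩
      · intro p hp
        rcases hp with rfl | hp
        · rw [hpos]
          exact hd' (Fin.succ 0)
        · exact hd p hp
      · intro i
        exact hd' i.succ

/-- The quadrant. -/
def quad : Set (ℤ × ℤ) := {p | p.1 ≤ 0 ∧ p.2 ≤ 0}

/-- The initial state. -/
def st0 : St := ⟨true, 0, 0, 0, Ph.bk⟩

/-- The state after the first step. -/
def st1 : St := ⟨true, 1, 0, 0, Ph.fr⟩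

lemma inv_st0 : PInv quad st0 := by
  simp only [PInv, st0, InvR, quad, if_true]
  refine ⟨fun x y h => h, fun y hy => ⟨-1, by norm_num, by norm_num, hy⟩,
    fun x hx => ⟨0, hx, le_rfl⟩, by simp, fun y hy => by simpa using hy.2, by simp⟩

lemma mem_twoSided_iff (L : ℕ) (π : Fin (L + 1) → ℤ × ℤ) :
    π ∈ twoSidedSet L ↔ π ∈ PathsC L st0 ∧ (∀ h : 0 < L, π ⟨1, by omega⟩ = (1, 0)) := by
  rw [mem_PathsC_iff L quad st0 π inv_st0]
  have hp : st0.pos = (0, 0) := by simp [st0, St.pos]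
  rw [hp]
  simp only [twoSidedSet, prudentSet, Set.mem_ofPred_eq]
  constructor
  · rintro ⟨⟨h0, h1⟩, h2, h3, h4⟩
    refine ⟨⟨h0, fun i => ⟨(h1 i).1, fun k hk => ⟨h2 i k hk, (h1 i).2 k hk⟩⟩, ?_, h3⟩, h4⟩
    intro p hp
    have := h3 0
    rw [h0] at this
    exact ⟨hp.1.trans this.1, hp.2.trans this.2⟩
  · rintro ⟨⟨h0, h1, h2, h3⟩, h4⟩
    exact ⟨⟨h0, fun i => ⟨(h1 i).1, fun k hk => ((h1 i).2 k hk).2⟩⟩,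
      fun i k hk => ((h1 i).2 k hk).1, h3, h4⟩

/-! ### Transfer operator -/

/-- Transfer operator of the automaton. -/
noncomputable def opP (F : St → ℝ) (s : St) : ℝ :=
  match s.ph with
  | Ph.fr => F s.fwd + F s.back + F s.away
  | Ph.bk => F s.fwd + F s.back
  | Ph.aw => F s.fwd + F s.away

lemma opP_fr {F : St → ℝ} {s : St} (h : s.ph = Ph.fr) :
    opP F s = F s.fwd + F s.back + F s.away := by
  unfold opP; rw [h]

lemma opP_bk {F : St → ℝ} {s : St} (h : s.ph = Ph.bk) :
    opP F s = F s.fwd + F s.back := by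
  unfold opP; rw [h]

lemma opP_aw {F : St → ℝ} {s : St} (h : s.ph = Ph.aw) :
    opP F s = F s.fwd + F s.away := by
  unfold opP; rw [h]

/-- Indicator of the corners. -/
noncomputable def cor (s : St) : ℝ := if s.d = 0 then 1 else 0

lemma opP_mono {F G : St → ℝ} (h : ∀ s, F s ≤ G s) (s : St) : opP F s ≤ opP G s := by
  unfold opP
  cases s.ph
  · exact add_le_add (add_le_add (h _) (h _)) (h _)
  · exact add_le_add (h _) (h _)
  · exact add_le_add (h _) (h _)

lemma opP_iter_mono {F G : St → ℝ} (h : ∀ s, F s ≤ G s) (n : ℕ) (s : St) :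
    opP^[n] F s ≤ opP^[n] G s := by
  induction n generalizing s with
  | zero => exact h s
  | succ n ih =>
    rw [Function.iterate_succ_apply', Function.iterate_succ_apply']
    exact opP_mono ih s

lemma PathsC_zero_pos (n : ℕ) (s : St) (π : Fin (n + 1) → ℤ × ℤ) (h : π ∈ PathsC n s) :
    π 0 = s.pos := by
  cases n with
  | zero =>
    unfold PathsC at h
    split_ifs at h
    · rw [Finset.mem_singleton] at h
      rw [h]
    · simp at h
  | succ n =>
    rw [mem_PathsC_succ] at h
    obtain ⟨s', _, π', _, rfl⟩ := h
    rfl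

open Classical in
lemma card_filter_le (n i : ℕ) (hi : i ≤ n) (s : St) (B : Set (ℤ × ℤ)) :
    (((PathsC n s).filter (fun π => π ⟨i, by omega⟩ ∈ B)).card : ℝ) ≤
      opP^[i] (fun t => (if t.pos ∈ B then 1 else 0) * opP^[n - i] cor t) s := by
  induction n generalizing i s B with
  | zero =>
    obtain rfl : i = 0 := by omega
    simp only [PathsC, Function.iterate_zero, id_eq]
    unfold cor
    by_cases h1 : s.d = 0 <;> by_cases h2 : s.pos ∈ B <;>
      simp [h1, h2, Finset.filter_singleton]
  | succ n ih =>
    have hext : ∀ (s s' : St) (T : Set (Fin (n + 2) → ℤ × ℤ)) (T' : Set (Fin (n + 1) → ℤ × ℤ)),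
        (∀ π, (Fin.cons s.pos π : Fin (n + 2) → ℤ × ℤ) ∈ T → π ∈ T') →
        (((extPaths n s (PathsC n s')).filter (· ∈ T)).card : ℝ) ≤
          ((PathsC n s').filter (· ∈ T')).card := by
      intro s s' T T' hT
      norm_cast
      unfold extPaths
      rw [Finset.filter_image]
      refine Finset.card_image_le.trans (Finset.card_le_card ?_)
      intro π hπ
      rw [Finset.mem_filter] at hπ ⊢
      exact ⟨hπ.1, hT _ hπ.2⟩
    have hmain : ∀ (T : Set (Fin (n + 2) → ℤ × ℤ)) (T' : Set (Fin (n + 1) → ℤ × ℤ)),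
        (∀ π, (Fin.cons s.pos π : Fin (n + 2) → ℤ × ℤ) ∈ T → π ∈ T') →
        (((PathsC (n + 1) s).filter (· ∈ T)).card : ℝ) ≤
          opP (fun t => (((PathsC n t).filter (· ∈ T')).card : ℝ)) s := by
      intro T T' hT
      have hu : ∀ A B : Finset (Fin (n + 2) → ℤ × ℤ),
        (((A ∪ B).filter (· ∈ T)).card : ℝ) ≤ (A.filter (· ∈ T)).card + (B.filter (· ∈ T)).card := by
        intro A B
        rw [Finset.filter_union]
        exact_mod_cast Finset.card_union_le _ _
      rcases hph : s.ph with _ | _ | _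
      · rw [PathsC_fr hph, opP_fr hph]
        refine (hu _ _).trans ?_
        rw [add_assoc]
        refine add_le_add (hext _ _ _ _ hT) ((hu _ _).trans ?_)
        exact add_le_add (hext _ _ _ _ hT) (hext _ _ _ _ hT)
      · rw [PathsC_bk hph, opP_bk hph]
        exact (hu _ _).trans (add_le_add (hext _ _ _ _ hT) (hext _ _ _ _ hT))
      · rw [PathsC_aw hph, opP_aw hph]
        exact (hu _ _).trans (add_le_add (hext _ _ _ _ hT) (hext _ _ _ _ hT))
    cases i with
    | succ i =>
      refine (hmain {π | π ⟨i + 1, by omega⟩ ∈ B} {π | π ⟨i, by omega⟩ ∈ B}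
        (fun π hπ => hπ)).trans ?_
      rw [Function.iterate_succ_apply']
      refine opP_mono (fun t => ?_) s
      have := ih i (by omega) t B
      simpa using this
    | zero =>
      simp only [Function.iterate_zero, id_eq, Nat.sub_zero]
      by_cases hB : s.pos ∈ B
      · rw [if_pos hB, one_mul]
        refine (hmain {π | π ⟨0, by omega⟩ ∈ B} Set.univ (fun π hπ => trivial)).trans ?_
        rw [Function.iterate_succ_apply']
        refine opP_mono (fun t => ?_) s
        have := ih 0 (by omega) t Set.univ
        simpa using this
      · rw [if_neg hB, zero_mul]
        refine le_of_eq ?_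
        norm_cast
        rw [Finset.card_eq_zero, Finset.filter_eq_empty_iff]
        intro π hπ h
        exact hB (by rw [← PathsC_zero_pos _ _ _ hπ]; exact h)

lemma pos_fwd_ne_back (s : St) : s.fwd.pos ≠ s.back.pos := by
  obtain ⟨b, X, Y, d, ph⟩ := s
  cases b <;> cases d <;> simp [St.fwd, St.back, St.pos]

lemma pos_fwd_ne_away (s : St) : s.fwd.pos ≠ s.away.pos := by
  obtain ⟨b, X, Y, d, ph⟩ := s
  cases b <;> simp [St.fwd, St.away, St.pos]

lemma pos_back_ne_away (s : St) : s.back.pos ≠ s.away.pos := by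
  obtain ⟨b, X, Y, d, ph⟩ := s
  cases b <;> cases d <;> simp [St.back, St.away, St.pos] <;> omega

lemma card_PathsC (n : ℕ) (s : St) : ((PathsC n s).card : ℝ) = opP^[n] cor s := by
  induction n generalizing s with
  | zero =>
    simp only [PathsC, cor, Function.iterate_zero, id_eq]
    split_ifs <;> simp
  | succ n ih =>
    have hext : ∀ (s s' : St), (((extPaths n s (PathsC n s'))).card : ℝ) = opP^[n] cor s' := by
      intro s s'
      rw [← ih]
      norm_cast
      exact Finset.card_image_of_injective _
        (Fin.cons_right_injective (α := fun _ => ℤ × ℤ) s.pos)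
    have hdis : ∀ s' s'' : St, s'.pos ≠ s''.pos →
        Disjoint (extPaths n s (PathsC n s')) (extPaths n s (PathsC n s'')) := by
      intro s' s'' hne
      rw [Finset.disjoint_left]
      intro π h1 h2
      unfold extPaths at h1 h2
      rw [Finset.mem_image] at h1 h2
      obtain ⟨π1, h1, rfl⟩ := h1
      obtain ⟨π2, h2, he⟩ := h2
      have : π2 = π1 := Fin.cons_right_injective (α := fun _ => ℤ × ℤ) _ he
      subst this
      exact hne ((PathsC_zero_pos _ _ _ h1).symm.trans (PathsC_zero_pos _ _ _ h2))
    rw [Function.iterate_succ_apply']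
    rcases hph : s.ph with _ | _ | _
    · rw [PathsC_fr hph, opP_fr hph]
      rw [Finset.card_union_of_disjoint, Finset.card_union_of_disjoint]
      · push_cast
        rw [hext, hext, hext]
        ring
      · exact hdis _ _ (pos_back_ne_away s)
      · rw [Finset.disjoint_union_right]
        exact ⟨hdis _ _ (pos_fwd_ne_back s), hdis _ _ (pos_fwd_ne_away s)⟩
    · rw [PathsC_bk hph, opP_bk hph]
      rw [Finset.card_union_of_disjoint (hdis _ _ (pos_fwd_ne_back s))]
      push_cast
      rw [hext, hext]
    · rw [PathsC_aw hph, opP_aw hph]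
      rw [Finset.card_union_of_disjoint (hdis _ _ (pos_fwd_ne_away s))]
      push_cast
      rw [hext, hext]

lemma twoSided_finite (L : ℕ) : (twoSidedSet L).Finite :=
  (PathsC L st0).finite_toSet.subset fun π h => ((mem_twoSided_iff L π).1 h).1

/-- Lower bound on the number of two-sided paths. -/
lemma card_twoSided_ge (n : ℕ) : opP^[n] cor st1 ≤ (Nat.card ↥(twoSidedSet (n + 1)) : ℝ) := by
  rw [← card_PathsC, Nat.card_coe_set_eq]
  norm_cast
  have hsub : (↑(extPaths n st0 (PathsC n st1)) : Set (Fin (n + 2) → ℤ × ℤ)) ⊆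
      twoSidedSet (n + 1) := by
    intro π hπ
    rw [Finset.mem_coe] at hπ
    rw [mem_twoSided_iff]
    have hs : st0.fwd = st1 := by simp [st0, st1, St.fwd]
    constructor
    · unfold PathsC
      simp only [st0]
      rw [← hs] at hπ
      exact Finset.mem_union_left _ hπ
    · intro _
      unfold extPaths at hπ
      rw [Finset.mem_image] at hπ
      obtain ⟨π', h', rfl⟩ := hπ
      have := PathsC_zero_pos _ _ _ h'
      have e : st1.pos = (1, 0) := by simp [st1, St.pos]
      rw [← e, ← this]
      rfl
  have := Set.ncard_le_ncard hsub (twoSided_finite _)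
  rw [Set.ncard_coe_finset] at this
  refine le_trans (le_of_eq ?_) this
  exact (Finset.card_image_of_injective _
    (Fin.cons_right_injective (α := fun _ => ℤ × ℤ) st0.pos)).symm

open Classical in
/-- Upper bound on the number of two-sided paths with an event at time `i`. -/
lemma card_bad_le (L i : ℕ) (hi : i ≤ L) (B : Set (ℤ × ℤ)) :
    (Nat.card ↥({π | π ⟨i, by omega⟩ ∈ B} ∩ twoSidedSet L) : ℝ) ≤
      opP^[i] (fun t => (if t.pos ∈ B then 1 else 0) * opP^[L - i] cor t) st0 := by
  refine le_trans ?_ (card_filter_le L i hi st0 B)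
  rw [Nat.card_coe_set_eq]
  norm_cast
  rw [← Set.ncard_coe_finset]
  refine Set.ncard_le_ncard ?_ (Finset.finite_toSet _)
  rintro π ⟨h1, h2⟩
  rw [Finset.mem_coe, Finset.mem_filter]
  exact ⟨((mem_twoSided_iff L π).1 h2).1, h1⟩

/-! ### The Markov chain obtained by the Doob transform -/

/-- The growth constant: `z` is the root of `2z³-2z²-2z+1` close to `0.403`. -/
def IsRootZ (z : ℝ) : Prop := 2 * z ^ 3 - 2 * z ^ 2 - 2 * z + 1 = 0 ∧ 2 / 5 < z ∧ z < 41 / 100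

lemma exists_rootZ : ∃ z, IsRootZ z := by
  have hc : ContinuousOn (fun z : ℝ => 2 * z ^ 3 - 2 * z ^ 2 - 2 * z + 1)
      (Set.Icc (2 / 5) (41 / 100)) := by fun_prop
  have := intermediate_value_Ioo' (by norm_num) hc
  obtain ⟨z, hz, h⟩ := this (show (0 : ℝ) ∈ _ by constructor <;> norm_num)
  exact ⟨z, h, hz.1, hz.2⟩

/-- Positive harmonic function. -/
noncomputable def hfun (z : ℝ) (s : St) : ℝ :=
  match s.ph with
  | Ph.fr => (2 * z) ^ s.d
  | Ph.bk => (2 * z) ^ (s.d + 1)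
  | Ph.aw => z * (2 * z) ^ s.d / (1 - 2 * z ^ 2)

/-- Transition operator of the Markov chain. -/
noncomputable def opK (z : ℝ) (F : St → ℝ) (s : St) : ℝ :=
  match s.ph with
  | Ph.fr => z * F s.fwd + z * F s.back + (1 - 2 * z) * F s.away
  | Ph.bk => 1 / 2 * F s.fwd + 1 / 2 * F s.back
  | Ph.aw => (1 - 2 * z ^ 2) * F s.fwd + 2 * z ^ 2 * F s.away

lemma fwd_d (s : St) : s.fwd.d = s.d := by
  obtain ⟨b, X, Y, d, ph⟩ := s
  cases b <;> rfl

lemma fwd_ph (s : St) : s.fwd.ph = Ph.fr := by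
  obtain ⟨b, X, Y, d, ph⟩ := s
  cases b <;> rfl

lemma away_d (s : St) : s.away.d = s.d + 1 := rfl

lemma away_ph (s : St) : s.away.ph = Ph.aw := rfl

lemma hfun_fwd (z : ℝ) (s : St) : hfun z s.fwd = (2 * z) ^ s.d := by
  unfold hfun; rw [fwd_ph, fwd_d]

lemma hfun_back (z : ℝ) (s : St) : hfun z s.back = (2 * z) ^ s.d := by
  obtain ⟨b, X, Y, d, ph⟩ := s
  cases b <;> cases d <;> simp [hfun, St.back]

lemma hfun_away (z : ℝ) (s : St) :
    hfun z s.away = z * (2 * z) ^ (s.d + 1) / (1 - 2 * z ^ 2) := by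
  unfold hfun; rw [away_ph, away_d]

section
variable {z : ℝ}

lemma IsRootZ.pos (hz : IsRootZ z) : 0 < z := by linarith [hz.2.1]

lemma IsRootZ.u_pos (hz : IsRootZ z) : 1 / 2 < 1 - 2 * z ^ 2 := by
  have := hz.2.1
  have := hz.2.2
  nlinarith

lemma IsRootZ.rel (hz : IsRootZ z) : (1 - 2 * z) * (1 - 2 * z ^ 2) = 2 * z ^ 3 := by
  linarith [hz.1]

lemma hfun_pos (hz : IsRootZ z) (s : St) : 0 < hfun z s := by
  have h0 := hz.pos
  have hu : 0 < 1 - 2 * z ^ 2 := by linarith [hz.u_pos]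
  unfold hfun
  cases s.ph <;> simp only <;> positivity

lemma hfun_le_one (hz : IsRootZ z) (s : St) : hfun z s ≤ 1 := by
  have h0 := hz.pos
  have hu := hz.u_pos
  have h2 : 2 * z ≤ 1 := by linarith [hz.2.2]
  unfold hfun
  cases s.ph <;> simp only
  · exact pow_le_one₀ (by linarith) h2
  · exact pow_le_one₀ (by linarith) h2
  · rw [div_le_one (by linarith)]
    have := pow_le_one₀ (n := s.d) (by linarith : 0 ≤ 2 * z) h2
    nlinarith [pow_nonneg (by linarith : 0 ≤ 2 * z) s.d]

lemma cor_le (hz : IsRootZ z) (s : St) : cor s ≤ 2 * hfun z s := by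
  have h0 := hz.pos
  have hu := hz.u_pos
  unfold cor
  split_ifs with h
  · unfold hfun
    rw [h]
    have := hz.2.1
    cases s.ph <;> simp only
    · norm_num
    · rw [zero_add, pow_one]; linarith
    · rw [pow_zero, mul_one]
      rw [← mul_div_assoc, le_div_iff₀ (by linarith)]
      nlinarith
  · linarith [hfun_pos hz s]

lemma opP_h (hz : IsRootZ z) (F : St → ℝ) (s : St) :
    opP (fun t => hfun z t * F t) s = z⁻¹ * (hfun z s * opK z F s) := by
  have h0 := hz.pos
  have hu : 1 - 2 * z ^ 2 ≠ 0 := by linarith [hz.u_pos]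
  have hrel : 1 - 2 * z = 2 * z ^ 3 / (1 - 2 * z ^ 2) := by
    rw [eq_div_iff hu]; exact hz.rel
  unfold opP
  simp only [hfun_fwd, hfun_back, hfun_away]
  unfold opK
  rcases hph : s.ph with _ | _ | _
  · simp only [hfun, hph]
    rw [hrel]
    field_simp
    ring
  · simp only [hfun, hph]
    rw [pow_succ]
    field_simp
  · simp only [hfun, hph]
    field_simp
    ring

lemma opP_smul (a : ℝ) (F : St → ℝ) (s : St) : opP (fun t => a * F t) s = a * opP F s := by
  unfold opP
  cases s.ph <;> simp only <;> ring

lemma opP_iter_smul (a : ℝ) (F : St → ℝ) (n : ℕ) (s : St) :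
    opP^[n] (fun t => a * F t) s = a * opP^[n] F s := by
  induction n generalizing s with
  | zero => rfl
  | succ n ih =>
    rw [Function.iterate_succ_apply', Function.iterate_succ_apply', ← opP_smul]
    congr 1
    funext t
    exact ih t

lemma opP_iter_h (hz : IsRootZ z) (F : St → ℝ) (n : ℕ) (s : St) :
    opP^[n] (fun t => hfun z t * F t) s = z⁻¹ ^ n * (hfun z s * (opK z)^[n] F s) := by
  induction n generalizing s with
  | zero => simp
  | succ n ih =>
    rw [Function.iterate_succ_apply', Function.iterate_succ_apply']
    rw [show opP^[n] (fun t => hfun z t * F t) =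
      fun s => z⁻¹ ^ n * (hfun z s * (opK z)^[n] F s) from funext ih]
    rw [opP_smul, opP_h hz, pow_succ]
    ring

lemma opK_mono (hz : IsRootZ z) {F G : St → ℝ} (h : ∀ s, F s ≤ G s) (s : St) :
    opK z F s ≤ opK z G s := by
  have h0 := hz.pos
  have hu := hz.u_pos
  have h2 := hz.2.2
  unfold opK
  cases s.ph <;> simp only <;> gcongr <;> first | exact h _ | linarith

lemma opK_add (F G : St → ℝ) (s : St) :
    opK z (fun t => F t + G t) s = opK z F s + opK z G s := by
  unfold opK
  cases s.ph <;> simp only <;> ring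

lemma opK_smul (a : ℝ) (F : St → ℝ) (s : St) :
    opK z (fun t => a * F t) s = a * opK z F s := by
  unfold opK
  cases s.ph <;> simp only <;> ring

lemma opK_const (a : ℝ) (s : St) : opK z (fun _ => a) s = a := by
  unfold opK
  cases s.ph <;> simp only <;> ring

lemma opK_iter_mono (hz : IsRootZ z) {F G : St → ℝ} (h : ∀ s, F s ≤ G s) (n : ℕ) (s : St) :
    (opK z)^[n] F s ≤ (opK z)^[n] G s := by
  induction n generalizing s with
  | zero => exact h s
  | succ n ih =>
    rw [Function.iterate_succ_apply', Function.iterate_succ_apply']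
    exact opK_mono hz ih s

lemma opK_iter_add (F G : St → ℝ) (n : ℕ) (s : St) :
    (opK z)^[n] (fun t => F t + G t) s = (opK z)^[n] F s + (opK z)^[n] G s := by
  induction n generalizing s with
  | zero => rfl
  | succ n ih =>
    rw [Function.iterate_succ_apply', Function.iterate_succ_apply', Function.iterate_succ_apply',
      ← opK_add]
    congr 1
    funext t
    exact ih t

lemma opK_iter_smul (a : ℝ) (F : St → ℝ) (n : ℕ) (s : St) :
    (opK z)^[n] (fun t => a * F t) s = a * (opK z)^[n] F s := by
  induction n generalizing s with
  | zero => rfl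
  | succ n ih =>
    rw [Function.iterate_succ_apply', Function.iterate_succ_apply', ← opK_smul]
    congr 1
    funext t
    exact ih t

lemma opK_iter_const (a : ℝ) (n : ℕ) (s : St) : (opK z)^[n] (fun _ => a) s = a := by
  induction n generalizing s with
  | zero => rfl
  | succ n ih =>
    rw [Function.iterate_succ_apply', show (opK z)^[n] (fun _ => a) = fun _ => a from funext ih,
      opK_const]

lemma opK_flip (F : St → ℝ) (s : St) : opK z (fun t => F t.flip) s = opK z F s.flip := by
  have hp : s.flip.ph = s.ph := rfl
  unfold opK
  rw [hp]
  cases s.ph <;> simp only [fwd_flip, back_flip, away_flip]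

/-! ### Control of the depth -/

/-- Lyapunov function. -/
noncomputable def lyap (z : ℝ) (s : St) : ℝ :=
  match s.ph with
  | Ph.fr => (1 / (4 * z ^ 2)) ^ s.d
  | Ph.bk => (1 / (4 * z ^ 2)) ^ s.d / (2 * (1 - 2 * z ^ 2))
  | Ph.aw => 2 * (1 - 2 * z ^ 2) * (1 / (4 * z ^ 2)) ^ s.d

lemma lyap_ge (hz : IsRootZ z) (s : St) : (1 / (4 * z ^ 2)) ^ s.d ≤ 2 * lyap z s := by
  have h0 := hz.pos
  have hu := hz.u_pos
  have hw : 0 ≤ (1 / (4 * z ^ 2)) ^ s.d := by positivity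
  unfold lyap
  cases s.ph <;> simp only
  · linarith
  · rw [← mul_div_assoc, le_div_iff₀ (by linarith)]
    nlinarith [sq_nonneg z]
  · nlinarith

lemma opK_lyap (hz : IsRootZ z) (s : St) : opK z (lyap z) s ≤ lyap z s + 1 := by
  have h0 := hz.pos
  have hu := hz.u_pos
  have hu' : 1 - 2 * z ^ 2 ≠ 0 := by linarith
  have hrel := hz.rel
  have hf : lyap z s.fwd = (1 / (4 * z ^ 2)) ^ s.d := by
    unfold lyap; rw [fwd_ph, fwd_d]
  have ha : lyap z s.away = 2 * (1 - 2 * z ^ 2) * (1 / (4 * z ^ 2)) ^ (s.d + 1) := by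
    unfold lyap; rw [away_ph, away_d]
  have hb0 : s.d = 0 → lyap z s.back = 1 := by
    obtain ⟨b, X, Y, d, ph⟩ := s
    rintro (rfl : d = 0)
    cases b <;> simp [St.back, lyap]
  have hb1 : ∀ k, s.d = k + 1 →
      lyap z s.back = (1 / (4 * z ^ 2)) ^ k / (2 * (1 - 2 * z ^ 2)) := by
    obtain ⟨b, X, Y, d, ph⟩ := s
    rintro k (rfl : d = k + 1)
    cases b <;> simp [St.back, lyap]
  have e1 : (1 - 2 * z) * (2 * (1 - 2 * z ^ 2)) = 4 * z ^ 3 := by linarith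
  have e3 : 2 * z ^ 3 / (1 - 2 * z ^ 2) = 1 - 2 * z := by
    rw [div_eq_iff hu']; linarith
  have hw4 : 4 * z ^ 2 * (1 / (4 * z ^ 2)) = 1 := by
    field_simp
  rcases hd : s.d with _ | k
  · rw [hd] at hf ha
    have hb := hb0 hd
    have hz2 := hz.2.2
    unfold opK
    rcases hph : s.ph with _ | _ | _
    · simp only [hf, ha, hb]
      simp only [lyap, hph, hd]
      have : (1 - 2 * z) * (2 * (1 - 2 * z ^ 2) * (1 / (4 * z ^ 2)) ^ (0 + 1)) = z := by
        rw [← mul_assoc, e1, zero_add, pow_one]; linear_combination z * hw4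
      rw [this]
      simp only [pow_zero]
      linarith
    · simp only [hf, hb]
      simp only [lyap, hph, hd]
      have : 0 < (1 / (4 * z ^ 2)) ^ 0 / (2 * (1 - 2 * z ^ 2)) := by
        have : 0 < 1 - 2 * z ^ 2 := by linarith
        positivity
      simp only [pow_zero] at this ⊢
      linarith
    · simp only [hf, ha]
      simp only [lyap, hph, hd]
      have : 2 * z ^ 2 * (2 * (1 - 2 * z ^ 2) * (1 / (4 * z ^ 2)) ^ (0 + 1)) = 1 - 2 * z ^ 2 := by
        rw [zero_add, pow_one]; linear_combination (1 - 2 * z ^ 2) * hw4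
      rw [this]
      simp only [pow_zero]
      linarith
  · rw [hd] at hf ha
    have hb := hb1 k hd
    suffices opK z (lyap z) s = lyap z s by linarith
    unfold opK
    rcases hph : s.ph with _ | _ | _
    · simp only [hf, ha, hb]
      simp only [lyap, hph, hd]
      have t1 : (1 - 2 * z) * (2 * (1 - 2 * z ^ 2) * (1 / (4 * z ^ 2)) ^ (k + 1 + 1)) =
          z * (1 / (4 * z ^ 2)) ^ (k + 1) := by
        rw [← mul_assoc, e1, pow_succ]
        linear_combination z * (1 / (4 * z ^ 2)) ^ (k + 1) * hw4
      have t2 : z * ((1 / (4 * z ^ 2)) ^ k / (2 * (1 - 2 * z ^ 2))) =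
          (1 - 2 * z) * (1 / (4 * z ^ 2)) ^ (k + 1) := by
        rw [pow_succ, ← mul_div_assoc, div_eq_iff (by linarith)]
        linear_combination (-z * (1 / (4 * z ^ 2)) ^ k) * hw4 -
          (1 / (4 * z ^ 2)) ^ k * (1 / (4 * z ^ 2)) * e1
      rw [t1, t2]
      ring
    · simp only [hf, hb]
      simp only [lyap, hph, hd]
      rw [pow_succ]
      field_simp
      ring
    · simp only [hf, ha]
      simp only [lyap, hph, hd]
      rw [pow_succ _ (k + 1)]
      field_simp
      ring

lemma opK_iter_lyap (hz : IsRootZ z) (n : ℕ) (s : St) :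
    (opK z)^[n] (lyap z) s ≤ lyap z s + n := by
  induction n generalizing s with
  | zero => simp
  | succ n ih =>
    rw [Function.iterate_succ_apply']
    refine (opK_mono hz ih s).trans ?_
    rw [opK_add, opK_const]
    push_cast
    linarith [opK_lyap hz s]

/-- Exponential rate for the depth. -/
noncomputable def omg (z : ℝ) : ℝ := Real.log (1 / (4 * z ^ 2))

lemma omg_pos (hz : IsRootZ z) : 0 < omg z := by
  apply Real.log_pos
  have := hz.pos
  have := hz.2.2
  rw [lt_div_iff₀ (by positivity)]
  nlinarith

lemma depth_tail (hz : IsRootZ z) (n : ℕ) (s : St) (a : ℝ) :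
    (opK z)^[n] (fun t => if a ≤ (t.d : ℝ) then 1 else 0) s ≤
      2 * Real.exp (-(omg z * a)) * (lyap z s + n) := by
  have hpt : ∀ t : St, (if a ≤ (t.d : ℝ) then (1 : ℝ) else 0) ≤
      2 * Real.exp (-(omg z * a)) * lyap z t := by
    intro t
    have h1 := lyap_ge hz t
    have h0 := hz.pos
    have hw : 0 < 1 / (4 * z ^ 2) := by positivity
    have e : (1 / (4 * z ^ 2)) ^ t.d = Real.exp (omg z * t.d) := by
      rw [mul_comm (omg z), Real.exp_nat_mul, omg, Real.exp_log hw]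
    rw [e] at h1
    have h2 : 0 < Real.exp (-(omg z * a)) := Real.exp_pos _
    split_ifs with h
    · have : 1 ≤ Real.exp (-(omg z * a)) * Real.exp (omg z * t.d) := by
        rw [← Real.exp_add]
        apply Real.one_le_exp
        nlinarith [omg_pos hz]
      nlinarith
    · have := Real.exp_pos (omg z * t.d)
      have : 0 < lyap z t := by linarith
      positivity
  refine (opK_iter_mono hz hpt n s).trans ?_
  rw [opK_iter_smul]
  exact mul_le_mul_of_nonneg_left (opK_iter_lyap hz n s) (by positivity)

/-! ### Exponential concentration -/

lemma opK_exp (hz : IsRootZ z) (G : St → ℝ) (c M θ : ℝ) (hM : 0 ≤ M) (hθ : |θ| * M ≤ 1)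
    (hG : ∀ s, opK z G s = G s + c)
    (hb : ∀ s, |G s.fwd - G s| ≤ M ∧ |G s.back - G s| ≤ M ∧
      |G s.away - G s| ≤ M) (s : St) :
    opK z (fun t => Real.exp (θ * G t)) s ≤
      Real.exp (θ * c + θ ^ 2 * M ^ 2) * Real.exp (θ * G s) := by
  have key : ∀ x, |x - G s| ≤ M → Real.exp (θ * x) ≤
      (1 - θ * G s + θ ^ 2 * M ^ 2 + θ * x) * Real.exp (θ * G s) := by
    intro x hx
    have e : Real.exp (θ * x) = Real.exp (θ * (x - G s)) * Real.exp (θ * G s) := by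
      rw [← Real.exp_add]; congr 1; ring
    rw [e]
    refine mul_le_mul_of_nonneg_right ?_ (Real.exp_pos _).le
    have hle : |θ * (x - G s)| ≤ 1 := by
      rw [abs_mul]
      exact (mul_le_mul_of_nonneg_left hx (abs_nonneg _)).trans hθ
    have := Real.abs_exp_sub_one_sub_id_le hle
    have h2 := (abs_le.1 this).2
    have h3 : (θ * (x - G s)) ^ 2 ≤ θ ^ 2 * M ^ 2 := by
      rw [mul_pow]
      refine mul_le_mul_of_nonneg_left ?_ (sq_nonneg _)
      exact sq_le_sq' (by linarith [(abs_le.1 hx).1]) (abs_le.1 hx).2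
    linarith
  have h0 := hz.pos
  have hu := hz.u_pos
  have h2 := hz.2.2
  have k1 := key _ (hb s).1
  have k2 := key _ (hb s).2.1
  have k3 := key _ (hb s).2.2
  have hstep : opK z (fun t => Real.exp (θ * G t)) s ≤
      (1 - θ * G s + θ ^ 2 * M ^ 2 + θ * opK z G s) * Real.exp (θ * G s) := by
    unfold opK
    cases s.ph <;> simp only
    · have := mul_le_mul_of_nonneg_left k1 h0.le
      have := mul_le_mul_of_nonneg_left k2 h0.le
      have := mul_le_mul_of_nonneg_left k3 (by linarith : 0 ≤ 1 - 2 * z)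
      linarith
    · linarith
    · have := mul_le_mul_of_nonneg_left k1 (by linarith : 0 ≤ 1 - 2 * z ^ 2)
      have := mul_le_mul_of_nonneg_left k3 (by positivity : 0 ≤ 2 * z ^ 2)
      linarith
  refine hstep.trans (mul_le_mul_of_nonneg_right ?_ (Real.exp_pos _).le)
  rw [hG]
  have := Real.add_one_le_exp (θ * c + θ ^ 2 * M ^ 2)
  linarith

lemma opK_iter_exp (hz : IsRootZ z) (G : St → ℝ) (c M θ : ℝ) (hM : 0 ≤ M) (hθ : |θ| * M ≤ 1)
    (hG : ∀ s, opK z G s = G s + c)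
    (hb : ∀ s, |G s.fwd - G s| ≤ M ∧ |G s.back - G s| ≤ M ∧ |G s.away - G s| ≤ M)
    (n : ℕ) (s : St) :
    (opK z)^[n] (fun t => Real.exp (θ * G t)) s ≤
      Real.exp (n * (θ * c + θ ^ 2 * M ^ 2)) * Real.exp (θ * G s) := by
  induction n generalizing s with
  | zero => simp
  | succ n ih =>
    rw [Function.iterate_succ_apply']
    refine (opK_mono hz ih s).trans ?_
    rw [opK_smul]
    refine (mul_le_mul_of_nonneg_left (opK_exp hz G c M θ hM hθ hG hb s)
      (Real.exp_pos _).le).trans (le_of_eq ?_)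
    rw [← Real.exp_add, ← Real.exp_add, ← Real.exp_add]
    congr 1
    push_cast
    ring

lemma G_tail (hz : IsRootZ z) (G : St → ℝ) (c M : ℝ) (hM : 0 < M)
    (hG : ∀ s, opK z G s = G s + c)
    (hb : ∀ s, |G s.fwd - G s| ≤ M ∧ |G s.back - G s| ≤ M ∧ |G s.away - G s| ≤ M)
    (s : St) (δ : ℝ) (hδ : 0 < δ) :
    ∃ κ C : ℝ, 0 < κ ∧ 0 < C ∧ ∀ L i : ℕ, i ≤ L →
      (opK z)^[i] (fun t => if δ * L < |G t - c * i| then 1 else 0) s ≤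
        C * Real.exp (-(κ * L)) := by
  obtain ⟨θ, hθ0, hθ1, hθ2⟩ : ∃ θ : ℝ, 0 < θ ∧ θ * M ≤ 1 ∧ θ * M ^ 2 ≤ δ / 2 := by
    refine ⟨min (1 / M) (δ / (2 * M ^ 2)), by positivity, ?_, ?_⟩
    · have := min_le_left (1 / M) (δ / (2 * M ^ 2))
      calc _ ≤ 1 / M * M := by gcongr
        _ = 1 := by field_simp
    · have := min_le_right (1 / M) (δ / (2 * M ^ 2))
      calc _ ≤ δ / (2 * M ^ 2) * M ^ 2 := by gcongr
        _ = δ / 2 := by field_simp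
  refine ⟨θ * δ / 2, 2 * Real.exp (θ * |G s|), by positivity, by positivity, ?_⟩
  intro L i hi
  have hiL : (i : ℝ) ≤ L := by exact_mod_cast hi
  have hpt : ∀ t : St, (if δ * L < |G t - c * i| then (1 : ℝ) else 0) ≤
      Real.exp (-(θ * (δ * L + c * i))) * Real.exp (θ * G t) +
      Real.exp (-(θ * (δ * L - c * i))) * Real.exp (-θ * G t) := by
    intro t
    split_ifs with h
    · rw [← Real.exp_add, ← Real.exp_add]
      rcases lt_abs.1 h with h | h
      · have : 1 ≤ Real.exp (-(θ * (δ * L + c * i)) + θ * G t) := by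
          apply Real.one_le_exp
          nlinarith
        linarith [Real.exp_pos (-(θ * (δ * L - c * i)) + -θ * G t)]
      · have : 1 ≤ Real.exp (-(θ * (δ * L - c * i)) + -θ * G t) := by
          apply Real.one_le_exp
          nlinarith
        linarith [Real.exp_pos (-(θ * (δ * L + c * i)) + θ * G t)]
    · positivity
  refine (opK_iter_mono hz hpt i s).trans ?_
  rw [opK_iter_add, opK_iter_smul, opK_iter_smul]
  have a1 := opK_iter_exp hz G c M θ hM.le (by rwa [abs_of_pos hθ0]) hG hb i s
  have a2 := opK_iter_exp hz G c M (-θ) hM.le (by rwa [abs_neg, abs_of_pos hθ0]) hG hb i s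
  have hquad : (i : ℝ) * (θ ^ 2 * M ^ 2) ≤ L * (θ * (δ / 2)) := by
    have : θ ^ 2 * M ^ 2 ≤ θ * (δ / 2) := by
      have := mul_le_mul_of_nonneg_left hθ2 hθ0.le
      linarith
    have h3 : 0 ≤ θ ^ 2 * M ^ 2 := by positivity
    exact mul_le_mul hiL this h3 (by positivity)
  have b1 := mul_le_mul_of_nonneg_left a1 (Real.exp_pos (-(θ * (δ * L + c * i)))).le
  have b2 := mul_le_mul_of_nonneg_left a2 (Real.exp_pos (-(θ * (δ * L - c * i)))).le
  have c1 : Real.exp (-(θ * (δ * L + c * i))) *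
      (Real.exp (i * (θ * c + θ ^ 2 * M ^ 2)) * Real.exp (θ * G s)) ≤
      Real.exp (θ * |G s|) * Real.exp (-(θ * δ / 2 * L)) := by
    rw [← Real.exp_add, ← Real.exp_add, ← Real.exp_add]
    apply Real.exp_le_exp.2
    have := mul_le_mul_of_nonneg_left (le_abs_self (G s)) hθ0.le
    linarith
  have c2 : Real.exp (-(θ * (δ * L - c * i))) *
      (Real.exp (i * (-θ * c + (-θ) ^ 2 * M ^ 2)) * Real.exp (-θ * G s)) ≤
      Real.exp (θ * |G s|) * Real.exp (-(θ * δ / 2 * L)) := by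
    rw [← Real.exp_add, ← Real.exp_add, ← Real.exp_add, neg_sq]
    apply Real.exp_le_exp.2
    have := mul_le_mul_of_nonneg_left (neg_abs_le (G s)) hθ0.le
    linarith
  linarith

end

/-! ### The corrector -/

/-- Linear corrector for the first coordinate. -/
noncomputable def Gfun (a b p p' : ℝ) : St → ℝ
  | ⟨true, X, _, d, Ph.bk⟩ => X + a * d
  | ⟨true, X, _, d, Ph.fr⟩ => X + a * d + (-1 - b)
  | ⟨true, X, _, d, Ph.aw⟩ => X + a * d + p
  | ⟨false, X, _, d, Ph.bk⟩ => X + b * d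
  | ⟨false, X, _, d, Ph.fr⟩ => X + b * d + (-a)
  | ⟨false, X, _, d, Ph.aw⟩ => X + b * d + p'

lemma exists_consts {z : ℝ} (hz : IsRootZ z) : ∃ c a b p p' : ℝ, 0 < c ∧ -b - a = 2 * c ∧
    z + z * (-a + 1 + b) + (1 - 2 * z) * (p + a + 1 + b) = c ∧
    (1 - 2 * z ^ 2) * (-b - p) + 2 * z ^ 2 * a = c ∧
    z * (-b + a) + (1 - 2 * z) * (p' + b + a) = c ∧
    (1 - 2 * z ^ 2) * (-a - p') + 2 * z ^ 2 * b = c := by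
  have h0 := hz.2.1
  have h1 := hz.2.2
  have hu := hz.u_pos
  obtain ⟨ρ, hρ⟩ : ∃ ρ, ρ = (1 - 2 * z) / (1 - 2 * z ^ 2) := ⟨_, rfl⟩
  have hu' : 1 - 2 * z ^ 2 ≠ 0 := by linarith
  have hρ0 : 0 ≤ ρ := by rw [hρ]; apply div_nonneg <;> linarith
  have hρ1 : ρ < 1 / 2 := by
    rw [hρ, div_lt_iff₀ (by linarith)]
    nlinarith
  obtain ⟨v, hv⟩ : ∃ v, v = 1 / (1 - 2 * z ^ 2) := ⟨_, rfl⟩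
  have hv1 : (1 - 2 * z ^ 2) * v = 1 := by rw [hv]; field_simp
  have hρv : ρ = (1 - 2 * z) * v := by rw [hρ, hv]; ring
  obtain ⟨c, hc⟩ : ∃ c, c = 1 / (2 + 4 * ρ) := ⟨_, rfl⟩
  have hc0 : 0 < c := by rw [hc]; positivity
  have hc1 : c * (2 + 4 * ρ) = 1 := by rw [hc]; field_simp
  obtain ⟨D, hD⟩ : ∃ D, D = 1 / (2 * z - ρ) := ⟨_, rfl⟩
  have hD1 : D * (2 * z - ρ) = 1 := by
    have : 2 * z - ρ ≠ 0 := by linarith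
    rw [hD]; field_simp
  refine ⟨c, -c + D / 2, -c - D / 2, -(-c - D / 2) + (2 * z ^ 2 * (-c + D / 2) - c) * v,
    -(-c + D / 2) + (2 * z ^ 2 * (-c - D / 2) - c) * v, hc0, by ring, ?_, ?_, ?_, ?_⟩
  · subst hρv
    linear_combination (-1 / 2) * hc1 - (1 / 2) * hD1 + (1 - 2 * z) * (c - D / 2) * hv1
  · linear_combination (-(2 * z ^ 2 * (-c + D / 2) - c)) * hv1
  · subst hρv
    linear_combination (-1 / 2) * hc1 + (1 / 2) * hD1 + (1 - 2 * z) * (c + D / 2) * hv1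
  · linear_combination (-(2 * z ^ 2 * (-c - D / 2) - c)) * hv1

lemma exists_G {z : ℝ} (hz : IsRootZ z) : ∃ (c M : ℝ) (G : St → ℝ), 0 < c ∧ 0 < M ∧
    (∀ s, opK z G s = G s + c) ∧
    (∀ s, |G s.fwd - G s| ≤ M ∧ |G s.back - G s| ≤ M ∧ |G s.away - G s| ≤ M) ∧
    (∀ s, |G s - (s.pos.1 : ℝ)| ≤ M * (s.d + 1)) := by
  obtain ⟨c, a, b, p, p', hc, e1, e2, e3, e4, e5⟩ := exists_consts hz
  have a1 := le_abs_self a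
  have a2 := neg_abs_le a
  have b1 := le_abs_self b
  have b2 := neg_abs_le b
  have p1 := le_abs_self p
  have p2 := neg_abs_le p
  have q1 := le_abs_self p'
  have q2 := neg_abs_le p'
  have ha := abs_nonneg a
  have hb := abs_nonneg b
  have hp := abs_nonneg p
  have hq := abs_nonneg p'
  refine ⟨c, 3 * (1 + |a| + |b| + |p| + |p'|), Gfun a b p p', hc, by positivity, ?_, ?_, ?_⟩
  · rintro ⟨_ | _, X, Y, _ | k, _ | _ | _⟩ <;>
    · simp only [opK, St.fwd, St.back, St.away, Gfun]
      push_cast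
      linarith
  · rintro ⟨_ | _, X, Y, _ | k, _ | _ | _⟩ <;>
    · simp only [St.fwd, St.back, St.away, Gfun, abs_le]
      push_cast
      refine ⟨⟨?_, ?_⟩, ⟨?_, ?_⟩, ?_, ?_⟩ <;> linarith
  · rintro ⟨_ | _, X, Y, d, _ | _ | _⟩ <;>
    · simp only [St.pos, Gfun, abs_le, if_true, Bool.false_eq_true, if_false]
      push_cast
      have hd : (0 : ℝ) ≤ d := Nat.cast_nonneg d
      have := mul_le_mul_of_nonneg_right a1 hd
      have := mul_le_mul_of_nonneg_right a2 hd
      have := mul_le_mul_of_nonneg_right b1 hd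
      have := mul_le_mul_of_nonneg_right b2 hd
      have := mul_nonneg ha hd
      have := mul_nonneg hb hd
      have := mul_nonneg hp hd
      have := mul_nonneg hq hd
      constructor <;> linarith
/-! ### Large deviation estimates for the chain -/

lemma coord_tail {z : ℝ} (hz : IsRootZ z) (G x : St → ℝ) (c M : ℝ) (hM : 0 < M)
    (hG : ∀ s, opK z G s = G s + c)
    (hb : ∀ s, |G s.fwd - G s| ≤ M ∧ |G s.back - G s| ≤ M ∧ |G s.away - G s| ≤ M)
    (hx : ∀ s, |G s - x s| ≤ M * (s.d + 1)) (s : St) (δ : ℝ) (hδ : 0 < δ) :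
    ∃ κ C : ℝ, 0 < κ ∧ 0 < C ∧ ∀ L i : ℕ, i ≤ L →
      (opK z)^[i] (fun t => if δ * L < |x t - c * i| then 1 else 0) s ≤
        C * (1 + L) * Real.exp (-(κ * L)) := by
  obtain ⟨κ₁, C₁, hκ₁, hC₁, h₁⟩ := G_tail hz G c M hM hG hb s (δ / 2) (by positivity)
  have ho := omg_pos hz
  refine ⟨min κ₁ (omg z * (δ / (2 * M))), C₁ + 2 * Real.exp (omg z) * (|lyap z s| + 1),
    by positivity, by positivity, ?_⟩
  intro L i hi
  have hiL : (i : ℝ) ≤ L := by exact_mod_cast hi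
  have hL0 : (0 : ℝ) ≤ L := Nat.cast_nonneg L
  have hpt : ∀ t : St, (if δ * L < |x t - c * i| then (1 : ℝ) else 0) ≤
      (if δ / 2 * L < |G t - c * i| then 1 else 0) +
      (if δ / (2 * M) * L - 1 ≤ (t.d : ℝ) then 1 else 0) := by
    intro t
    by_cases h1 : δ / 2 * L < |G t - c * i|
    · rw [if_pos h1]
      split_ifs <;> norm_num
    by_cases h2 : δ / (2 * M) * L - 1 ≤ (t.d : ℝ)
    · rw [if_pos h2]
      split_ifs <;> norm_num
    rw [if_neg h1, if_neg h2, if_neg]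
    · norm_num
    · push Not at h1 h2 ⊢
      have h3 := hx t
      have h4 : M * (t.d + 1) ≤ δ / 2 * L := by
        have : M * (t.d + 1) ≤ M * (δ / (2 * M) * L) := by
          apply mul_le_mul_of_nonneg_left _ hM.le
          linarith
        refine this.trans (le_of_eq ?_)
        field_simp
      have h5 : |x t - c * i| ≤ |G t - c * i| + |G t - x t| := by
        have := abs_sub (G t - c * i) (G t - x t)
        rwa [show G t - c * i - (G t - x t) = x t - c * i by ring] at this
      linarith
  refine (opK_iter_mono hz hpt i s).trans ?_
  rw [opK_iter_add]
  have g1 := h₁ L i hi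
  have g2 := depth_tail hz i s (δ / (2 * M) * L - 1)
  have k1 : Real.exp (-(κ₁ * L)) ≤ Real.exp (-(min κ₁ (omg z * (δ / (2 * M))) * L)) := by
    apply Real.exp_le_exp.2
    have := mul_le_mul_of_nonneg_right (min_le_left κ₁ (omg z * (δ / (2 * M)))) hL0
    linarith
  have k2 : Real.exp (-(omg z * (δ / (2 * M) * L - 1))) ≤
      Real.exp (omg z) * Real.exp (-(min κ₁ (omg z * (δ / (2 * M))) * L)) := by
    rw [← Real.exp_add]
    apply Real.exp_le_exp.2
    have := mul_le_mul_of_nonneg_right (min_le_right κ₁ (omg z * (δ / (2 * M)))) hL0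
    linarith
  set E := Real.exp (-(min κ₁ (omg z * (δ / (2 * M))) * L)) with hE
  have hE0 : 0 < E := Real.exp_pos _
  have m1 : C₁ * Real.exp (-(κ₁ * L)) ≤ C₁ * (1 + L) * E := by
    have : C₁ * Real.exp (-(κ₁ * L)) ≤ C₁ * E := mul_le_mul_of_nonneg_left k1 hC₁.le
    have h3 : 0 ≤ C₁ * E * L := by positivity
    linarith
  have m2 : 2 * Real.exp (-(omg z * (δ / (2 * M) * L - 1))) * (lyap z s + i) ≤
      2 * (Real.exp (omg z) * E) * ((|lyap z s| + 1) * (1 + L)) := by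
    have h3 : lyap z s + i ≤ (|lyap z s| + 1) * (1 + L) := by
      nlinarith [le_abs_self (lyap z s), abs_nonneg (lyap z s)]
    have h4 : 0 ≤ (|lyap z s| + 1) * (1 + (L : ℝ)) := by positivity
    calc _ ≤ 2 * Real.exp (-(omg z * (δ / (2 * M) * L - 1))) *
            ((|lyap z s| + 1) * (1 + L)) := by gcongr
      _ ≤ _ := by gcongr
  linarith

lemma both_tail {z : ℝ} (hz : IsRootZ z) : ∃ c : ℝ, 0 < c ∧ ∀ δ : ℝ, 0 < δ →
    ∃ κ C : ℝ, 0 < κ ∧ 0 < C ∧ ∀ L i : ℕ, i ≤ L →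
      (opK z)^[i] (fun t => (if δ * L < |(t.pos.1 : ℝ) - c * i| then 1 else 0) +
        (if δ * L < |(t.pos.2 : ℝ) - c * i| then 1 else 0)) st0 ≤
        C * (1 + L) * Real.exp (-(κ * L)) := by
  obtain ⟨c, M, G, hc, hM, hG, hb, hx⟩ := exists_G hz
  refine ⟨c, hc, fun δ hδ => ?_⟩
  obtain ⟨κ₁, C₁, hκ₁, hC₁, h₁⟩ :=
    coord_tail hz G (fun s => (s.pos.1 : ℝ)) c M hM hG hb hx st0 δ hδ
  obtain ⟨κ₂, C₂, hκ₂, hC₂, h₂⟩ :=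
    coord_tail hz (fun s => G s.flip) (fun s => (s.pos.2 : ℝ)) c M hM
      (fun s => by rw [opK_flip, hG])
      (fun s => by
        have := hb s.flip
        rw [fwd_flip, back_flip, away_flip] at this
        exact this)
      (fun s => by
        have := hx s.flip
        rw [pos_flip] at this
        exact this) st0 δ hδ
  refine ⟨min κ₁ κ₂, C₁ + C₂, by positivity, by positivity, fun L i hi => ?_⟩
  rw [opK_iter_add]
  have hL0 : (0 : ℝ) ≤ L := Nat.cast_nonneg L
  have k1 : Real.exp (-(κ₁ * L)) ≤ Real.exp (-(min κ₁ κ₂ * L)) := by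
    apply Real.exp_le_exp.2
    have := mul_le_mul_of_nonneg_right (min_le_left κ₁ κ₂) hL0
    linarith
  have k2 : Real.exp (-(κ₂ * L)) ≤ Real.exp (-(min κ₁ κ₂ * L)) := by
    apply Real.exp_le_exp.2
    have := mul_le_mul_of_nonneg_right (min_le_right κ₁ κ₂) hL0
    linarith
  have g1 := (h₁ L i hi).trans (mul_le_mul_of_nonneg_left k1 (by positivity))
  have g2 := (h₂ L i hi).trans (mul_le_mul_of_nonneg_left k2 (by positivity))
  linarith

/-! ### Counting estimates -/

lemma opP_cor_nonneg (n : ℕ) (s : St) : 0 ≤ opP^[n] cor s := by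
  rw [← card_PathsC]
  positivity

lemma opP_cor_le {z : ℝ} (hz : IsRootZ z) (n : ℕ) (s : St) :
    opP^[n] cor s ≤ 2 * z⁻¹ ^ n * hfun z s := by
  refine (opP_iter_mono (cor_le hz) n s).trans ?_
  rw [opP_iter_smul]
  have := opP_iter_h hz (fun _ => 1) n s
  simp only [mul_one] at this
  rw [this, opK_iter_const]
  linarith

lemma bad_count {z : ℝ} (hz : IsRootZ z) (L i : ℕ) (hi : i ≤ L) (B : Set (ℤ × ℤ))
    (F : St → ℝ) (hF0 : ∀ t, 0 ≤ F t) (hF1 : ∀ t : St, t.pos ∈ B → 1 ≤ F t) :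
    (Nat.card ↥({π | π ⟨i, by omega⟩ ∈ B} ∩ twoSidedSet L) : ℝ) ≤
      2 * z⁻¹ ^ L * (opK z)^[i] F st0 := by
  classical
  have h0 := hz.pos
  refine (card_bad_le L i hi B).trans ?_
  have hpt : ∀ t : St, (if t.pos ∈ B then (1 : ℝ) else 0) * opP^[L - i] cor t ≤
      2 * z⁻¹ ^ (L - i) * (hfun z t * F t) := by
    intro t
    have h1 := opP_cor_le hz (L - i) t
    have h2 := opP_cor_nonneg (L - i) t
    have h3 : (if t.pos ∈ B then (1 : ℝ) else 0) ≤ F t := by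
      split_ifs with h
      · exact hF1 t h
      · exact hF0 t
    have := mul_le_mul h3 h1 h2 (hF0 t)
    linarith
  have h4 := opP_iter_mono hpt i st0
  rw [opP_iter_smul, opP_iter_h hz] at h4
  have h5 : 0 ≤ (opK z)^[i] F st0 := by
    have := opK_iter_mono hz (F := fun _ => 0) hF0 i st0
    rwa [opK_iter_const] at this
  have h6 := hfun_le_one hz st0
  have e : 2 * z⁻¹ ^ (L - i) * (z⁻¹ ^ i * (hfun z st0 * (opK z)^[i] F st0)) =
      2 * z⁻¹ ^ L * ((opK z)^[i] F st0 * hfun z st0) := by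
    have : z⁻¹ ^ L = z⁻¹ ^ (L - i) * z⁻¹ ^ i := by rw [← pow_add]; congr 1; omega
    rw [this]; ring
  rw [e] at h4
  refine le_trans (le_of_eq ?_) (h4.trans ?_)
  · congr!
  · have : (opK z)^[i] F st0 * hfun z st0 ≤ (opK z)^[i] F st0 :=
      mul_le_of_le_one_right h5 h6
    exact mul_le_mul_of_nonneg_left this (by positivity)

lemma cor_iter_ge (m : ℕ) : ∀ s : St, s.ph ≠ Ph.aw → s.d ≤ m → 1 ≤ opP^[m] cor s := by
  induction m with
  | zero =>
    intro s _ h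
    simp [cor, Nat.le_zero.1 h]
  | succ m ih =>
    intro s hs h
    rw [Function.iterate_succ_apply']
    have n1 := opP_cor_nonneg m s.fwd
    have n2 := opP_cor_nonneg m s.back
    have n3 := opP_cor_nonneg m s.away
    have hor : 1 ≤ opP^[m] cor s.fwd ∨ 1 ≤ opP^[m] cor s.back := by
      obtain ⟨b, X, Y, d, ph⟩ := s
      rcases d with _ | k
      · left
        apply ih
        · rw [fwd_ph]; exact Ph.noConfusion
        · rw [fwd_d]; exact Nat.zero_le _
      · right
        simp only at h
        apply ih
        · cases b <;> exact Ph.noConfusion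
        · cases b <;> (simp only [St.back]; omega)
    rcases hph : s.ph with _ | _ | _
    · rw [opP_fr hph]; rcases hor with h | h <;> linarith
    · rw [opP_bk hph]; rcases hor with h | h <;> linarith
    · exact absurd hph hs

lemma cor_iter_ge' (m : ℕ) (s : St) (h : s.d ≤ m) : 1 ≤ opP^[m + 1] cor s := by
  rw [Function.iterate_succ_apply']
  have n2 := opP_cor_nonneg m s.back
  have n3 := opP_cor_nonneg m s.away
  have : 1 ≤ opP^[m] cor s.fwd := by
    apply cor_iter_ge
    · rw [fwd_ph]; exact Ph.noConfusion
    · rw [fwd_d]; exact h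
  rcases hph : s.ph with _ | _ | _
  · rw [opP_fr hph]; linarith
  · rw [opP_bk hph]; linarith
  · rw [opP_aw hph]; linarith

lemma lower_aux {z : ℝ} (hz : IsRootZ z) (n m : ℕ) :
    z⁻¹ ^ n * (1 - 2 * Real.exp (-(omg z * (m + 1))) * (1 + n)) ≤
      (Nat.card ↥(twoSidedSet (n + (m + 1) + 1)) : ℝ) := by
  have h0 := hz.pos
  refine le_trans ?_ (card_twoSided_ge _)
  rw [Function.iterate_add_apply]
  have hpt : ∀ t : St, hfun z t * (1 + (-1) * (if ((m : ℝ) + 1) ≤ (t.d : ℝ) then 1 else 0)) ≤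
      opP^[m + 1] cor t := by
    intro t
    split_ifs with h
    · have := opP_cor_nonneg (m + 1) t
      linarith
    · have h1 : t.d ≤ m := by
        push Not at h
        have : t.d < m + 1 := by exact_mod_cast h
        omega
      have := cor_iter_ge' m t h1
      have := hfun_le_one hz t
      linarith
  refine le_trans ?_ (opP_iter_mono hpt n st1)
  rw [opP_iter_h hz, opK_iter_add, opK_iter_const, opK_iter_smul]
  have h1 := depth_tail hz n st1 (m + 1)
  have h2 : lyap z st1 = 1 := by simp [lyap, st1]
  have h3 : hfun z st1 = 1 := by simp [hfun, st1]
  rw [h2] at h1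
  rw [h3, one_mul]
  apply mul_le_mul_of_nonneg_left _ (by positivity)
  linarith

lemma tendsto_poly_exp (k : ℕ) (κ : ℝ) (hκ : 0 < κ) :
    Tendsto (fun L : ℕ => (1 + (L : ℝ)) ^ k * Real.exp (-(κ * L))) atTop (nhds 0) := by
  have h1 := Real.tendsto_pow_mul_exp_neg_atTop_nhds_zero k
  have h2 : Tendsto (fun L : ℕ => κ * (1 + (L : ℝ))) atTop atTop :=
    Tendsto.const_mul_atTop hκ (tendsto_atTop_add_const_left _ _ tendsto_natCast_atTop_atTop)
  have h3 := (h1.comp h2).const_mul (Real.exp κ * (κ ^ k)⁻¹)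
  rw [mul_zero] at h3
  refine h3.congr fun L => ?_
  simp only [Function.comp]
  have e : Real.exp (-(κ * (1 + L))) = (Real.exp κ)⁻¹ * Real.exp (-(κ * L)) := by
    rw [← Real.exp_neg, ← Real.exp_add]; congr 1; ring
  rw [e, mul_pow]
  have := Real.exp_pos κ
  field_simp

lemma lower_bound {z : ℝ} (hz : IsRootZ z) (η : ℝ) (hη : 0 < η) (hη1 : η ≤ 1) :
    ∀ᶠ L : ℕ in atTop, z⁻¹ ^ L * Real.exp (-(η * L)) ≤ (Nat.card ↥(twoSidedSet L) : ℝ) := by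
  have h0 := hz.pos
  have ho := omg_pos hz
  have ht := tendsto_poly_exp 1 (omg z * (η / 2)) (by positivity)
  have ev1 := ht.eventually (gt_mem_nhds (show (0 : ℝ) < 1 / 4 by norm_num))
  have ev2 : ∀ᶠ L : ℕ in atTop, 6 / η ≤ (L : ℝ) :=
    tendsto_natCast_atTop_atTop.eventually (eventually_ge_atTop _)
  filter_upwards [ev1, ev2] with L hL1 hL2
  have hL3 : 6 ≤ η * L := by
    rw [div_le_iff₀ hη] at hL2; linarith
  have hLpos : (0 : ℝ) ≤ L := Nat.cast_nonneg L
  obtain ⟨m, hm⟩ : ∃ m, m = ⌊η / 2 * L⌋₊ := ⟨_, rfl⟩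
  have hm1 : (m : ℝ) ≤ η / 2 * L := by rw [hm]; exact Nat.floor_le (by positivity)
  have hm2 : η / 2 * L < m + 1 := by rw [hm]; exact Nat.lt_floor_add_one _
  have hmL : m + 2 ≤ L := by
    have : (m : ℝ) + 2 ≤ L := by nlinarith
    exact_mod_cast this
  obtain ⟨n, rfl⟩ := Nat.exists_eq_add_of_le hmL
  have key := lower_aux hz n m
  rw [show n + (m + 1) + 1 = m + 2 + n by ring] at key
  refine le_trans ?_ key
  have e1 : Real.exp (-(omg z * (m + 1))) ≤
      Real.exp (-(omg z * (η / 2) * ((m + 2 + n : ℕ) : ℝ))) := by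
    apply Real.exp_le_exp.2
    nlinarith
  have e2 : 2 * Real.exp (-(omg z * (m + 1))) * (1 + n) ≤ 1 / 2 := by
    rw [pow_one] at hL1
    have : (n : ℝ) ≤ ((m + 2 + n : ℕ) : ℝ) := by exact_mod_cast (by omega)
    have h2 : Real.exp (-(omg z * (m + 1))) * (1 + n) ≤
        Real.exp (-(omg z * (η / 2) * ((m + 2 + n : ℕ) : ℝ))) * (1 + ((m + 2 + n : ℕ) : ℝ)) := by
      gcongr
    linarith
  have e3 : z⁻¹ ^ n * (1 / 2) ≤ z⁻¹ ^ n * (1 - 2 * Real.exp (-(omg z * (m + 1))) * (1 + n)) := by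
    apply mul_le_mul_of_nonneg_left _ (by positivity)
    linarith
  refine le_trans ?_ e3
  have hexp1 : (5 / 2 : ℝ) < Real.exp 1 := by
    have := Real.exp_one_gt_d9; linarith
  have e4 : z⁻¹ ^ (m + 2) ≤ Real.exp (m + 2) := by
    have : z⁻¹ ≤ Real.exp 1 := by
      have h5 : z⁻¹ ≤ (2 / 5)⁻¹ := inv_anti₀ (by norm_num) hz.2.1.le
      refine h5.trans ?_
      norm_num at hexp1 ⊢
      linarith
    calc z⁻¹ ^ (m + 2) ≤ Real.exp 1 ^ (m + 2) := by gcongr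
      _ = Real.exp (m + 2) := by rw [← Real.exp_nat_mul]; push_cast; rw [mul_one]
  have e5 : Real.exp (m + 2) * Real.exp (-(η * ((m + 2 + n : ℕ) : ℝ))) ≤ 1 / 2 := by
    rw [← Real.exp_add]
    have : (m : ℝ) + 2 + -(η * ((m + 2 + n : ℕ) : ℝ)) ≤ -1 := by linarith
    refine (Real.exp_le_exp.2 this).trans ?_
    rw [Real.exp_neg, one_div]
    exact inv_anti₀ (by norm_num) (by linarith)
  rw [pow_add, mul_comm (z⁻¹ ^ (m + 2)), mul_assoc]
  apply mul_le_mul_of_nonneg_left _ (by positivity)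
  exact (mul_le_mul_of_nonneg_right e4 (Real.exp_pos _).le).trans e5
/-! ### Conclusion -/

lemma interp_coord (p q c t δ L n : ℝ) (hL : 0 < L) (h1 : |p - c * n| ≤ δ * L)
    (h2 : t * L - n = 0 ∨ |q - c * (n + 1)| ≤ δ * L) (h3 : 0 ≤ t * L - n) (h4 : t * L - n ≤ 1) :
    |L⁻¹ * (p + (t * L - n) * (q - p)) - c * t| ≤ δ := by
  obtain ⟨f, hf⟩ : ∃ f, f = t * L - n := ⟨_, rfl⟩
  have ht : t = (f + n) / L := by rw [hf]; field_simp; ring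
  rw [← hf] at h2 h3 h4 ⊢
  have e : L⁻¹ * (p + f * (q - p)) - c * t =
      ((1 - f) * (p - c * n) + f * (q - c * (n + 1))) / L := by
    rw [ht]; field_simp; ring
  rw [e, abs_div, abs_of_pos hL, div_le_iff₀ hL]
  rcases h2 with h2 | h2
  · rw [h2]; simpa using h1
  · rw [abs_le] at h1 h2 ⊢
    constructor <;> nlinarith

lemma enorm2_le (v : ℝ × ℝ) (δ : ℝ) (h1 : |v.1| ≤ δ) (h2 : |v.2| ≤ δ) : enorm2 v ≤ 2 * δ := by
  have h0 : 0 ≤ δ := (abs_nonneg _).trans h1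
  unfold enorm2
  apply Real.sqrt_le_iff.2
  refine ⟨by linarith, ?_⟩
  rw [← sq_abs v.1, ← sq_abs v.2]
  nlinarith [abs_nonneg v.1, abs_nonneg v.2]

lemma good_path (L : ℕ) (hL : 0 < L) (π : Fin (L + 1) → ℤ × ℤ) (c δ : ℝ)
    (h : ∀ i : Fin (L + 1), |((π i).1 : ℝ) - c * (i : ℕ)| ≤ δ * L ∧
      |((π i).2 : ℝ) - c * (i : ℕ)| ≤ δ * L) :
    ∀ t ∈ Set.Icc (0 : ℝ) 1, enorm2 (rescaled L π t - (c * t) • evec 1) ≤ 2 * δ := by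
  intro t ht
  have hL' : (0 : ℝ) < L := by exact_mod_cast hL
  have htL : 0 ≤ t * L := mul_nonneg ht.1 hL'.le
  have hn1 := Nat.floor_le htL
  have hn2 := (Nat.lt_floor_add_one (t * L)).le
  have htL2 : t * L ≤ L := mul_le_of_le_one_left hL'.le ht.2
  have hnL : ⌊t * L⌋₊ ≤ L := by
    have : (⌊t * L⌋₊ : ℝ) ≤ L := hn1.trans htL2
    exact_mod_cast this
  have hp := h ⟨min ⌊t * L⌋₊ L, by omega⟩
  have hq := h ⟨min (⌊t * L⌋₊ + 1) L, by omega⟩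
  have hcase : t * L - (⌊t * L⌋₊ : ℝ) = 0 ∨ ⌊t * L⌋₊ + 1 ≤ L := by
    rcases Nat.lt_or_ge ⌊t * L⌋₊ L with h5 | h5
    · right; omega
    · left
      have : (L : ℝ) ≤ ⌊t * L⌋₊ := by exact_mod_cast h5
      linarith
  simp only at hp hq
  apply enorm2_le
  · have := interp_coord ((π ⟨min ⌊t * L⌋₊ L, by omega⟩).1 : ℝ)
      ((π ⟨min (⌊t * L⌋₊ + 1) L, by omega⟩).1 : ℝ) c t δ L (⌊t * L⌋₊ : ℝ) hL'
      (by have := hp.1; simp only [min_eq_left hnL] at this ⊢; exact this)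
      (by
        rcases hcase with h6 | h6
        · exact Or.inl h6
        · right
          have := hq.1
          simp only [min_eq_left h6] at this ⊢
          push_cast at this
          exact this) (by linarith) (by linarith)
    simpa [rescaled, toR, evec] using this
  · have := interp_coord ((π ⟨min ⌊t * L⌋₊ L, by omega⟩).2 : ℝ)
      ((π ⟨min (⌊t * L⌋₊ + 1) L, by omega⟩).2 : ℝ) c t δ L (⌊t * L⌋₊ : ℝ) hL'
      (by have := hp.2; simp only [min_eq_left hnL] at this ⊢; exact this)
      (by
        rcases hcase with h6 | h6
        · exact Or.inl h6
        · right
          have := hq.2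
          simp only [min_eq_left h6] at this ⊢
          push_cast at this
          exact this) (by linarith) (by linarith)
    simpa [rescaled, toR, evec] using this

/-- The set of positions far from the diagonal line at time `i`. -/
def farSet (c δ : ℝ) (L i : ℕ) : Set (ℤ × ℤ) :=
  {p | δ * L < |(p.1 : ℝ) - c * i| ∨ δ * L < |(p.2 : ℝ) - c * i|}

lemma bad_ncard (L : ℕ) (hL : 0 < L) (c δ R : ℝ)
    (hR : ∀ i : Fin (L + 1),
      (({π | π i ∈ farSet c δ L i} ∩ twoSidedSet L).ncard : ℝ) ≤ R) :
    ((twoSidedSet L).ncard : ℝ) - (L + 1) * R ≤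
      (({π | ∀ t ∈ Set.Icc (0 : ℝ) 1, enorm2 (rescaled L π t - (c * t) • evec 1) ≤ 2 * δ} ∩
        twoSidedSet L).ncard : ℝ) := by
  set A := {π : Fin (L + 1) → ℤ × ℤ | ∀ t ∈ Set.Icc (0 : ℝ) 1,
    enorm2 (rescaled L π t - (c * t) • evec 1) ≤ 2 * δ} with hA
  have hsub : twoSidedSet L ⊆ (A ∩ twoSidedSet L) ∪
      ⋃ i ∈ (Finset.univ : Finset (Fin (L + 1))),
        ({π | π i ∈ farSet c δ L i} ∩ twoSidedSet L) := by
    intro π hπ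
    by_cases hg : π ∈ A
    · exact Or.inl ⟨hg, hπ⟩
    · right
      by_contra hcon
      apply hg
      apply good_path L hL π c δ
      intro i
      by_contra hi
      apply hcon
      refine Set.mem_iUnion₂.2 ⟨i, Finset.mem_univ _, ?_, hπ⟩
      rw [not_and_or, not_le, not_le] at hi
      exact hi
  have hfin := twoSided_finite L
  have h1 := Set.ncard_le_ncard hsub ((hfin.subset Set.inter_subset_right).union
    (Set.Finite.biUnion (Finset.finite_toSet _) fun i _ => hfin.subset Set.inter_subset_right))
  have h2 := h1.trans (Set.ncard_union_le _ _)
  have h3 := Finset.set_ncard_biUnion_le (Finset.univ : Finset (Fin (L + 1)))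
    (fun i => ({π | π i ∈ farSet c δ L i} ∩ twoSidedSet L))
  have h4 : ((∑ i : Fin (L + 1), ({π | π i ∈ farSet c δ L i} ∩ twoSidedSet L).ncard : ℕ) : ℝ)
      ≤ (L + 1) * R := by
    push_cast
    refine (Finset.sum_le_sum fun i _ => hR i).trans (le_of_eq ?_)
    simp
  have h5 := h2.trans (Nat.add_le_add_left h3 _)
  have h6 : ((twoSidedSet L).ncard : ℝ) ≤ ((A ∩ twoSidedSet L).ncard : ℝ) +
      ((∑ i : Fin (L + 1), ({π | π i ∈ farSet c δ L i} ∩ twoSidedSet L).ncard : ℕ) : ℝ) := by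
    exact_mod_cast h5
  linarith

/-- **Concentration of the 2-sided walk along the diagonal.** There is a constant `c > 0`
such that for every `ε > 0`, the `P^+_{unif,L}`-probability that the rescaled 2-sided
prudent path stays within distance `ε` of the segment `t ↦ c t (1,1)` tends to `1`. -/
theorem two_sided_prudent_concentration :
    ∃ c : ℝ, 0 < c ∧ ∀ ε : ℝ, 0 < ε →
      Tendsto (fun L : ℕ =>
          probUnifPlus L {π |
            ∀ t ∈ Set.Icc (0 : ℝ) 1, enorm2 (rescaled L π t - (c * t) • evec 1) ≤ ε})
        atTop (nhds 1) := by
  obtain ⟨z, hz⟩ := exists_rootZ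
  have h0 := hz.pos
  obtain ⟨c, hc, hmain⟩ := both_tail hz
  refine ⟨c, hc, fun ε hε => ?_⟩
  obtain ⟨δ, hδ, rfl⟩ : ∃ δ : ℝ, 0 < δ ∧ ε = 2 * δ := ⟨ε / 2, by positivity, by ring⟩
  obtain ⟨κ, C, hκ, hC, hbad⟩ := hmain δ hδ
  have hη : 0 < min (κ / 2) 1 := by positivity
  have hlow := lower_bound hz (min (κ / 2) 1) hη (min_le_right _ _)
  have hlim := (tendsto_poly_exp 2 (κ / 2) (by positivity)).const_mul (2 * C)
  rw [mul_zero] at hlim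
  have hlim2 : Tendsto (fun L : ℕ => 1 - 2 * C * ((1 + (L : ℝ)) ^ 2 *
      Real.exp (-(κ / 2 * L)))) atTop (nhds 1) := by
    have := hlim.const_sub 1
    rwa [sub_zero] at this
  refine tendsto_of_tendsto_of_tendsto_of_le_of_le' hlim2 tendsto_const_nhds ?_ ?_
  · filter_upwards [hlow, eventually_gt_atTop 0] with L hL hL0
    unfold probUnifPlus
    rw [Nat.card_coe_set_eq] at hL
    rw [Nat.card_coe_set_eq, Nat.card_coe_set_eq]
    have hLn : (0 : ℝ) ≤ L := Nat.cast_nonneg L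
    have hpos : 0 < ((twoSidedSet L).ncard : ℝ) :=
      lt_of_lt_of_le (by positivity) hL
    rw [le_div_iff₀ hpos]
    have hR : ∀ i : Fin (L + 1), (({π | π i ∈ farSet c δ L i} ∩ twoSidedSet L).ncard : ℝ) ≤
        2 * z⁻¹ ^ L * (C * (1 + L) * Real.exp (-(κ * L))) := by
      intro i
      have hi : (i : ℕ) ≤ L := by omega
      have := bad_count hz L i hi (farSet c δ L i)
        (fun t => (if δ * L < |(t.pos.1 : ℝ) - c * (i : ℕ)| then 1 else 0) +
          (if δ * L < |(t.pos.2 : ℝ) - c * (i : ℕ)| then 1 else 0))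
        (fun t => by split_ifs <;> norm_num)
        (fun t ht => by
          rcases ht with ht | ht
          · rw [if_pos ht]; split_ifs <;> norm_num
          · rw [if_pos ht]; split_ifs <;> norm_num)
      rw [Nat.card_coe_set_eq] at this
      exact this.trans (mul_le_mul_of_nonneg_left (hbad L i hi) (by positivity))
    refine le_trans ?_ (bad_ncard L hL0 c δ _ hR)
    have e1 : Real.exp (-(κ * L)) ≤
        Real.exp (-(κ / 2 * L)) * Real.exp (-(min (κ / 2) 1 * L)) := by
      rw [← Real.exp_add]
      apply Real.exp_le_exp.2
      have := mul_le_mul_of_nonneg_right (min_le_left (κ / 2) 1) hLn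
      linarith
    have e2 : ((L : ℝ) + 1) * (2 * z⁻¹ ^ L * (C * (1 + L) * Real.exp (-(κ * L)))) ≤
        2 * C * ((1 + (L : ℝ)) ^ 2 * Real.exp (-(κ / 2 * L))) *
          (twoSidedSet L).ncard := by
      calc ((L : ℝ) + 1) * (2 * z⁻¹ ^ L * (C * (1 + L) * Real.exp (-(κ * L))))
          ≤ ((L : ℝ) + 1) * (2 * z⁻¹ ^ L * (C * (1 + L) *
            (Real.exp (-(κ / 2 * L)) * Real.exp (-(min (κ / 2) 1 * L))))) := by gcongr
        _ = 2 * C * ((1 + (L : ℝ)) ^ 2 * Real.exp (-(κ / 2 * L))) *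
          (z⁻¹ ^ L * Real.exp (-(min (κ / 2) 1 * L))) := by ring
        _ ≤ _ := by gcongr
    linarith
  · filter_upwards with L
    unfold probUnifPlus
    rw [Nat.card_coe_set_eq, Nat.card_coe_set_eq]
    apply div_le_one_of_le₀ _ (Nat.cast_nonneg _)
    exact_mod_cast Set.ncard_le_ncard Set.inter_subset_right (twoSided_finite L)
end

section
/- There exists α > 0 such that lim_{L→∞} P_{unif,L}( L − (T_1(π) + ⋯ + T_{γ_L(π)}(π)) ≥ α log L ) = 0. In words: with probability tending to 1, the final incomplete excursion of the uniform prudent walk has length at most α log L. -/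
open Filter Set

/-- `H_t(π)`: the height of the range of `π` up to time `t` (the time is clamped to `L`). -/
noncomputable def heightAt (L : ℕ) (π : Fin (L + 1) → ℤ × ℤ) (t : ℕ) : ℕ :=
  ((Finset.Iic (⟨min t L, by omega⟩ : Fin (L + 1))).image (fun i => (π i).2)).card

/-- `W_t(π)`: the width of the range of `π` up to time `t` (the time is clamped to `L`). -/
noncomputable def widthAt (L : ℕ) (π : Fin (L + 1) → ℤ × ℤ) (t : ℕ) : ℕ :=
  ((Finset.Iic (⟨min t L, by omega⟩ : Fin (L + 1))).image (fun i => (π i).1)).card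

open Classical in
/-- `min{t ∈ (a, L] : f(t) > f(t−1)} − 1`, or `none` if no such time exists. -/
noncomputable def nextTime (L : ℕ) (f : ℕ → ℕ) (a : ℕ) : Option ℕ :=
  if h : ∃ t : ℕ, a < t ∧ t ≤ L ∧ f (t - 1) < f t then some (Nat.find h - 1) else none

/-- The sequence `s_0 = 0 ≤ s_1 ≤ s_2 ≤ ⋯` of excursion endpoints of `π`
(`s_{2k+1} = ρ_{k+1}` is obtained from the height, `s_{2k+2} = υ_{k+1}` from the width);
`none` encodes the value `+∞`. -/
noncomputable def excTime (L : ℕ) (π : Fin (L + 1) → ℤ × ℤ) : ℕ → Option ℕ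
  | 0 => some 0
  | (i + 1) => (excTime L π i).bind fun a =>
      nextTime L (if Even i then heightAt L π else widthAt L π) a

/-- The largest index `i` with `s_i` finite. -/
noncomputable def lastIdx (L : ℕ) (π : Fin (L + 1) → ℤ × ℤ) : ℕ :=
  sSup {i : ℕ | (excTime L π i).isSome}

/-- The endpoint `s_i` of the `i`-th excursion, where an infinite value is replaced
by `L` (so that the final, possibly incomplete, segment runs up to time `L`). -/
noncomputable def excEnd (L : ℕ) (π : Fin (L + 1) → ℤ × ℤ) (i : ℕ) : ℕ :=
  (excTime L π i).getD L

/-- `T_i(π) = s_i − s_{i−1}`, the length of the `i`-th excursion. -/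
noncomputable def excLen (L : ℕ) (π : Fin (L + 1) → ℤ × ℤ) (i : ℕ) : ℕ :=
  excEnd L π i - excEnd L π (i - 1)

/-- The final segment of `π` can be completed into a full excursion by adding a single
extra step: some one-step prudent extension of `π` has a finite next excursion endpoint. -/
def finalSegmentCompletable (L : ℕ) (π : Fin (L + 1) → ℤ × ℤ) : Prop :=
  ∃ π' : Fin (L + 2) → ℤ × ℤ, (∀ i : Fin (L + 1), π' i.castSucc = π i) ∧
    π' ∈ prudentSet (L + 1) ∧ (excTime (L + 1) π' (lastIdx L π + 1)).isSome

open Classical in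
/-- `γ_L(π)`: the number of complete excursions of `π`, counting the final segment when it
can be completed by a single extra step. -/
noncomputable def numExc (L : ℕ) (π : Fin (L + 1) → ℤ × ℤ) : ℕ :=
  lastIdx L π + if finalSegmentCompletable L π then 1 else 0

/-- `E_i(π) = 1`: the `i`-th excursion crosses the range, i.e. a horizontal (odd `i`)
excursion traverses the full height of the range at its completion time, and a vertical
(even `i`) one the full width. -/
noncomputable def crossesRange (L : ℕ) (π : Fin (L + 1) → ℤ × ℤ) (i : ℕ) : Prop :=
  if i % 2 = 1 then
    ((π ⟨min (excEnd L π i) L, by omega⟩).2 -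
        (π ⟨min (excEnd L π (i - 1)) L, by omega⟩).2).natAbs =
      heightAt L π (excEnd L π i) - 1
  else
    ((π ⟨min (excEnd L π i) L, by omega⟩).1 -
        (π ⟨min (excEnd L π (i - 1)) L, by omega⟩).1).natAbs =
      widthAt L π (excEnd L π i) - 1

/-! ### Part 1: partially directed words -/

/-- Admissible letters of a partially directed word: `0` is a forward step, `1`/`-1` sideways. -/
def pdLetters : Finset ℤ := {0, 1, -1}

/-- Compatibility of two consecutive letters. -/
def okp (d e : ℤ) : Prop := d * e ≠ -1

/-- Partially directed words of length `n` that may follow the letter `d`. -/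
def Sset : ℕ → ℤ → Finset (List ℤ)
  | 0, _ => {[]}
  | n + 1, d => (pdLetters.filter (fun e => d * e ≠ -1)).biUnion
      fun e => (Sset n e).image (List.cons e)

lemma mem_Sset (n : ℕ) : ∀ (d : ℤ) (l : List ℤ), l ∈ Sset n d ↔
    l.length = n ∧ (∀ e ∈ l, e ∈ pdLetters) ∧ List.IsChain okp (d :: l) := by
  induction n with
  | zero =>
    intro d l
    simp only [Sset, Finset.mem_singleton]
    constructor
    · rintro rfl; simp
    · rintro ⟨h, _⟩; exact List.length_eq_zero_iff.mp h
  | succ n ih =>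
    intro d l
    simp only [Sset, Finset.mem_biUnion, Finset.mem_filter, Finset.mem_image]
    constructor
    · rintro ⟨e, ⟨he, hde⟩, l', hl', rfl⟩
      rw [ih] at hl'
      obtain ⟨h1, h2, h3⟩ := hl'
      refine ⟨by simp [h1], ?_, ?_⟩
      · intro x hx
        rcases List.mem_cons.mp hx with rfl | hx
        · exact he
        · exact h2 x hx
      · exact List.isChain_cons_cons.mpr ⟨hde, h3⟩
    · rintro ⟨h1, h2, h3⟩
      cases l with
      | nil => simp at h1
      | cons e l' =>
        rw [List.isChain_cons_cons] at h3
        refine ⟨e, ⟨h2 e (by simp), h3.1⟩, l', ?_, rfl⟩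
        rw [ih]
        exact ⟨by simpa using h1, fun x hx => h2 x (by simp [hx]), h3.2⟩

lemma mem_Sset_zero (n : ℕ) (l : List ℤ) : l ∈ Sset n 0 ↔
    l.length = n ∧ (∀ e ∈ l, e ∈ pdLetters) ∧ List.IsChain okp l := by
  rw [mem_Sset]
  have : List.IsChain okp ((0 : ℤ) :: l) ↔ List.IsChain okp l := by
    cases l with
    | nil => simp
    | cons e l => rw [List.isChain_cons_cons]; simp [okp]
  rw [this]

lemma card_Sset_succ (n : ℕ) (d : ℤ) : (Sset (n + 1) d).card =
    ∑ e ∈ pdLetters.filter (fun e => d * e ≠ -1), (Sset n e).card := by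
  rw [Sset, Finset.card_biUnion]
  · refine Finset.sum_congr rfl fun e _ => ?_
    exact Finset.card_image_of_injective _ (List.cons_injective)
  · intro a _ b _ hab
    rw [Function.onFun, Finset.disjoint_left]
    intro l hl hl'
    simp only [Finset.mem_image] at hl hl'
    obtain ⟨x, _, rfl⟩ := hl
    obtain ⟨y, _, hy⟩ := hl'
    simp at hy
    exact hab hy.1.symm

/-- The growth constant of partially directed words. -/
noncomputable def mu : ℝ := 1 + Real.sqrt 2

lemma mu_pos : 0 < mu := by unfold mu; positivity

lemma one_le_mu : 1 ≤ mu := by unfold mu; linarith [Real.sqrt_nonneg 2]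

lemma card_Sset_rec (n : ℕ) :
    (Sset (n + 1) 0).card = (Sset n 0).card + (Sset n 1).card + (Sset n (-1)).card ∧
    (Sset (n + 1) 1).card = (Sset n 0).card + (Sset n 1).card ∧
    (Sset (n + 1) (-1)).card = (Sset n 0).card + (Sset n (-1)).card := by
  have h0 : pdLetters.filter (fun e => (0:ℤ) * e ≠ -1) = {0, 1, -1} := by decide
  have h1 : pdLetters.filter (fun e => (1:ℤ) * e ≠ -1) = {0, 1} := by decide
  have h2 : pdLetters.filter (fun e => (-1:ℤ) * e ≠ -1) = {0, -1} := by decide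
  refine ⟨?_, ?_, ?_⟩
  · rw [card_Sset_succ, h0, Finset.sum_insert (by decide), Finset.sum_insert (by decide),
      Finset.sum_singleton]; ring
  · rw [card_Sset_succ, h1, Finset.sum_insert (by decide), Finset.sum_singleton]
  · rw [card_Sset_succ, h2, Finset.sum_insert (by decide), Finset.sum_singleton]

lemma card_Sset_bounds (n : ℕ) :
    (mu ^ n ≤ ((Sset n 0).card : ℝ) ∧ ((Sset n 0).card : ℝ) ≤ Real.sqrt 2 * mu ^ n) ∧
    (mu ^ n ≤ Real.sqrt 2 * ((Sset n 1).card : ℝ) ∧ ((Sset n 1).card : ℝ) ≤ mu ^ n) ∧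
    (mu ^ n ≤ Real.sqrt 2 * ((Sset n (-1)).card : ℝ) ∧ ((Sset n (-1)).card : ℝ) ≤ mu ^ n) := by
  have hs : Real.sqrt 2 * Real.sqrt 2 = 2 := Real.mul_self_sqrt (by norm_num)
  have hs1 : 1 ≤ Real.sqrt 2 := by
    rw [show (1:ℝ) = Real.sqrt 1 by simp]; exact Real.sqrt_le_sqrt (by norm_num)
  induction n with
  | zero => simp [Sset, hs1]
  | succ n ih =>
    obtain ⟨⟨a1, a2⟩, ⟨b1, b2⟩, ⟨c1, c2⟩⟩ := ih
    obtain ⟨h0, h1, h2⟩ := card_Sset_rec n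
    rw [h0, h1, h2]
    push_cast
    generalize ((Sset n 0).card : ℝ) = a at *
    generalize ((Sset n 1).card : ℝ) = b at *
    generalize ((Sset n (-1)).card : ℝ) = c at *
    have hm : mu ^ (n + 1) = mu ^ n + Real.sqrt 2 * mu ^ n := by rw [pow_succ, mu]; ring
    rw [hm]
    generalize mu ^ n = m at *
    generalize Real.sqrt 2 = s at *
    have e1 : s * (s * m) = 2 * m := by rw [← mul_assoc, hs]
    have e2 : s * (s * b) = 2 * b := by rw [← mul_assoc, hs]
    have e3 : s * (s * c) = 2 * c := by rw [← mul_assoc, hs]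
    have f2 : s * m ≤ s * (s * b) := by gcongr
    have f3 : s * m ≤ s * (s * c) := by gcongr
    have f1 : s * m ≤ s * a := by gcongr
    refine ⟨⟨?_, ?_⟩, ⟨?_, ?_⟩, ⟨?_, ?_⟩⟩ <;> nlinarith

open Classical in
/-- Partially directed words (head = latest letter) that end at their maximum. -/
noncomputable def Rset (n : ℕ) : Finset (List ℤ) :=
  (Sset n 0).filter (fun l => ∀ i : ℕ, 0 ≤ (l.take i).sum)

lemma mem_Rset (n : ℕ) (l : List ℤ) : l ∈ Rset n ↔
    (l.length = n ∧ (∀ e ∈ l, e ∈ pdLetters) ∧ List.IsChain okp l) ∧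
      ∀ i : ℕ, 0 ≤ (l.take i).sum := by
  classical
  unfold Rset
  rw [Finset.mem_filter, mem_Sset_zero]

/-- Splitting a word at its maximum. -/
lemma card_Sset_le_conv (n : ℕ) :
    (Sset n 0).card ≤ ∑ p ∈ Finset.HasAntidiagonal.antidiagonal n, (Rset p.1).card * (Rset p.2).card := by
  classical
  have : Sset n 0 ⊆ (Finset.HasAntidiagonal.antidiagonal n).biUnion fun p =>
      (Rset p.1 ×ˢ Rset p.2).image fun q => ((q.1.map (fun x => -x)).reverse ++ q.2) := by
    intro w hw
    rw [mem_Sset_zero] at hw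
    obtain ⟨hlen, hlet, hch⟩ := hw
    obtain ⟨i, hi, hmax⟩ := Finset.exists_max_image (Finset.range (n + 1))
      (fun i => (w.drop i).sum) ⟨0, by simp⟩
    have hi' : i ≤ n := by simpa [Nat.lt_succ_iff] using hi
    have hmax' : ∀ j, (w.drop j).sum ≤ (w.drop i).sum := by
      intro j
      by_cases hj : j ≤ n
      · exact hmax j (by simp; omega)
      · have : w.drop j = w.drop n := by
          rw [List.drop_eq_nil_of_le (by omega), List.drop_eq_nil_of_le (by omega)]
        rw [this]; exact hmax n (by simp)
    simp only [Finset.mem_biUnion, Finset.mem_image, Finset.mem_product, Finset.HasAntidiagonal.mem_antidiagonal]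
    refine ⟨(i, n - i), by simp; omega, (((w.take i).map (fun x => -x)).reverse, w.drop i),
      ⟨?_, ?_⟩, ?_⟩
    · rw [mem_Rset]
      refine ⟨⟨by simp; omega, ?_, ?_⟩, ?_⟩
      · intro e he
        simp only [List.mem_reverse, List.mem_map] at he
        obtain ⟨x, hx, rfl⟩ := he
        have := hlet x (List.mem_of_mem_take hx)
        simp only [pdLetters, Finset.mem_insert, Finset.mem_singleton] at this ⊢
        omega
      · rw [List.isChain_reverse, List.isChain_map]
        refine List.IsChain.imp ?_ (hch.take i)
        intro a b hab
        simp only [okp] at hab ⊢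
        intro h; apply hab; linarith [h]
      · intro k
        rw [List.take_reverse, List.sum_reverse, ← List.map_drop]
        have key : ∀ m, m ≤ i → ((w.take i).drop m).sum ≤ 0 := by
          intro m hm
          have h1 : w.drop m = (w.take i).drop m ++ w.drop i := by
            conv_lhs => rw [← List.take_append_drop i w]
            rw [List.drop_append_of_le_length (by simp; omega)]
          have h2 := hmax' m
          rw [h1, List.sum_append] at h2
          linarith
        have hneg : ∀ l : List ℤ, (l.map (fun x => -x)).sum = - l.sum := by
          intro l; induction l with
          | nil => simp
          | cons a l ih => simp [ih]; ring
        rw [hneg]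
        have := key (((w.take i).map (fun x => -x)).length - k) (by simp)
        linarith
    · rw [mem_Rset]
      refine ⟨⟨by simp [hlen], fun e he => hlet e (List.mem_of_mem_drop he), hch.drop i⟩, ?_⟩
      intro k
      have h1 : (w.drop i).sum = ((w.drop i).take k).sum + ((w.drop i).drop k).sum := by
        rw [← List.sum_append, List.take_append_drop]
      have h2 := hmax' (i + k)
      rw [List.drop_drop] at h1
      linarith
    · simp only [List.map_reverse, List.reverse_reverse, List.map_map]
      have : ((fun x : ℤ => -x) ∘ fun x => -x) = id := by funext x; simp
      rw [this, List.map_id, List.take_append_drop]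
  refine (Finset.card_le_card this).trans (Finset.card_biUnion_le.trans ?_)
  refine Finset.sum_le_sum fun p _ => Finset.card_image_le.trans ?_
  rw [Finset.card_product]

/-- Normalised counts of words ending at their maximum have divergent sum. -/
lemma Rset_sum_large (M : ℕ) :
    (M : ℝ) ≤ (∑ k ∈ Finset.range M, ((Rset k).card : ℝ) / mu ^ k) ^ 2 := by
  have hmu := mu_pos
  have h1 : ∀ n, (1 : ℝ) ≤ ∑ p ∈ Finset.HasAntidiagonal.antidiagonal n,
      (((Rset p.1).card : ℝ) / mu ^ p.1) * (((Rset p.2).card : ℝ) / mu ^ p.2) := by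
    intro n
    have ha := (card_Sset_bounds n).1.1
    have hb : ((Sset n 0).card : ℝ) ≤
        ∑ p ∈ Finset.HasAntidiagonal.antidiagonal n, ((Rset p.1).card : ℝ) * (Rset p.2).card := by
      exact_mod_cast card_Sset_le_conv n
    have hc : ∑ p ∈ Finset.HasAntidiagonal.antidiagonal n,
      (((Rset p.1).card : ℝ) / mu ^ p.1) * (((Rset p.2).card : ℝ) / mu ^ p.2) =
      (∑ p ∈ Finset.HasAntidiagonal.antidiagonal n, ((Rset p.1).card : ℝ) * (Rset p.2).card) / mu ^ n := by
      rw [Finset.sum_div]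
      refine Finset.sum_congr rfl fun p hp => ?_
      rw [div_mul_div_comm, ← pow_add, Finset.HasAntidiagonal.mem_antidiagonal.mp hp]
    rw [hc, le_div_iff₀ (by positivity)]
    linarith
  calc (M : ℝ) = ∑ n ∈ Finset.range M, (1 : ℝ) := by simp
    _ ≤ ∑ n ∈ Finset.range M, ∑ p ∈ Finset.HasAntidiagonal.antidiagonal n,
      (((Rset p.1).card : ℝ) / mu ^ p.1) * (((Rset p.2).card : ℝ) / mu ^ p.2) :=
        Finset.sum_le_sum fun n _ => h1 n
    _ ≤ ∑ p ∈ Finset.range M ×ˢ Finset.range M,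
      (((Rset p.1).card : ℝ) / mu ^ p.1) * (((Rset p.2).card : ℝ) / mu ^ p.2) := by
        rw [← Finset.sum_biUnion]
        · refine Finset.sum_le_sum_of_subset_of_nonneg ?_ ?_
          · intro p hp
            simp only [Finset.mem_biUnion, Finset.mem_range, Finset.HasAntidiagonal.mem_antidiagonal,
              Finset.mem_product] at hp ⊢
            obtain ⟨n, hn, hp⟩ := hp
            omega
          · intros; positivity
        · intro a _ b _ hab
          rw [Function.onFun, Finset.disjoint_left]
          intro p hp hp'
          rw [Finset.HasAntidiagonal.mem_antidiagonal] at hp hp'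
          exact hab (hp.symm.trans hp')
    _ = _ := by rw [sq, Finset.sum_mul_sum, Finset.sum_product]

/-! ### Part 2: prudent words (head = latest step) -/

/-- Prudent words, as lists of steps with the latest step at the head. -/
def Pr : List (ℤ × ℤ) → Prop
  | [] => True
  | d :: l => Pr l ∧ IsStep d ∧
      ∀ k : ℕ, 1 ≤ k → ∀ t, t <:+ l → l.sum + (k : ℤ) • d ≠ t.sum

/-- The endpoint of the word is the north-east corner of its range. -/
def NE (l : List (ℤ × ℤ)) : Prop :=
  ∀ t, t <:+ l → t.sum.1 ≤ l.sum.1 ∧ t.sum.2 ≤ l.sum.2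

/-- Embedding of letters of partially directed words as steps. -/
def emb (y : ℤ) : ℤ × ℤ := if y = 0 then (1, 0) else (0, y)

lemma emb_injective : Function.Injective emb := by
  intro a b h
  unfold emb at h
  split_ifs at h with h1 h2 h2 <;> simp_all

lemma mem_pdLetters (e : ℤ) : e ∈ pdLetters ↔ e = 0 ∨ e = 1 ∨ e = -1 := by
  simp [pdLetters]

lemma emb_snd (e : ℤ) : (emb e).2 = e := by
  unfold emb; split_ifs with h <;> simp [h]

lemma emb_eq_zero : emb 0 = (1, 0) := by simp [emb]

lemma emb_isStep (e : ℤ) (h : e ∈ pdLetters) : IsStep (emb e) := by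
  rw [mem_pdLetters] at h
  rcases h with rfl | rfl | rfl <;> simp [emb, IsStep]

lemma pr_ext_pd (l : List (ℤ × ℤ)) (hl : Pr l) (hne : NE l) (ys : List ℤ)
    (hlet : ∀ e ∈ ys, e ∈ pdLetters) (hch : List.IsChain okp ys) :
    Pr (ys.map emb ++ (1, 0) :: l) ∧
    (∀ t, t <:+ (ys.map emb ++ (1, 0) :: l) → t.sum.1 ≤ (ys.map emb ++ (1, 0) :: l).sum.1) ∧
    (∀ e ∈ pdLetters, List.IsChain okp (e :: ys) → ∀ t, t <:+ (ys.map emb ++ (1, 0) :: l) →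
      t.sum.1 = (ys.map emb ++ (1, 0) :: l).sum.1 →
      0 ≤ e * ((ys.map emb ++ (1, 0) :: l).sum.2 - t.sum.2)) ∧
    (∀ t, t <:+ (ys.map emb ++ (1, 0) :: l) → t <:+ l ∨
      ∃ zs, zs <:+ ys ∧ t.sum.2 = zs.sum + l.sum.2) := by
  induction ys with
  | nil =>
    simp only [List.map_nil, List.nil_append]
    refine ⟨⟨hl, by simp [IsStep], ?_⟩, ?_, ?_, ?_⟩
    · intro k hk t ht h
      have h1 := congrArg Prod.fst h
      have := (hne t ht).1
      simp at h1
      omega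
    · intro t ht
      rw [List.suffix_cons_iff] at ht
      rcases ht with rfl | ht
      · exact le_rfl
      · have := (hne t ht).1
        simp; omega
    · intro e he hc t ht hx
      rw [List.suffix_cons_iff] at ht
      rcases ht with rfl | ht
      · simp
      · have := (hne t ht).1
        simp at hx; omega
    · intro t ht
      rw [List.suffix_cons_iff] at ht
      rcases ht with rfl | ht
      · right; exact ⟨[], by simp, by simp⟩
      · exact Or.inl ht
  | cons e ys ih =>
    have hch' : List.IsChain okp ys := hch.tail
    obtain ⟨i1, i2, i3, i4⟩ := ih (fun x hx => hlet x (by simp [hx])) hch'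
    have hsum : (List.map emb ys ++ (1, 0) :: l).sum.2 = ys.sum + l.sum.2 := by
      have : ∀ zs : List ℤ, ((List.map emb zs).sum).2 = zs.sum := by
        intro zs
        induction zs with
        | nil => simp
        | cons a zs ih => simp [ih, emb_snd]
      simp [this]
    simp only [List.map_cons, List.cons_append]
    set w := List.map emb ys ++ (1, 0) :: l with hw
    have he : e ∈ pdLetters := hlet e (by simp)
    have i3e := i3 e he hch
    have he' := (mem_pdLetters e).mp he
    refine ⟨⟨i1, emb_isStep e he, ?_⟩, ?_, ?_, ?_⟩
    · intro k hk t ht h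
      have h1 := congrArg Prod.fst h
      have h2 := congrArg Prod.snd h
      have hx := i2 t ht
      rcases he' with rfl | rfl | rfl
      · simp [emb] at h1; omega
      · simp [emb] at h1 h2
        have := i3e t ht h1.symm
        omega
      · simp [emb] at h1 h2
        have := i3e t ht h1.symm
        omega
    · intro t ht
      rw [List.suffix_cons_iff] at ht
      rcases ht with rfl | ht
      · exact le_rfl
      · have := i2 t ht
        rcases he' with rfl | rfl | rfl <;> simp [emb] <;> omega
    · intro f hf hc t ht hx
      rw [List.suffix_cons_iff] at ht
      rcases ht with rfl | ht
      · simp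
      · have h2 := i2 t ht
        have hfe := (List.isChain_cons_cons.mp hc).1
        have hf' := (mem_pdLetters f).mp hf
        rcases he' with rfl | rfl | rfl
        · simp [emb] at hx; omega
        · simp [emb] at hx
          have := i3e t ht hx
          rcases hf' with rfl | rfl | rfl
          · simp
          · simp [emb]; omega
          · simp [okp] at hfe
        · simp [emb] at hx
          have := i3e t ht hx
          rcases hf' with rfl | rfl | rfl
          · simp
          · simp [okp] at hfe
          · simp [emb]; omega
    · intro t ht
      rw [List.suffix_cons_iff] at ht
      rcases ht with rfl | ht
      · right
        refine ⟨e :: ys, List.suffix_rfl, ?_⟩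
        simp [emb_snd, hsum]; ring
      · rcases i4 t ht with h | ⟨zs, hz, h⟩
        · exact Or.inl h
        · exact Or.inr ⟨zs, hz.trans (List.suffix_cons _ _), h⟩

lemma sum_map_emb_snd (zs : List ℤ) : ((List.map emb zs).sum).2 = zs.sum := by
  induction zs with
  | nil => simp
  | cons a zs ih => simp [ih, emb_snd]

lemma pr_ne_ext_R (l : List (ℤ × ℤ)) (hl : Pr l) (hne : NE l) (n : ℕ) (ys : List ℤ)
    (hys : ys ∈ Rset n) :
    Pr (ys.map emb ++ (1, 0) :: l) ∧ NE (ys.map emb ++ (1, 0) :: l) := by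
  rw [mem_Rset] at hys
  obtain ⟨⟨_, hlet, hch⟩, hpos⟩ := hys
  obtain ⟨h1, h2, _, h4⟩ := pr_ext_pd l hl hne ys hlet hch
  refine ⟨h1, fun t ht => ⟨h2 t ht, ?_⟩⟩
  have hs : (ys.map emb ++ (1, 0) :: l).sum.2 = ys.sum + l.sum.2 := by
    simp [sum_map_emb_snd]
  rw [hs]
  rcases h4 t ht with h | ⟨zs, ⟨us, rfl⟩, h⟩
  · have := (hne t h).2
    have h0 := hpos ys.length
    rw [List.take_length] at h0
    omega
  · have h0 := hpos us.length
    simp at h0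
    rw [h, List.sum_append]
    omega

/-- The exceptional block, `N W N E` in chronological order. -/
lemma pr_ne_ext_q (l : List (ℤ × ℤ)) (hl : Pr l) (hne : NE l) :
    Pr ((1, 0) :: (0, 1) :: (-1, 0) :: (0, 1) :: l) ∧
    NE ((1, 0) :: (0, 1) :: (-1, 0) :: (0, 1) :: l) := by
  constructor
  · refine ⟨⟨⟨⟨hl, ?_, ?_⟩, ?_, ?_⟩, ?_, ?_⟩, ?_, ?_⟩
    any_goals (simp [IsStep]; done)
    all_goals
      intro k hk t ht h
      try simp only [List.suffix_cons_iff] at ht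
      have h1 := congrArg Prod.fst h
      have h2 := congrArg Prod.snd h
      simp at h1 h2
    · have := hne t ht
      omega
    · rcases ht with rfl | ht
      · simp at h1 h2; omega
      · have := hne t ht
        omega
    · rcases ht with rfl | rfl | ht
      · simp at h1 h2; omega
      · simp at h1 h2
      · have := hne t ht
        omega
    · rcases ht with rfl | rfl | rfl | ht
      · simp at h1 h2; omega
      · simp at h1 h2
      · simp at h1 h2
      · have := hne t ht
        omega
  · intro t ht
    simp only [List.suffix_cons_iff] at ht
    rcases ht with rfl | rfl | rfl | rfl | ht
    · simp
    · simp
    · simp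
    · simp
    · have := hne t ht
      simp; omega

lemma pr_ne_ext_E (l : List (ℤ × ℤ)) (hl : Pr l) (hne : NE l) (n : ℕ) :
    Pr (List.replicate n (1, 0) ++ l) ∧ NE (List.replicate n (1, 0) ++ l) := by
  induction n with
  | zero => simpa using ⟨hl, hne⟩
  | succ n ih =>
    have := pr_ne_ext_R _ ih.1 ih.2 0 [] (by rw [mem_Rset]; simp)
    simpa [List.replicate_succ] using this

lemma Pr.steps : ∀ {l : List (ℤ × ℤ)}, Pr l → ∀ d ∈ l, IsStep d
  | [], _ => by simp
  | a :: l, h => by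
    intro d hd
    rcases List.mem_cons.mp hd with rfl | hd
    · exact h.2.1
    · exact Pr.steps h.1 d hd

lemma isStep_finite : {d : ℤ × ℤ | IsStep d}.Finite := by
  have : {d : ℤ × ℤ | IsStep d} ⊆ ({(1, 0), (-1, 0), (0, 1), (0, -1)} : Set (ℤ × ℤ)) := by
    intro d hd
    simpa [IsStep] using hd
  exact Set.Finite.subset (by simp) this

lemma stepWords_finite (n : ℕ) :
    {l : List (ℤ × ℤ) | l.length = n ∧ ∀ d ∈ l, IsStep d}.Finite := by
  induction n with
  | zero =>
    refine Set.Finite.subset (Set.finite_singleton []) ?_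
    rintro l ⟨h, _⟩
    exact List.length_eq_zero_iff.mp h
  | succ n ih =>
    refine Set.Finite.subset (Set.Finite.image2 List.cons isStep_finite ih) ?_
    rintro l ⟨h, h'⟩
    cases l with
    | nil => simp at h
    | cons a l =>
      exact ⟨a, h' a (by simp), l, ⟨by simpa using h, fun d hd => h' d (by simp [hd])⟩, rfl⟩

/-- Words that extend any prudent word ending at its north-east corner. -/
def Gset (n : ℕ) : Set (List (ℤ × ℤ)) :=
  {w | w.length = n ∧ ∀ l, Pr l → NE l → Pr (w ++ l)}

lemma Gset_finite (n : ℕ) : (Gset n).Finite := by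
  refine (stepWords_finite n).subset ?_
  rintro w ⟨h, h'⟩
  refine ⟨h, ?_⟩
  have := h' [] trivial (by intro t ht; rw [List.suffix_nil.mp ht]; simp)
  rw [List.append_nil] at this
  exact this.steps

/-- The same as a finset. -/
noncomputable def Gfin (n : ℕ) : Finset (List (ℤ × ℤ)) := (Gset_finite n).toFinset

lemma mem_Gfin (n : ℕ) (w : List (ℤ × ℤ)) : w ∈ Gfin n ↔
    w.length = n ∧ ∀ l, Pr l → NE l → Pr (w ++ l) := by
  unfold Gfin; rw [Set.Finite.mem_toFinset]; rfl

lemma Gfin_pos (n : ℕ) : 1 ≤ (Gfin n).card := by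
  refine Finset.card_pos.mpr ⟨List.replicate n (1, 0), ?_⟩
  rw [mem_Gfin]
  exact ⟨by simp, fun l h1 h2 => (pr_ne_ext_E l h1 h2 n).1⟩

/-- One block of an extension word. -/
def blk (ys : List ℤ) (rest : List (ℤ × ℤ)) : List (ℤ × ℤ) :=
  rest ++ ((1, 0) :: (0, 1) :: (-1, 0) :: (0, 1) :: (ys.map emb ++ [(1, 0)]))

lemma west_notMem (ys : List ℤ) : ((-1, 0) : ℤ × ℤ) ∉ (0, 1) :: (ys.map emb ++ [(1, 0)]) := by
  simp only [List.mem_cons, List.mem_append, List.mem_map, not_or]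
  refine ⟨by simp, ⟨?_, by simp⟩⟩
  rintro ⟨x, _, hx⟩
  unfold emb at hx
  split_ifs at hx <;> simp at hx

lemma append_cons_inj' {α : Type*} (w : α) : ∀ (a a' b b' : List α), w ∉ b → w ∉ b' →
    a ++ w :: b = a' ++ w :: b' → a = a' ∧ b = b'
  | [], [], b, b', _, _, h => by simpa using h
  | [], x :: a', b, b', hb, _, h => by
    simp only [List.nil_append, List.cons_append, List.cons.injEq] at h
    exact absurd (by rw [h.2]; simp) hb
  | x :: a, [], b, b', _, hb', h => by
    simp only [List.nil_append, List.cons_append, List.cons.injEq] at h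
    exact absurd (by rw [← h.2]; simp) hb'
  | x :: a, y :: a', b, b', hb, hb', h => by
    simp only [List.cons_append, List.cons.injEq] at h
    obtain ⟨h1, h2⟩ := append_cons_inj' w a a' b b' hb hb' h.2
    exact ⟨by rw [h.1, h1], h2⟩

lemma blk_inj (ys ys' : List ℤ) (r r' : List (ℤ × ℤ)) (h : blk ys r = blk ys' r') :
    ys = ys' ∧ r = r' := by
  unfold blk at h
  have h' : (r ++ [(1, 0), (0, 1)]) ++ (-1, 0) :: ((0, 1) :: (ys.map emb ++ [(1, 0)])) =
      (r' ++ [(1, 0), (0, 1)]) ++ (-1, 0) :: ((0, 1) :: (ys'.map emb ++ [(1, 0)])) := by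
    simpa using h
  obtain ⟨h1, h2⟩ := append_cons_inj' _ _ _ _ _ (west_notMem ys) (west_notMem ys') h'
  refine ⟨?_, List.append_cancel_right h1⟩
  have h3 := List.append_cancel_right (List.cons.inj h2).2
  exact List.map_injective_iff.mpr emb_injective h3

lemma Gfin_rec (M n : ℕ) (hn : M + 5 ≤ n) :
    ∑ m ∈ Finset.range M, (Rset m).card * (Gfin (n - 5 - m)).card ≤ (Gfin n).card := by
  classical
  have : ∑ m ∈ Finset.range M, (Rset m).card * (Gfin (n - 5 - m)).card =
      ((Finset.range M).sigma fun m => Rset m ×ˢ Gfin (n - 5 - m)).card := by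
    rw [Finset.card_sigma]
    simp [Finset.card_product]
  rw [this]
  refine Finset.card_le_card_of_injOn (fun p => blk p.2.1 p.2.2) ?_ ?_
  · rintro ⟨m, ys, r⟩ h
    simp only [Finset.coe_sigma, Set.mem_sigma_iff, Finset.mem_coe, Finset.mem_range,
      Finset.mem_product] at h
    obtain ⟨hm, hR, hr⟩ := h
    rw [mem_Gfin] at hr
    simp only [Finset.mem_coe]
    rw [mem_Gfin]
    have hlen := ((mem_Rset m ys).mp hR).1.1
    refine ⟨by simp [blk, hlen, hr.1]; omega, ?_⟩
    intro l hl hne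
    obtain ⟨a1, a2⟩ := pr_ne_ext_R l hl hne m ys hR
    obtain ⟨b1, b2⟩ := pr_ne_ext_q _ a1 a2
    have := hr.2 _ b1 b2
    simpa [blk] using this
  · rintro ⟨m, ys, r⟩ h ⟨m', ys', r'⟩ h' heq
    simp only [Finset.coe_sigma, Set.mem_sigma_iff, Finset.mem_coe, Finset.mem_range,
      Finset.mem_product] at h h'
    obtain ⟨h1, h2⟩ := blk_inj _ _ _ _ heq
    simp only at h1 h2
    have hlen := ((mem_Rset m ys).mp h.2.1).1.1
    have hlen' := ((mem_Rset m' ys').mp h'.2.1).1.1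
    have : m = m' := by rw [← hlen, ← hlen', h1]
    subst this
    subst h1
    subst h2
    rfl

/-- Exponential gain of extension words over partially directed words. -/
lemma growth : ∃ c lam : ℝ, 0 < c ∧ 1 < lam ∧ ∀ n, c * (mu * lam) ^ n ≤ ((Gfin n).card : ℝ) := by
  have hmu := mu_pos
  have hmu1 := one_le_mu
  obtain ⟨M, hM⟩ := exists_nat_ge ((2 * mu ^ 5) ^ 2)
  have hr0 : 0 ≤ ∑ k ∈ Finset.range M, ((Rset k).card : ℝ) / mu ^ k :=
    Finset.sum_nonneg fun _ _ => by positivity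
  have hr : 2 * mu ^ 5 ≤ ∑ k ∈ Finset.range M, ((Rset k).card : ℝ) / mu ^ k :=
    le_of_sq_le_sq (hM.trans (Rset_sum_large M)) hr0
  set D := M + 5 with hD
  set lam : ℝ := (2 : ℝ) ^ ((1 : ℝ) / D) with hlam
  have hDpos : (0 : ℝ) < D := by rw [hD]; positivity
  have hlam1 : 1 < lam := Real.one_lt_rpow (by norm_num) (by positivity)
  have hlamD : lam ^ D = 2 := by
    rw [hlam, ← Real.rpow_natCast, ← Real.rpow_mul (by norm_num)]
    rw [one_div, inv_mul_cancel₀ hDpos.ne', Real.rpow_one]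
  have hnu1 : 1 ≤ mu * lam := by nlinarith
  have hnu0 : 0 < mu * lam := by linarith
  refine ⟨((mu * lam) ^ D)⁻¹, lam, by positivity, hlam1, ?_⟩
  intro n
  induction n using Nat.strong_induction_on with
  | _ n ih =>
    by_cases hn : n < D
    · have h1 : (1 : ℝ) ≤ ((Gfin n).card : ℝ) := by exact_mod_cast Gfin_pos n
      have h2 : (mu * lam) ^ n ≤ (mu * lam) ^ D := pow_le_pow_right₀ hnu1 hn.le
      have h3 : ((mu * lam) ^ D)⁻¹ * (mu * lam) ^ n ≤ 1 := by
        rw [inv_mul_le_iff₀ (by positivity)]; linarith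
      linarith
    · push Not at hn
      set c := ((mu * lam) ^ D)⁻¹ with hc
      have hc0 : 0 < c := by positivity
      have hrec : ∑ m ∈ Finset.range M, ((Rset m).card : ℝ) * ((Gfin (n - 5 - m)).card : ℝ) ≤
          ((Gfin n).card : ℝ) := by exact_mod_cast Gfin_rec M n hn
      refine le_trans ?_ hrec
      have hterm : ∀ m ∈ Finset.range M,
          (c * (mu * lam) ^ n / (2 * mu ^ 5)) * (((Rset m).card : ℝ) / mu ^ m) ≤
          ((Rset m).card : ℝ) * ((Gfin (n - 5 - m)).card : ℝ) := by
        intro m hm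
        rw [Finset.mem_range] at hm
        have h1 := ih (n - 5 - m) (by omega)
        have h2 : (mu * lam) ^ n = (mu * lam) ^ (n - 5 - m) * (mu ^ 5 * mu ^ m * lam ^ (5 + m)) := by
          rw [← pow_add mu, ← mul_pow, ← pow_add]; congr 1; omega
        have h3 : lam ^ (5 + m) ≤ 2 := by
          rw [← hlamD]; exact pow_le_pow_right₀ hlam1.le (by omega)
        have h4 : c * (mu * lam) ^ n / (2 * mu ^ 5) / mu ^ m ≤ c * (mu * lam) ^ (n - 5 - m) := by
          rw [div_div, div_le_iff₀ (by positivity), h2]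
          have : 0 ≤ c * (mu * lam) ^ (n - 5 - m) * (mu ^ 5 * mu ^ m) := by positivity
          nlinarith
        calc (c * (mu * lam) ^ n / (2 * mu ^ 5)) * (((Rset m).card : ℝ) / mu ^ m)
            = ((Rset m).card : ℝ) * (c * (mu * lam) ^ n / (2 * mu ^ 5) / mu ^ m) := by ring
          _ ≤ _ := by gcongr; exact h4.trans h1
      refine le_trans ?_ (Finset.sum_le_sum hterm)
      rw [← Finset.mul_sum]
      rw [div_mul_eq_mul_div, le_div_iff₀ (by positivity)]
      gcongr

/-! ### Part 3: structure of excursions -/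

/-- Prudence, in coordinates. -/
structure PathOK (x y : ℕ → ℤ) (L : ℕ) : Prop where
  step : ∀ i < L, ((x (i + 1) = x i + 1 ∨ x (i + 1) = x i - 1) ∧ y (i + 1) = y i) ∨
    ((y (i + 1) = y i + 1 ∨ y (i + 1) = y i - 1) ∧ x (i + 1) = x i)
  pru : ∀ i < L, ∀ k : ℕ, 1 ≤ k → ∀ j ≤ i,
    ¬ (x i + k * (x (i + 1) - x i) = x j ∧ y i + k * (y (i + 1) - y i) = y j)

lemma PathOK.swap {x y : ℕ → ℤ} {L : ℕ} (h : PathOK x y L) : PathOK y x L where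
  step i hi := by have := h.step i hi; tauto
  pru i hi k hk j hj := by have := h.pru i hi k hk j hj; tauto

/-- The value at time `t + 1` is new. -/
def newv (x : ℕ → ℤ) (t : ℕ) : Prop := ∀ i ≤ t, x i ≠ x (t + 1)

/-- The value at time `a` is extreme among the values up to time `a`. -/
def Extr (x : ℕ → ℤ) (a : ℕ) : Prop := (∀ i ≤ a, x i ≤ x a) ∨ (∀ i ≤ a, x a ≤ x i)

lemma newv_sign {x y : ℕ → ℤ} {L : ℕ} (h : PathOK x y L) {t : ℕ} (ht : t < L) (hn : newv x t) :
    ∃ s : ℤ, (s = 1 ∨ s = -1) ∧ x (t + 1) = x t + s ∧ y (t + 1) = y t ∧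
      ∀ i ≤ t, s * x i ≤ s * x t := by
  have h0 := hn t le_rfl
  have key : ∀ s : ℤ, (s = 1 ∨ s = -1) → x (t + 1) = x t + s → ∀ i ≤ t, s * x i ≤ s * x t := by
    intro s hs hx
    have aux : ∀ j, j ≤ t → s * x (t - j) ≤ s * x t := by
      intro j
      induction j with
      | zero => intro _; simp
      | succ j ih =>
        intro hj
        have h1 := ih (by omega)
        have h2 := h.step (t - (j + 1)) (by omega)
        have h3 := hn (t - (j + 1)) (by omega)
        rw [show t - (j + 1) + 1 = t - j by omega] at h2
        rcases hs with rfl | rfl <;> omega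
    intro i hi
    have := aux (t - i) (by omega)
    rwa [show t - (t - i) = i by omega] at this
  rcases h.step t ht with ⟨h1 | h1, h2⟩ | ⟨_, h2⟩
  · exact ⟨1, Or.inl rfl, h1, h2, key 1 (Or.inl rfl) h1⟩
  · exact ⟨-1, Or.inr rfl, by omega, h2, key (-1) (Or.inr rfl) (by omega)⟩
  · omega

lemma newv_extr {x y : ℕ → ℤ} {L : ℕ} (h : PathOK x y L) {t : ℕ} (ht : t < L) (hn : newv x t) :
    Extr x t := by
  obtain ⟨s, hs, _, _, h4⟩ := newv_sign h ht hn
  rcases hs with rfl | rfl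
  · left; intro i hi; have := h4 i hi; omega
  · right; intro i hi; have := h4 i hi; omega

lemma excursion {x y : ℕ → ℤ} {L : ℕ} (h : PathOK x y L) {a n : ℕ} (han : a < n) (hn : n ≤ L)
    (hx : newv x a) (hy : ∀ t, a ≤ t → t < n → ¬ newv y t) :
    ∃ s : ℤ, (s = 1 ∨ s = -1) ∧
      (∀ t, a ≤ t → t < n → (x (t + 1) = x t + s ∧ y (t + 1) = y t) ∨
        (x (t + 1) = x t ∧ (y (t + 1) = y t + 1 ∨ y (t + 1) = y t - 1))) ∧
      (∀ i ≤ a, s * x i ≤ s * x a) := by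
  obtain ⟨s, hs, h1, h2, h3⟩ := newv_sign h (by omega : a < L) hx
  have hrow : ∀ t, t ≤ n → ∃ i ≤ a, y i = y t := by
    intro t
    induction t using Nat.strong_induction_on with
    | _ t ih =>
      intro htn
      by_cases hta : t ≤ a
      · exact ⟨t, hta, rfl⟩
      · have := hy (t - 1) (by omega) (by omega)
        unfold newv at this
        push Not at this
        obtain ⟨i, hi, hi'⟩ := this
        rw [show t - 1 + 1 = t by omega] at hi'
        obtain ⟨j, hj, hj'⟩ := ih i (by omega) (by omega)
        exact ⟨j, hj, hj'.trans hi'⟩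
  have main : ∀ m, a + 1 + m ≤ n →
      (∀ t, a ≤ t → t < a + 1 + m → (x (t + 1) = x t + s ∧ y (t + 1) = y t) ∨
        (x (t + 1) = x t ∧ (y (t + 1) = y t + 1 ∨ y (t + 1) = y t - 1))) ∧
      s * x a < s * x (a + 1 + m) := by
    intro m
    induction m with
    | zero =>
      intro _
      refine ⟨?_, ?_⟩
      · intro t ht ht'
        have : t = a := by omega
        subst this
        exact Or.inl ⟨h1, h2⟩
      · rw [add_zero, h1]
        rcases hs with rfl | rfl <;> omega
    | succ m ih =>
      intro hm
      obtain ⟨i1, i2⟩ := ih (by omega)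
      have hst := h.step (a + 1 + m) (by omega)
      have hgood : (x (a + 1 + m + 1) = x (a + 1 + m) + s ∧ y (a + 1 + m + 1) = y (a + 1 + m)) ∨
        (x (a + 1 + m + 1) = x (a + 1 + m) ∧ (y (a + 1 + m + 1) = y (a + 1 + m) + 1 ∨
          y (a + 1 + m + 1) = y (a + 1 + m) - 1)) := by
        by_cases hbad : x (a + 1 + m + 1) = x (a + 1 + m) - s ∧ y (a + 1 + m + 1) = y (a + 1 + m)
        · exfalso
          obtain ⟨j, hj, hj'⟩ := hrow (a + 1 + m) (by omega)
          have hlt := h3 j hj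
          have hp := h.pru (a + 1 + m) (by omega) (s * (x (a + 1 + m) - x j)).toNat
            (by rw [mul_sub]; omega) j (by omega)
          apply hp
          have hk : ((s * (x (a + 1 + m) - x j)).toNat : ℤ) = s * (x (a + 1 + m) - x j) :=
            Int.toNat_of_nonneg (by rw [mul_sub]; omega)
          rw [hk, hbad.1, hbad.2, hj']
          refine ⟨?_, by ring⟩
          rcases hs with rfl | rfl <;> ring
        · rcases hs with rfl | rfl <;> omega
      refine ⟨?_, ?_⟩
      · intro t ht ht'
        by_cases htm : t < a + 1 + m
        · exact i1 t ht htm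
        · have : t = a + 1 + m := by omega
          subst this
          exact hgood
      · rw [show a + 1 + (m + 1) = a + 1 + m + 1 by ring]
        rcases hgood with ⟨g, _⟩ | ⟨g, _⟩
        · rw [g]; rcases hs with rfl | rfl <;> omega
        · rw [g]; exact i2
  refine ⟨s, hs, ?_, h3⟩
  have := (main (n - a - 1) (by omega)).1
  intro t ht ht'
  exact this t ht (by omega)

lemma extr_step {x y : ℕ → ℤ} {L : ℕ} (h : PathOK x y L) {a b : ℕ} (hab : a ≤ b) (hb : b < L)
    (hxa : Extr x a) (hnx : a < b → newv x a) (hy : ∀ t, a ≤ t → t < b → ¬ newv y t)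
    (hyb : newv y b) : Extr x b ∧ Extr y b := by
  refine ⟨?_, newv_extr h.swap hb hyb⟩
  rcases hab.eq_or_lt with rfl | hlt
  · exact hxa
  · obtain ⟨s, hs, h1, h2⟩ := excursion h hlt hb.le (hnx hlt) hy
    have hmono : ∀ m, a + m ≤ b → ∀ i ≤ a + m, s * x i ≤ s * x (a + m) := by
      intro m
      induction m with
      | zero => intro _; simpa using h2
      | succ m ih =>
        intro hm i hi
        have ih' := ih (by omega)
        have hst := h1 (a + m) (by omega) (by omega)
        have hge : s * x (a + m) ≤ s * x (a + m + 1) := by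
          rcases hst with ⟨g, _⟩ | ⟨g, _⟩
          · rw [g]; rcases hs with rfl | rfl <;> omega
          · rw [g]
        rw [← add_assoc]
        by_cases him : i ≤ a + m
        · exact (ih' i him).trans hge
        · have : i = a + m + 1 := by omega
          rw [this]
    have hfin := hmono (b - a) (by omega)
    rw [show a + (b - a) = b by omega] at hfin
    rcases hs with rfl | rfl
    · left; intro i hi; have := hfin i hi; omega
    · right; intro i hi; have := hfin i hi; omega

/-- Path as a function on `ℕ` (clamped). -/
def pp (L : ℕ) (π : Fin (L + 1) → ℤ × ℤ) (t : ℕ) : ℤ × ℤ := π ⟨min t L, by omega⟩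

lemma pathOK_of_prudent {L : ℕ} {π : Fin (L + 1) → ℤ × ℤ} (h : π ∈ prudentSet L) :
    PathOK (fun t => (pp L π t).1) (fun t => (pp L π t).2) L := by
  obtain ⟨_, h⟩ := h
  have e1 : ∀ i (hi : i < L), π (Fin.castSucc ⟨i, hi⟩) = pp L π i := by
    intro i hi; unfold pp; congr 1; ext; simp; omega
  have e2 : ∀ i (hi : i < L), π (Fin.succ ⟨i, hi⟩) = pp L π (i + 1) := by
    intro i hi; unfold pp; congr 1; ext; simp; omega
  constructor
  · intro i hi
    have := (h ⟨i, hi⟩).1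
    rw [e1, e2] at this
    simp only [IsStep, Prod.ext_iff, Prod.fst_sub, Prod.snd_sub] at this
    omega
  · intro i hi k hk j hj
    have := (h ⟨i, hi⟩).2 k hk ⟨min j L, by omega⟩ (by
      rw [Fin.le_def]; simp; omega)
    rw [e1, e2] at this
    intro h'
    apply this
    change _ = pp L π j
    ext
    · simpa using h'.1
    · simpa using h'.2

lemma card_image_lt_iff (L : ℕ) (g : ℕ → ℤ) (t : ℕ) (ht : t < L) :
    ((Finset.Iic (⟨min t L, by omega⟩ : Fin (L + 1))).image (fun i : Fin (L + 1) => g i)).card <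
      ((Finset.Iic (⟨min (t + 1) L, by omega⟩ : Fin (L + 1))).image (fun i : Fin (L + 1) => g i)).card ↔
      newv g t := by
  have e : ∀ s, s ≤ L → (Finset.Iic (⟨min s L, by omega⟩ : Fin (L + 1))).image
      (fun i : Fin (L + 1) => g i) = (Finset.range (s + 1)).image g := by
    intro s hs
    ext v
    simp only [Finset.mem_image, Finset.mem_Iic, Finset.mem_range]
    constructor
    · rintro ⟨i, hi, rfl⟩
      rw [Fin.le_def] at hi
      exact ⟨i, by simp at hi; omega, rfl⟩
    · rintro ⟨i, hi, rfl⟩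
      exact ⟨⟨i, by omega⟩, by rw [Fin.le_def]; simp; omega, rfl⟩
  rw [e t ht.le, e (t + 1) ht, Finset.range_add_one (n := t + 1), Finset.image_insert]
  constructor
  · intro h i hi heq
    rw [Finset.insert_eq_of_mem] at h
    · exact lt_irrefl _ h
    · rw [Finset.mem_image]; exact ⟨i, by simp; omega, heq⟩
  · intro h
    rw [Finset.card_insert_of_notMem]
    · omega
    · rw [Finset.mem_image]
      rintro ⟨i, hi, hi'⟩
      exact h i (by simp at hi; omega) hi'

lemma pp_fin (L : ℕ) (π : Fin (L + 1) → ℤ × ℤ) (i : Fin (L + 1)) : pp L π i = π i := by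
  unfold pp; congr 1; ext; simp; omega

lemma height_lt_iff (L : ℕ) (π : Fin (L + 1) → ℤ × ℤ) (t : ℕ) (ht : t < L) :
    heightAt L π t < heightAt L π (t + 1) ↔ newv (fun t => (pp L π t).2) t := by
  rw [← card_image_lt_iff L _ t ht]
  simp only [heightAt, pp_fin]

lemma width_lt_iff (L : ℕ) (π : Fin (L + 1) → ℤ × ℤ) (t : ℕ) (ht : t < L) :
    widthAt L π t < widthAt L π (t + 1) ↔ newv (fun t => (pp L π t).1) t := by
  rw [← card_image_lt_iff L _ t ht]
  simp only [widthAt, pp_fin]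

lemma nextTime_some {L : ℕ} {f : ℕ → ℕ} {a b : ℕ} (h : nextTime L f a = some b) :
    a ≤ b ∧ b < L ∧ f b < f (b + 1) ∧ ∀ t, a ≤ t → t < b → ¬ f t < f (t + 1) := by
  classical
  unfold nextTime at h
  split_ifs at h with hex
  have hb : Nat.find hex - 1 = b := by simpa using h
  obtain ⟨h1, h2, h3⟩ := Nat.find_spec hex
  have hb' : Nat.find hex = b + 1 := by omega
  rw [hb'] at h1 h2 h3
  refine ⟨by omega, by omega, by simpa using h3, ?_⟩
  intro t ht htb hlt
  have := Nat.find_min hex (m := t + 1) (by omega)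
  exact this ⟨by omega, by omega, by simpa using hlt⟩

lemma nextTime_none {L : ℕ} {f : ℕ → ℕ} {a : ℕ} (h : nextTime L f a = none) :
    ∀ t, a ≤ t → t < L → ¬ f t < f (t + 1) := by
  classical
  unfold nextTime at h
  split_ifs at h with hex
  intro t ht htL hlt
  exact hex ⟨t + 1, by omega, by omega, by simpa using hlt⟩

/-- Invariant of the excursion endpoints. -/
structure ExcInv (x y : ℕ → ℤ) (L i a : ℕ) : Prop where
  ex : Extr x a
  ey : Extr y a
  le : i ≤ a + 1
  aL : a ≤ L
  nw : 1 ≤ i → a < L ∧ (if Even i then newv x a else newv y a)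
  z : i = 0 → a = 0

lemma excTime_inv {L : ℕ} {π : Fin (L + 1) → ℤ × ℤ} (h : π ∈ prudentSet L) :
    ∀ i a, excTime L π i = some a →
      ExcInv (fun t => (pp L π t).1) (fun t => (pp L π t).2) L i a := by
  have hP := pathOK_of_prudent h
  have hH := height_lt_iff L π
  have hW := width_lt_iff L π
  set x := fun t => (pp L π t).1
  set y := fun t => (pp L π t).2
  intro i
  induction i with
  | zero =>
    intro a ha
    simp only [excTime, Option.some.injEq] at ha
    subst ha
    exact ⟨by left; intro i hi; rw [Nat.le_zero.mp hi], by left; intro i hi; rw [Nat.le_zero.mp hi],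
      by omega, by omega, by omega, by omega⟩
  | succ i ih =>
    intro b hb
    simp only [excTime, Option.bind_eq_some_iff] at hb
    obtain ⟨a, ha, hb⟩ := hb
    have I := ih a ha
    obtain ⟨h1, h2, h3, h4⟩ := nextTime_some hb
    by_cases hi : Even i
    · have hi' : ¬ Even (i + 1) := by rw [Nat.even_add_one]; simpa using hi
      simp only [hi, if_true] at h3 h4
      have h3' := (hH b h2).mp h3
      have h4' : ∀ t, a ≤ t → t < b → ¬ newv y t := fun t ht htb hn =>
        h4 t ht htb ((hH t (by omega)).mpr hn)
      have hnx : a < b → newv x a := by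
        intro hab
        rcases Nat.eq_zero_or_pos i with h0 | hpos
        · have ha0 := I.z h0
          subst ha0
          have hst := hP.step 0 (by omega)
          have hny := h4' 0 le_rfl hab
          intro j hj
          rw [Nat.le_zero.mp hj]
          intro heq
          apply hny
          intro j hj
          rw [Nat.le_zero.mp hj]
          omega
        · have := (I.nw hpos).2
          simpa [hi] using this
      obtain ⟨e1, e2⟩ := extr_step hP h1 h2 I.ex hnx h4' h3'
      refine ⟨e1, e2, ?_, h2.le, fun _ => ⟨h2, by simpa [hi'] using h3'⟩, by omega⟩
      have := I.le
      rcases Nat.eq_zero_or_pos i with h0 | hpos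
      · omega
      · have hn := (I.nw hpos).2
        simp only [hi, if_true] at hn
        have hne : a ≠ b := by
          rintro rfl
          have g1 := hn a le_rfl
          have g2 := h3' a le_rfl
          have := hP.step a h2
          omega
        omega
    · have hi' : Even (i + 1) := by rw [Nat.even_add_one]; exact hi
      have hpos : 1 ≤ i := by
        rcases Nat.eq_zero_or_pos i with h0 | hpos
        · subst h0; simp at hi
        · exact hpos
      simp only [hi, if_false] at h3 h4
      have h3' := (hW b h2).mp h3
      have h4' : ∀ t, a ≤ t → t < b → ¬ newv x t := fun t ht htb hn =>
        h4 t ht htb ((hW t (by omega)).mpr hn)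
      have hn := (I.nw hpos).2
      simp only [hi, if_false] at hn
      obtain ⟨e1, e2⟩ := extr_step hP.swap h1 h2 I.ey (fun _ => hn) h4' h3'
      refine ⟨e2, e1, ?_, h2.le, fun _ => ⟨h2, by simpa [hi'] using h3'⟩, by omega⟩
      have := I.le
      have hne : a ≠ b := by
        rintro rfl
        have g1 := hn a le_rfl
        have g2 := h3' a le_rfl
        have := hP.step a h2
        omega
      omega

/-- The final segment is a partially directed word, started from a corner. -/
def FinalSeg (x y : ℕ → ℤ) (L a : ℕ) : Prop :=
  ∃ s : ℤ, (s = 1 ∨ s = -1) ∧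
      ∀ t, a ≤ t → t < L → (x (t + 1) = x t + s ∧ y (t + 1) = y t) ∨
        (x (t + 1) = x t ∧ (y (t + 1) = y t + 1 ∨ y (t + 1) = y t - 1))

lemma sum_excLen_ge (L : ℕ) (π : Fin (L + 1) → ℤ × ℤ) (j : ℕ) :
    excEnd L π j ≤ ∑ i ∈ Finset.Icc 1 j, excLen L π i := by
  induction j with
  | zero => simp [excEnd, excTime]
  | succ j ih =>
    rw [Finset.sum_Icc_succ_top (by omega)]
    simp only [excLen, Nat.add_sub_cancel]
    simp only [excLen] at ih
    omega

lemma structure_bad {L : ℕ} {π : Fin (L + 1) → ℤ × ℤ} (h : π ∈ prudentSet L) :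
    ∃ a ≤ L, a ≤ ∑ i ∈ Finset.Icc 1 (numExc L π), excLen L π i ∧
      Extr (fun t => (pp L π t).1) a ∧ Extr (fun t => (pp L π t).2) a ∧
      (FinalSeg (fun t => (pp L π t).1) (fun t => (pp L π t).2) L a ∨
        FinalSeg (fun t => (pp L π t).2) (fun t => (pp L π t).1) L a) := by
  have hinv := excTime_inv h
  have hP := pathOK_of_prudent h
  have hH := height_lt_iff L π
  have hW := width_lt_iff L π
  have hbdd : BddAbove {i : ℕ | (excTime L π i).isSome} := by
    refine ⟨L + 1, ?_⟩
    intro i hi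
    obtain ⟨a, ha⟩ := Option.isSome_iff_exists.mp hi
    have I := hinv i a ha
    have := I.le
    have := I.aL
    omega
  have hmem : (excTime L π (lastIdx L π)).isSome :=
    Nat.sSup_mem (s := {i : ℕ | (excTime L π i).isSome}) ⟨0, by simp [excTime]⟩ hbdd
  obtain ⟨a, ha⟩ := Option.isSome_iff_exists.mp hmem
  have hnone : nextTime L (if Even (lastIdx L π) then heightAt L π else widthAt L π) a = none := by
    by_contra hne
    obtain ⟨b, hb⟩ := Option.ne_none_iff_exists'.mp hne
    have : (excTime L π (lastIdx L π + 1)).isSome := by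
      simp only [excTime, ha, Option.bind_some, hb]; rfl
    have h2 := le_csSup hbdd (show lastIdx L π + 1 ∈ {i : ℕ | (excTime L π i).isSome} from this)
    change lastIdx L π + 1 ≤ lastIdx L π at h2
    omega
  have I := hinv _ a ha
  have h4 := nextTime_none hnone
  refine ⟨a, I.aL, ?_, I.ex, I.ey, ?_⟩
  · have h1 := sum_excLen_ge L π (lastIdx L π)
    have h2 : excEnd L π (lastIdx L π) = a := by simp [excEnd, ha]
    rw [h2] at h1
    refine h1.trans (Finset.sum_le_sum_of_subset ?_)
    refine Finset.Icc_subset_Icc le_rfl ?_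
    unfold numExc; omega
  set x := fun t => (pp L π t).1
  set y := fun t => (pp L π t).2
  rcases I.aL.eq_or_lt with haL | haL
  · left; exact ⟨1, Or.inl rfl, by omega⟩
  by_cases hi : Even (lastIdx L π)
  · simp only [hi, if_true] at h4
    have h4' : ∀ t, a ≤ t → t < L → ¬ newv y t := fun t ht htb hn =>
        h4 t ht htb ((hH t (by omega)).mpr hn)
    have hnx : newv x a := by
      rcases Nat.eq_zero_or_pos (lastIdx L π) with h0 | hpos
      · have ha0 := I.z h0
        subst ha0
        have hst := hP.step 0 (by omega)
        have hny := h4' 0 le_rfl haL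
        intro j hj
        rw [Nat.le_zero.mp hj]
        intro heq
        apply hny
        intro j hj
        rw [Nat.le_zero.mp hj]
        omega
      · have := (I.nw hpos).2
        simpa [hi] using this
    obtain ⟨s, hs, h1, _⟩ := excursion hP haL le_rfl hnx h4'
    exact Or.inl ⟨s, hs, h1⟩
  · have hpos : 1 ≤ lastIdx L π := by
      rcases Nat.eq_zero_or_pos (lastIdx L π) with h0 | hpos
      · rw [h0] at hi; simp at hi
      · exact hpos
    simp only [hi, if_false] at h4
    have h4' : ∀ t, a ≤ t → t < L → ¬ newv x t := fun t ht htb hn =>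
        h4 t ht htb ((hW t (by omega)).mpr hn)
    have hn := (I.nw hpos).2
    simp only [hi, if_false] at hn
    obtain ⟨s, hs, h1, _⟩ := excursion hP.swap haL le_rfl hn h4'
    exact Or.inr ⟨s, hs, h1⟩

/-! ### Part 4: counting -/

/-- The word (head = latest step) of the first `n` steps of a path. -/
def wd (p : ℕ → ℤ × ℤ) : ℕ → List (ℤ × ℤ)
  | 0 => []
  | n + 1 => (p (n + 1) - p n) :: wd p n

lemma wd_length (p : ℕ → ℤ × ℤ) (n : ℕ) : (wd p n).length = n := by
  induction n with
  | zero => rfl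
  | succ n ih => simp [wd, ih]

lemma wd_sum (p : ℕ → ℤ × ℤ) (n : ℕ) : (wd p n).sum = p n - p 0 := by
  induction n with
  | zero => simp [wd]
  | succ n ih => simp [wd, ih]

lemma wd_suffix (p : ℕ → ℤ × ℤ) (n : ℕ) (t : List (ℤ × ℤ)) (ht : t <:+ wd p n) :
    ∃ j ≤ n, t = wd p j := by
  induction n with
  | zero => exact ⟨0, le_rfl, by simpa [wd] using ht⟩
  | succ n ih =>
    rw [wd, List.suffix_cons_iff] at ht
    rcases ht with rfl | ht
    · exact ⟨n + 1, le_rfl, rfl⟩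
    · obtain ⟨j, hj, rfl⟩ := ih ht
      exact ⟨j, by omega, rfl⟩

lemma pp_zero {L : ℕ} {π : Fin (L + 1) → ℤ × ℤ} (h : π ∈ prudentSet L) : pp L π 0 = 0 := by
  have := h.1
  have h2 := pp_fin L π 0
  simp only [Fin.val_zero] at h2
  rw [h2, this]; rfl

lemma wd_pr {L : ℕ} {π : Fin (L + 1) → ℤ × ℤ} (h : π ∈ prudentSet L) (n : ℕ) (hn : n ≤ L) :
    Pr (wd (pp L π) n) := by
  have hP := pathOK_of_prudent h
  have h0 := pp_zero h
  induction n with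
  | zero => trivial
  | succ n ih =>
    refine ⟨ih (by omega), ?_, ?_⟩
    · have := hP.step n (by omega)
      simp only [IsStep, Prod.ext_iff, Prod.fst_sub, Prod.snd_sub]
      omega
    · intro k hk t ht heq
      obtain ⟨j, hj, rfl⟩ := wd_suffix _ _ _ ht
      rw [wd_sum, wd_sum, h0] at heq
      apply hP.pru n (by omega) k hk j hj
      have h1 := congrArg Prod.fst heq
      have h2 := congrArg Prod.snd heq
      simp at h1 h2
      exact ⟨h1, h2⟩

lemma wd_inj (p p' : ℕ → ℤ × ℤ) (h0 : p 0 = p' 0) (n : ℕ) (h : wd p n = wd p' n) :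
    ∀ i ≤ n, p i = p' i := by
  induction n with
  | zero => intro i hi; rw [Nat.le_zero.mp hi, h0]
  | succ n ih =>
    rw [wd, wd, List.cons.injEq] at h
    have ih' := ih h.2
    intro i hi
    by_cases hin : i ≤ n
    · exact ih' i hin
    · have : i = n + 1 := by omega
      subst this
      have h1 := h.1
      rw [ih' n le_rfl] at h1
      exact sub_left_inj.mp h1

lemma wd_injOn (L : ℕ) : Set.InjOn (fun π => wd (pp L π) L) (prudentSet L) := by
  intro π h π' h' heq
  have := wd_inj (pp L π) (pp L π') (by rw [pp_zero h, pp_zero h']) L heq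
  funext i
  rw [← pp_fin L π i, ← pp_fin L π' i]
  exact this i (by omega)

/-- Prudent words of length `L`. -/
def PrW (L : ℕ) : Set (List (ℤ × ℤ)) := {l | l.length = L ∧ Pr l}

lemma PrW_finite (L : ℕ) : (PrW L).Finite :=
  (stepWords_finite L).subset fun _ h => ⟨h.1, h.2.steps⟩

lemma prudentSet_finite (L : ℕ) : (prudentSet L).Finite :=
  Set.Finite.of_injOn (f := fun π => wd (pp L π) L) (t := PrW L)
    (fun _ h => ⟨wd_length _ _, wd_pr h L le_rfl⟩) (wd_injOn L) (PrW_finite L)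

lemma Pr.suffix : ∀ {l : List (ℤ × ℤ)}, Pr l → ∀ t, t <:+ l → Pr t
  | [], _, t, ht => by rw [List.suffix_nil.mp ht]; trivial
  | a :: l, h, t, ht => by
    rw [List.suffix_cons_iff] at ht
    rcases ht with rfl | ht
    · exact h
    · exact Pr.suffix h.1 t ht

/-- The path of a word. -/
def toPath (L : ℕ) (l : List (ℤ × ℤ)) (i : Fin (L + 1)) : ℤ × ℤ := (l.drop (L - i)).sum

lemma toPath_mem (L : ℕ) (l : List (ℤ × ℤ)) (h : l ∈ PrW L) : toPath L l ∈ prudentSet L := by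
  obtain ⟨hlen, hpr⟩ := h
  refine ⟨?_, ?_⟩
  · simp [toPath, ← hlen]; rfl
  · intro i
    have hi := i.2
    have hlt : L - (i + 1) < l.length := by omega
    have hd : l.drop (L - (i + 1)) = l[L - (i + 1)] :: l.drop (L - i) := by
      rw [List.drop_eq_getElem_cons hlt]
      congr 2; omega
    have hp := hpr.suffix _ (List.drop_suffix (L - (i + 1)) l)
    rw [hd] at hp
    obtain ⟨_, hs, hp⟩ := hp
    have e1 : toPath L l i.castSucc = (l.drop (L - i)).sum := by simp [toPath]
    have e2 : toPath L l i.succ = l[L - (i + 1)] + (l.drop (L - i)).sum := by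
      simp only [toPath, Fin.val_succ]
      rw [hd, List.sum_cons]
    rw [e1, e2, add_sub_cancel_right]
    refine ⟨hs, ?_⟩
    intro k hk j hj
    refine hp k hk _ ?_
    have hj' : (j : ℕ) ≤ i := by simpa [Fin.le_def] using hj
    have : l.drop (L - j) = (l.drop (L - i)).drop (i - j) := by
      rw [List.drop_drop]; congr 1; omega
    rw [this]
    exact List.drop_suffix _ _

lemma eq_of_drop_sum : ∀ (l l' : List (ℤ × ℤ)), l.length = l'.length →
    (∀ n ≤ l.length, (l.drop n).sum = (l'.drop n).sum) → l = l'
  | [], [], _, _ => rfl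
  | [], _ :: _, h, _ => by simp at h
  | _ :: _, [], h, _ => by simp at h
  | a :: l, b :: l', h, hs => by
    have h1 : l = l' := by
      refine eq_of_drop_sum l l' (by simpa using h) fun n hn => ?_
      have := hs (n + 1) (by simpa using hn)
      simpa using this
    subst h1
    have := hs 0 (by simp)
    simp at this
    rw [this]

lemma toPath_injOn (L : ℕ) : Set.InjOn (toPath L) (PrW L) := by
  intro l h l' h' heq
  refine eq_of_drop_sum l l' (h.1.trans h'.1.symm) fun n hn => ?_
  have hn' : n ≤ L := by rw [← h.1]; exact hn
  have := congrFun heq ⟨L - n, by omega⟩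
  simp only [toPath] at this
  rwa [show L - (L - n) = n by omega] at this

lemma PrW_card_le (L : ℕ) : (PrW L).ncard ≤ (prudentSet L).ncard :=
  Set.ncard_le_ncard_of_injOn (toPath L) (fun l h => toPath_mem L l h) (toPath_injOn L)
    (prudentSet_finite L)

/-- Reflections. -/
def rfl2 (a b : ℤ) (v : ℤ × ℤ) : ℤ × ℤ := (a * v.1, b * v.2)

lemma rfl2_invol {a b : ℤ} (ha : a = 1 ∨ a = -1) (hb : b = 1 ∨ b = -1) (v : ℤ × ℤ) :
    rfl2 a b (rfl2 a b v) = v := by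
  unfold rfl2
  rcases ha with rfl | rfl <;> rcases hb with rfl | rfl <;> simp

lemma rfl2_map_invol {a b : ℤ} (ha : a = 1 ∨ a = -1) (hb : b = 1 ∨ b = -1)
    (l : List (ℤ × ℤ)) : (l.map (rfl2 a b)).map (rfl2 a b) = l := by
  rw [List.map_map]
  have : rfl2 a b ∘ rfl2 a b = id := by funext v; exact rfl2_invol ha hb v
  rw [this, List.map_id]

lemma rfl2_sum (a b : ℤ) (l : List (ℤ × ℤ)) : (l.map (rfl2 a b)).sum = rfl2 a b l.sum := by
  induction l with
  | nil => simp [rfl2]; rfl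
  | cons v l ih => rw [List.map_cons, List.sum_cons, ih, List.sum_cons]; simp [rfl2]; constructor <;> ring

lemma suffix_map_exists {α β : Type*} (f : α → β) (l : List α) (t : List β) (ht : t <:+ l.map f) :
    ∃ t', t' <:+ l ∧ t = t'.map f := by
  rw [List.suffix_iff_eq_drop] at ht
  refine ⟨l.drop ((l.map f).length - t.length), List.drop_suffix _ _, ?_⟩
  rw [List.map_drop]; exact ht

lemma Pr.reflect {a b : ℤ} (ha : a = 1 ∨ a = -1) (hb : b = 1 ∨ b = -1) :
    ∀ {l : List (ℤ × ℤ)}, Pr l → Pr (l.map (rfl2 a b))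
  | [], _ => trivial
  | d :: l, h => by
    refine ⟨Pr.reflect ha hb h.1, ?_, ?_⟩
    · have := h.2.1
      unfold IsStep at this
      unfold IsStep rfl2
      rcases ha with rfl | rfl <;> rcases hb with rfl | rfl <;>
        rcases this with rfl | rfl | rfl | rfl <;> simp
    · intro k hk t ht heq
      obtain ⟨t', ht', rfl⟩ := suffix_map_exists _ _ _ ht
      apply h.2.2 k hk t' ht'
      rw [rfl2_sum, rfl2_sum] at heq
      have h1 := congrArg (rfl2 a b) heq
      rw [rfl2_invol ha hb] at h1
      rw [← h1]
      ext
      · simp only [rfl2, Prod.fst_add, Prod.smul_fst, smul_eq_mul]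
        rcases ha with rfl | rfl <;> ring
      · simp only [rfl2, Prod.snd_add, Prod.smul_snd, smul_eq_mul]
        rcases hb with rfl | rfl <;> ring

/-- The word ends at a corner of its range. -/
def Corner (l : List (ℤ × ℤ)) : Prop :=
  ∃ s : ℤ × ℤ, (s.1 = 1 ∨ s.1 = -1) ∧ (s.2 = 1 ∨ s.2 = -1) ∧ NE (l.map (rfl2 s.1 s.2))

/-- Prudent words that end at a corner. -/
def Bset (n : ℕ) : Set (List (ℤ × ℤ)) := {l | l.length = n ∧ Pr l ∧ Corner l}

lemma Bset_finite (n : ℕ) : (Bset n).Finite :=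
  (stepWords_finite n).subset fun _ h => ⟨h.1, h.2.1.steps⟩

/-- The same as a finset. -/
noncomputable def Bfin (n : ℕ) : Finset (List (ℤ × ℤ)) := (Bset_finite n).toFinset

lemma mem_Bfin (n : ℕ) (l : List (ℤ × ℤ)) : l ∈ Bfin n ↔ l.length = n ∧ Pr l ∧ Corner l := by
  unfold Bfin; rw [Set.Finite.mem_toFinset]; rfl

lemma B_mul_G_le (s n : ℕ) : (Bfin s).card * (Gfin n).card ≤ (prudentSet (s + n)).ncard := by
  refine le_trans ?_ (PrW_card_le (s + n))
  rw [← Finset.card_product, ← Set.ncard_coe_finset]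
  have hex : ∀ l : List (ℤ × ℤ), ∃ v : ℤ × ℤ, Corner l →
      (v.1 = 1 ∨ v.1 = -1) ∧ (v.2 = 1 ∨ v.2 = -1) ∧ NE (l.map (rfl2 v.1 v.2)) := by
    intro l
    by_cases h : Corner l
    · obtain ⟨v, hv⟩ := h
      exact ⟨v, fun _ => hv⟩
    · exact ⟨0, fun h' => absurd h' h⟩
  choose sg hsg using hex
  refine Set.ncard_le_ncard_of_injOn
    (fun q => q.2.map (rfl2 (sg q.1).1 (sg q.1).2) ++ q.1) ?_ ?_ (PrW_finite _)
  · rintro ⟨b, w⟩ hq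
    rw [Finset.mem_coe, Finset.mem_product, mem_Bfin, mem_Gfin] at hq
    obtain ⟨⟨h1, h2, h3⟩, h4, h5⟩ := hq
    simp only at h1 h2 h3 h4 h5
    obtain ⟨ha, hb, hne⟩ := hsg b h3
    refine ⟨by simp [h1, h4]; omega, ?_⟩
    have := (h5 _ (h2.reflect ha hb) hne).reflect ha hb
    rwa [List.map_append, rfl2_map_invol ha hb] at this
  · rintro ⟨b, w⟩ hq ⟨b', w'⟩ hq' heq
    rw [Finset.mem_coe, Finset.mem_product, mem_Bfin, mem_Gfin] at hq hq'
    obtain ⟨⟨h1, h2, h3⟩, h4, h5⟩ := hq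
    obtain ⟨⟨h1', h2', h3'⟩, h4', h5'⟩ := hq'
    simp only at h1 h2 h3 h4 h1' h4' heq
    obtain ⟨e1, e2⟩ := List.append_inj heq (by simp [h4, h4'])
    subst e2
    obtain ⟨ha, hb, _⟩ := hsg b h3
    have := congrArg (List.map (rfl2 (sg b).1 (sg b).2)) e1
    rw [rfl2_map_invol ha hb, rfl2_map_invol ha hb] at this
    rw [this]

/-- Horizontal embedding of letters. -/
def embH (s y : ℤ) : ℤ × ℤ := if y = 0 then (s, 0) else (0, y)

/-- Vertical embedding of letters. -/
def embV (s y : ℤ) : ℤ × ℤ := if y = 0 then (0, s) else (y, 0)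

/-- Possible words of the final segment. -/
def Afin (n : ℕ) : Finset (List (ℤ × ℤ)) :=
  ((Sset n 0).image (List.map (embH 1)) ∪ (Sset n 0).image (List.map (embH (-1)))) ∪
  ((Sset n 0).image (List.map (embV 1)) ∪ (Sset n 0).image (List.map (embV (-1))))

lemma Afin_card (n : ℕ) : (Afin n).card ≤ 4 * (Sset n 0).card := by
  unfold Afin
  have h : ∀ f : List ℤ → List (ℤ × ℤ), ((Sset n 0).image f).card ≤ (Sset n 0).card :=
    fun f => Finset.card_image_le
  have h1 := h (List.map (embH 1))
  have h2 := h (List.map (embH (-1)))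
  have h3 := h (List.map (embV 1))
  have h4 := h (List.map (embV (-1)))
  refine (Finset.card_union_le _ _).trans ?_
  have h5 := Finset.card_union_le ((Sset n 0).image (List.map (embH 1)))
    ((Sset n 0).image (List.map (embH (-1))))
  have h6 := Finset.card_union_le ((Sset n 0).image (List.map (embV 1)))
    ((Sset n 0).image (List.map (embV (-1))))
  omega

/-- Increments of a coordinate, latest first. -/
def ydiff (y : ℕ → ℤ) (a : ℕ) : ℕ → List ℤ
  | 0 => []
  | m + 1 => (y (a + m + 1) - y (a + m)) :: ydiff y a m

lemma ydiff_mem {x y : ℕ → ℤ} {L : ℕ} (h : PathOK x y L) (a m : ℕ) (hm : a + m ≤ L) :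
    ydiff y a m ∈ Sset m 0 := by
  rw [mem_Sset_zero]
  induction m with
  | zero => simp [ydiff]
  | succ m ih =>
    obtain ⟨h1, h2, h3⟩ := ih (by omega)
    refine ⟨by simp [ydiff, h1], ?_, ?_⟩
    · intro e he
      rw [ydiff, List.mem_cons] at he
      rcases he with rfl | he
      · rw [mem_pdLetters]
        have := h.step (a + m) (by omega)
        omega
      · exact h2 e he
    · cases m with
      | zero => simp [ydiff]
      | succ m =>
        rw [ydiff, ydiff, List.isChain_cons_cons]
        refine ⟨?_, h3⟩
        intro hmul
        have s1 := h.step (a + m) (by omega)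
        have s2 := h.step (a + m + 1) (by omega)
        have hp := h.pru (a + m + 1) (by omega) 1 le_rfl (a + m) (by omega)
        rw [show a + (m + 1) + 1 = a + m + 1 + 1 by ring, show a + (m + 1) = a + m + 1 by ring] at hmul
        apply hp
        push_cast
        rcases s1 with ⟨_, e⟩ | ⟨e1, e2⟩
        · rw [e] at hmul; simp at hmul
        · rcases s2 with ⟨_, e⟩ | ⟨f1, f2⟩
          · rw [e] at hmul; simp at hmul
          · rcases e1 with e1 | e1 <;> rcases f1 with f1 | f1 <;> rw [f1, e1] at hmul <;>
              first
              | (ring_nf at hmul; omega)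
              | omega

lemma wd_finalH (p : ℕ → ℤ × ℤ) (L a : ℕ) (s : ℤ)
    (h : ∀ t, a ≤ t → t < L → ((p (t + 1)).1 = (p t).1 + s ∧ (p (t + 1)).2 = (p t).2) ∨
        ((p (t + 1)).1 = (p t).1 ∧ ((p (t + 1)).2 = (p t).2 + 1 ∨ (p (t + 1)).2 = (p t).2 - 1)))
    (m : ℕ) (hm : a + m ≤ L) :
    wd p (a + m) = (ydiff (fun t => (p t).2) a m).map (embH s) ++ wd p a := by
  induction m with
  | zero => simp [ydiff]
  | succ m ih =>
    rw [ydiff, List.map_cons, List.cons_append, ← ih (by omega), ← add_assoc, wd]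
    congr 1
    unfold embH
    rcases h (a + m) (by omega) (by omega) with ⟨h1, h2⟩ | ⟨h1, h2⟩
    · rw [if_pos (by omega)]
      ext <;> simp <;> omega
    · rw [if_neg (by omega)]
      ext <;> simp; omega

lemma wd_finalV (p : ℕ → ℤ × ℤ) (L a : ℕ) (s : ℤ)
    (h : ∀ t, a ≤ t → t < L → ((p (t + 1)).2 = (p t).2 + s ∧ (p (t + 1)).1 = (p t).1) ∨
        ((p (t + 1)).2 = (p t).2 ∧ ((p (t + 1)).1 = (p t).1 + 1 ∨ (p (t + 1)).1 = (p t).1 - 1)))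
    (m : ℕ) (hm : a + m ≤ L) :
    wd p (a + m) = (ydiff (fun t => (p t).1) a m).map (embV s) ++ wd p a := by
  induction m with
  | zero => simp [ydiff]
  | succ m ih =>
    rw [ydiff, List.map_cons, List.cons_append, ← ih (by omega), ← add_assoc, wd]
    congr 1
    unfold embV
    rcases h (a + m) (by omega) (by omega) with ⟨h1, h2⟩ | ⟨h1, h2⟩
    · rw [if_pos (by omega)]
      ext <;> simp <;> omega
    · rw [if_neg (by omega)]
      ext <;> simp; omega

lemma extr_sign {x : ℕ → ℤ} {a : ℕ} (h : Extr x a) :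
    ∃ s : ℤ, (s = 1 ∨ s = -1) ∧ ∀ i ≤ a, s * x i ≤ s * x a := by
  rcases h with h | h
  · exact ⟨1, Or.inl rfl, fun i hi => by have := h i hi; omega⟩
  · exact ⟨-1, Or.inr rfl, fun i hi => by have := h i hi; omega⟩

lemma bad_word {L : ℕ} {π : Fin (L + 1) → ℤ × ℤ} (h : π ∈ prudentSet L) :
    ∃ n ≤ L, (L : ℝ) - ((∑ i ∈ Finset.Icc 1 (numExc L π), excLen L π i : ℕ) : ℝ) ≤ n ∧
      ∃ w ∈ Afin n, ∃ b ∈ Bfin (L - n), wd (pp L π) L = w ++ b := by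
  obtain ⟨a, haL, hsum, hx, hy, hfin⟩ := structure_bad h
  have hP := pathOK_of_prudent h
  refine ⟨L - a, by omega, ?_, ?_⟩
  · rw [Nat.cast_sub haL]
    have : (a : ℝ) ≤ ((∑ i ∈ Finset.Icc 1 (numExc L π), excLen L π i : ℕ) : ℝ) := by
      exact_mod_cast hsum
    linarith
  have hB : wd (pp L π) a ∈ Bfin (L - (L - a)) := by
    rw [mem_Bfin, wd_length]
    refine ⟨by omega, wd_pr h a haL, ?_⟩
    obtain ⟨s, hs, hs'⟩ := extr_sign hx
    obtain ⟨r, hr, hr'⟩ := extr_sign hy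
    refine ⟨(s, r), hs, hr, ?_⟩
    intro t ht
    obtain ⟨t', ht', rfl⟩ := suffix_map_exists _ _ _ ht
    obtain ⟨j, hj, rfl⟩ := wd_suffix _ _ _ ht'
    rw [rfl2_sum, rfl2_sum, wd_sum, wd_sum, pp_zero h]
    simp only [rfl2, sub_zero]
    exact ⟨hs' j hj, hr' j hj⟩
  rcases hfin with ⟨s, hs, hf⟩ | ⟨s, hs, hf⟩
  · have := wd_finalH (pp L π) L a s hf (L - a) (by omega)
    rw [show a + (L - a) = L by omega] at this
    refine ⟨_, ?_, _, hB, this⟩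
    have hm := ydiff_mem hP a (L - a) (by omega)
    unfold Afin
    simp only [Finset.mem_union, Finset.mem_image]
    left
    rcases hs with rfl | rfl
    · exact Or.inl ⟨_, hm, rfl⟩
    · exact Or.inr ⟨_, hm, rfl⟩
  · have := wd_finalV (pp L π) L a s hf (L - a) (by omega)
    rw [show a + (L - a) = L by omega] at this
    refine ⟨_, ?_, _, hB, this⟩
    have hm := ydiff_mem hP.swap a (L - a) (by omega)
    unfold Afin
    simp only [Finset.mem_union, Finset.mem_image]
    right
    rcases hs with rfl | rfl
    · exact Or.inl ⟨_, hm, rfl⟩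
    · exact Or.inr ⟨_, hm, rfl⟩

lemma bad_card (L N : ℕ) (A : Set (Fin (L + 1) → ℤ × ℤ))
    (hA : ∀ π ∈ A, ∀ n : ℕ, (L : ℝ) -
      ((∑ i ∈ Finset.Icc 1 (numExc L π), excLen L π i : ℕ) : ℝ) ≤ n → N ≤ n) :
    (A ∩ prudentSet L).ncard ≤
      ∑ n ∈ Finset.Ico N (L + 1), (Afin n).card * (Bfin (L - n)).card := by
  classical
  have h1 : (A ∩ prudentSet L).ncard ≤ ((Finset.Ico N (L + 1)).biUnion fun n =>
      (Afin n ×ˢ Bfin (L - n)).image fun q => q.1 ++ q.2).card := by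
    rw [← Set.ncard_coe_finset]
    refine Set.ncard_le_ncard_of_injOn (fun π => wd (pp L π) L) ?_ ?_ (Finset.finite_toSet _)
    · rintro π ⟨hπ, h⟩
      obtain ⟨n, hn, hle, w, hw, b, hb, heq⟩ := bad_word h
      have hN := hA π hπ n hle
      simp only [Finset.mem_coe, Finset.mem_biUnion, Finset.mem_image, Finset.mem_Ico,
        Finset.mem_product]
      exact ⟨n, ⟨hN, by omega⟩, (w, b), ⟨hw, hb⟩, heq.symm⟩
    · exact (wd_injOn L).mono Set.inter_subset_right
  refine h1.trans (Finset.card_biUnion_le.trans (Finset.sum_le_sum fun n _ => ?_))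
  exact Finset.card_image_le.trans (by rw [Finset.card_product])

lemma prob_bound : ∃ C q : ℝ, 0 < C ∧ 0 < q ∧ q < 1 ∧
    ∀ (L N : ℕ) (A : Set (Fin (L + 1) → ℤ × ℤ)),
    (∀ π ∈ A, ∀ n : ℕ, (L : ℝ) -
      ((∑ i ∈ Finset.Icc 1 (numExc L π), excLen L π i : ℕ) : ℝ) ≤ n → N ≤ n) →
    probUnif L A ≤ C * q ^ N := by
  obtain ⟨c, lam, hc, hlam, hG⟩ := growth
  have hlam0 : 0 < lam := by linarith
  have hmu := mu_pos
  have hq1 : lam⁻¹ < 1 := inv_lt_one_of_one_lt₀ hlam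
  refine ⟨(4 * Real.sqrt 2 / c) * (1 - lam⁻¹)⁻¹, lam⁻¹, ?_, by positivity, hq1, ?_⟩
  · have : 0 < 1 - lam⁻¹ := by linarith
    positivity
  intro L N A hA
  unfold probUnif
  rw [Nat.card_coe_set_eq, Nat.card_coe_set_eq]
  set X : ℝ := ((prudentSet L).ncard : ℝ) with hX
  have hX0 : 0 ≤ X := by positivity
  have hb : ((A ∩ prudentSet L).ncard : ℝ) ≤
      ∑ n ∈ Finset.Ico N (L + 1), ((Afin n).card : ℝ) * ((Bfin (L - n)).card : ℝ) := by
    exact_mod_cast bad_card L N A hA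
  have hterm : ∀ n ∈ Finset.Ico N (L + 1), ((Afin n).card : ℝ) * ((Bfin (L - n)).card : ℝ) ≤
      (X * (4 * Real.sqrt 2 / c)) * lam⁻¹ ^ n := by
    intro n hn
    rw [Finset.mem_Ico] at hn
    have h1 : ((Afin n).card : ℝ) ≤ 4 * (Real.sqrt 2 * mu ^ n) := by
      have e1 : ((Afin n).card : ℝ) ≤ 4 * ((Sset n 0).card : ℝ) := by exact_mod_cast Afin_card n
      have e2 := (card_Sset_bounds n).1.2
      linarith
    have h2 : ((Bfin (L - n)).card : ℝ) * ((Gfin n).card : ℝ) ≤ X := by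
      have := B_mul_G_le (L - n) n
      rw [show L - n + n = L by omega] at this
      rw [hX]; exact_mod_cast this
    have h3 := hG n
    have h4 : ((Bfin (L - n)).card : ℝ) * (c * (mu * lam) ^ n) ≤ X :=
      le_trans (by gcongr) h2
    have h5 : ((Bfin (L - n)).card : ℝ) ≤ X / (c * (mu * lam) ^ n) := by
      rw [le_div_iff₀ (by positivity)]; exact h4
    calc ((Afin n).card : ℝ) * ((Bfin (L - n)).card : ℝ)
        ≤ (4 * (Real.sqrt 2 * mu ^ n)) * (X / (c * (mu * lam) ^ n)) := by gcongr
      _ = (X * (4 * Real.sqrt 2 / c)) * lam⁻¹ ^ n := by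
        rw [mul_pow, inv_pow]; field_simp
  have hsum := hb.trans (Finset.sum_le_sum hterm)
  rw [← Finset.mul_sum] at hsum
  have hgeom : ∑ n ∈ Finset.Ico N (L + 1), lam⁻¹ ^ n ≤ lam⁻¹ ^ N / (1 - lam⁻¹) :=
    geom_sum_Ico_le_of_lt_one (by positivity) hq1
  have hC0 : 0 ≤ 4 * Real.sqrt 2 / c := by positivity
  have hfin : ((A ∩ prudentSet L).ncard : ℝ) ≤
      (4 * Real.sqrt 2 / c * (1 - lam⁻¹)⁻¹ * lam⁻¹ ^ N) * X := by
    refine hsum.trans ?_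
    calc X * (4 * Real.sqrt 2 / c) * ∑ n ∈ Finset.Ico N (L + 1), lam⁻¹ ^ n
        ≤ X * (4 * Real.sqrt 2 / c) * (lam⁻¹ ^ N / (1 - lam⁻¹)) := by gcongr
      _ = _ := by rw [div_eq_mul_inv (lam⁻¹ ^ N)]; ring
  have hnn : 0 ≤ 4 * Real.sqrt 2 / c * (1 - lam⁻¹)⁻¹ * lam⁻¹ ^ N := by
    have : 0 < 1 - lam⁻¹ := by linarith
    positivity
  exact div_le_of_le_mul₀ hX0 hnn hfin

/-- **The final incomplete excursion is short:** there is `α > 0` such that with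
`P_{unif,L}`-probability tending to `1`, the length `L − (T_1 + ⋯ + T_{γ_L})` of the final
incomplete excursion is less than `α log L`. -/
theorem last_incomplete_excursion_short :
    ∃ α : ℝ, 0 < α ∧
      Tendsto (fun L : ℕ =>
          probUnif L {π |
            α * Real.log L ≤
              (L : ℝ) - ((∑ i ∈ Finset.Icc 1 (numExc L π), excLen L π i : ℕ) : ℝ)})
        atTop (nhds 0) := by
  obtain ⟨C, q, hC, hq0, hq1, hb⟩ := prob_bound
  refine ⟨1, one_pos, ?_⟩
  have hlim : Tendsto (fun L : ℕ => C * q ^ ⌈Real.log L⌉₊) atTop (nhds 0) := by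
    have h1 : Tendsto (fun L : ℕ => ⌈Real.log (L : ℝ)⌉₊) atTop atTop :=
      tendsto_nat_ceil_atTop.comp (Real.tendsto_log_atTop.comp tendsto_natCast_atTop_atTop)
    have h2 := (tendsto_pow_atTop_nhds_zero_of_lt_one hq0.le hq1).comp h1
    simpa using h2.const_mul C
  refine squeeze_zero (fun L => ?_) (fun L => ?_) hlim
  · unfold probUnif; positivity
  · refine hb L _ _ ?_
    intro π hπ n hn
    rw [Set.mem_setOf_eq, one_mul] at hπ
    exact Nat.ceil_le.mpr (hπ.trans hn)
end
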